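/- arXiv:alg-geom/9506002 — 3 statements merged into one kernel-verified Lean document; each statement's English description precedes it below -/
import Mathlib

section
/- Let f : ℝ² → ℝ be a nonconstant real polynomial function of degree d ≥ 1 in two variables with only finitely many critical points. Then for every admissible radius R, the index i of grad f around the circle of radius R satisfies i ≤ max{1, d − 3}. -/
open MvPolynomial Filter

/-- Evaluation of a polynomial in two variables at the point `(x, y)`. -/
noncomputable def evalP (f : MvPolynomial (Fin 2) ℝ) (x y : ℝ) : ℝ :=
  MvPolynomial.eval ![x, y] f

/-- `p` is a critical point of `f`: both partial derivatives vanish at `p`. -/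
def IsCriticalPt (f : MvPolynomial (Fin 2) ℝ) (p : ℝ × ℝ) : Prop :=
  evalP (pderiv 0 f) p.1 p.2 = 0 ∧ evalP (pderiv 1 f) p.1 p.2 = 0

/-- `u(t) = f_x(R cos t, R sin t)`. -/
noncomputable def uFun (f : MvPolynomial (Fin 2) ℝ) (R t : ℝ) : ℝ :=
  evalP (pderiv 0 f) (R * Real.cos t) (R * Real.sin t)

/-- `v(t) = f_y(R cos t, R sin t)`. -/
noncomputable def vFun (f : MvPolynomial (Fin 2) ℝ) (R t : ℝ) : ℝ :=
  evalP (pderiv 1 f) (R * Real.cos t) (R * Real.sin t)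

/-- The index of `grad f` around the circle of radius `R`, as the winding-number
integral `(1/(2π)) ∫₀^{2π} (u v' - v u')/(u² + v²) dt`. -/
noncomputable def gradIndex (f : MvPolynomial (Fin 2) ℝ) (R : ℝ) : ℝ :=
  (1 / (2 * Real.pi)) *
    ∫ t in (0:ℝ)..(2 * Real.pi),
      (uFun f R t * deriv (vFun f R) t - vFun f R t * deriv (uFun f R) t) /
        ((uFun f R t) ^ 2 + (vFun f R t) ^ 2)

/-!
Choose a continuous logarithm of `f_x + i f_y` outside the disk of radius `R`, and rotate the
coordinate frame by `2π`, starting from a direction in which the leading form of `f` does not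
vanish. A half-turn of the frame exchanges the two ends of a vertical line, so `2i` is the number of
half-turns made by the gradient along two vertical lines `x = const`, one in the half-plane `x ≥ R`
of each of two opposite frames. On such a line `f_y` is a polynomial in `y` of degree `d - 1`, so
the number of half-turns is at most `d - 1` and has the parity of `d - 1`. Hence it suffices to
exclude, for `d ≥ 3`, the extremal case of `d - 1` half-turns.

In that case `f_y` has only real roots on every line in the half-plane, and Newton's inequality
gives `q ≤ 0` for a quadratic expression `q` in the top coefficients of `f`. Moreover `f_x`
alternates in sign at these roots, which Lagrange interpolation turns into `q' > 0`. But `q` is a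
polynomial in `x`, so `q → ∞`, a contradiction.
-/

section RealRoots

open scoped Polynomial

variable {K : Type*} [Field K] [LinearOrder K] [IsStrictOrderedRing K]

theorem neg_one_pow_mul_prod_erase_sub_pos {n : ℕ} {z : Fin (n + 1) → K} (hz : StrictMono z)
    (j : Fin (n + 1)) : 0 < (-1) ^ (n + j : ℕ) * ∏ k ∈ Finset.univ.erase j, (z j - z k) := by
  have sign_eq : (-1 : K) ^ (n + j : ℕ) =
      ∏ k ∈ Finset.univ.erase j, if j < k then (-1 : K) else 1 := by
    have filter_eq : {k ∈ Finset.univ.erase j | j < k} = Finset.Ioi j := by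
      ext k
      simpa using fun h : j < k => h.ne'
    rw [Finset.prod_ite, Finset.prod_const, Finset.prod_const_one, mul_one, filter_eq,
      Fin.card_Ioi]
    exact neg_one_pow_congr (by grind)
  rw [sign_eq, ← Finset.prod_mul_distrib]
  refine Finset.prod_pos fun k hk => ?_
  split_ifs with hjk
  · linarith [hz hjk]
  · linarith [hz (lt_of_le_of_ne (not_lt.mp hjk) (Finset.ne_of_mem_erase hk))]

theorem coeff_pos_of_alternating {n : ℕ} {z : Fin (n + 1) → K} (hz : StrictMono z) {q : K[X]}
    (hq : q.natDegree ≤ n) (hsign : ∀ j : Fin (n + 1), 0 < (-1) ^ (n + j : ℕ) * q.eval (z j)) :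
    0 < q.coeff n := by
  have hdeg : q.degree < (Finset.univ : Finset (Fin (n + 1))).card := by
    rw [Finset.card_fin]
    exact (Polynomial.degree_le_of_natDegree_le hq).trans_lt (by exact_mod_cast n.lt_succ_self)
  have lagrange := Lagrange.coeff_eq_sum hz.injective.injOn hdeg
  rw [Finset.card_fin, Nat.add_sub_cancel] at lagrange
  rw [lagrange]
  refine Finset.sum_pos (fun j _ => ?_) Finset.univ_nonempty
  rw [← mul_div_mul_left _ _ (pow_ne_zero (n + j : ℕ) (neg_ne_zero.mpr (one_ne_zero' K)))]
  exact div_pos (hsign j) (neg_one_pow_mul_prod_erase_sub_pos hz j)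

theorem coeff_mul_coeff_lt_of_alternating {n : ℕ} {z : Fin (n + 1) → K} (hz : StrictMono z)
    {p h : K[X]} (hp : p.natDegree ≤ n + 1) (hh : h.natDegree ≤ n + 1)
    (hroot : ∀ j, p.eval (z j) = 0)
    (hsign : ∀ j : Fin (n + 1), 0 < (-1) ^ (n + j : ℕ) * (p.coeff (n + 1) * h.eval (z j))) :
    h.coeff (n + 1) * p.coeff n < p.coeff (n + 1) * h.coeff n := by
  -- Eliminating the top coefficient of `h` against `p` does not change the values at the roots.
  set q : K[X] :=
    Polynomial.C (p.coeff (n + 1)) * h - Polynomial.C (h.coeff (n + 1)) * p with q_def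
  have hq : q.natDegree ≤ n := by
    have hq_le : q.natDegree ≤ n + 1 := by
      simpa using Polynomial.natDegree_sub_le_of_le
        ((Polynomial.natDegree_C_mul_le _ h).trans hh)
        ((Polynomial.natDegree_C_mul_le _ p).trans hp)
    have hq_top : q.coeff (n + 1) = 0 := by
      simp [q_def, mul_comm]
    exact Polynomial.natDegree_le_pred hq_le hq_top
  have hcoeff := coeff_pos_of_alternating hz hq fun j => by
    simpa [q_def, hroot j] using hsign j
  simpa [q_def] using hcoeff

theorem sq_sum_eq_sum_sq_add_two_mul_esymm_two {A : Type*} [CommRing A] (s : Multiset A) :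
    s.sum ^ 2 = (s.map (· ^ 2)).sum + 2 * s.esymm 2 := by
  induction s using Multiset.induction with
  | empty => simp [Multiset.esymm, Multiset.powersetCard_zero_right]
  | cons a s ih =>
    have esymm_cons : (a ::ₘ s).esymm 2 = s.esymm 2 + a * s.sum := by
      simpa [Multiset.esymm, Multiset.powersetCard_one] using
        Multiset.sum_map_mul_left (s := s) (a := a) (f := id)
    rw [esymm_cons, Multiset.sum_cons, Multiset.map_cons, Multiset.sum_cons]
    linear_combination ih

theorem two_mul_card_mul_esymm_two_le (s : Multiset K) :
    2 * s.card * s.esymm 2 ≤ (s.card - 1) * s.sum ^ 2 := by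
  have cauchy_schwarz : s.sum ^ 2 ≤ s.card * (s.map (· ^ 2)).sum := by
    classical
    have := sq_sum_le_card_mul_sum_sq (s := (Finset.univ : Finset s)) (f := fun x : s => (x : K))
    rwa [Finset.sum_eq_multiset_sum, Finset.sum_eq_multiset_sum, Multiset.map_univ_coe,
      Multiset.map_univ s (fun x : K => x ^ 2), Finset.card_univ, Multiset.card_coe] at this
  linear_combination cauchy_schwarz - s.card * sq_sum_eq_sum_sq_add_two_mul_esymm_two s

theorem newton_inequality_top_coeffs {n : ℕ} {p : K[X]} (hp : p.Splits)
    (hdeg : p.natDegree = n + 2) :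
    2 * (n + 2) * (p.coeff (n + 2) * p.coeff n) ≤ (n + 1) * p.coeff (n + 1) ^ 2 := by
  have vieta : ∀ k ≤ n + 2,
      p.coeff k = p.coeff (n + 2) * (-1) ^ (n + 2 - k) * p.roots.esymm (n + 2 - k) := by
    intro k hk
    simpa only [Polynomial.leadingCoeff, hdeg] using
      Polynomial.coeff_eq_esymm_roots_of_splits hp (hdeg ▸ hk)
  have hn : p.coeff n = p.coeff (n + 2) * p.roots.esymm 2 := by
    simpa using vieta n (by lia)
  have hn1 : p.coeff (n + 1) = - (p.coeff (n + 2) * p.roots.sum) := by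
    simpa [Multiset.esymm, Multiset.powersetCard_one] using vieta (n + 1) (by lia)
  have hroots := two_mul_card_mul_esymm_two_le p.roots
  rw [Polynomial.splits_iff_card_roots.mp hp, hdeg] at hroots
  push_cast at hroots
  rw [hn, hn1]
  linear_combination p.coeff (n + 2) ^ 2 * hroots

theorem card_le_card_roots {A ι : Type*} [CommRing A] [IsDomain A] [Fintype ι] {p : A[X]}
    (hp : p ≠ 0) {z : ι → A} (hz : Function.Injective z) (hroot : ∀ j, p.eval (z j) = 0) :
    Fintype.card ι ≤ p.roots.card := by
  have hle : Finset.univ.val.map z ≤ p.roots :=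
    (Multiset.le_iff_subset (Finset.univ.nodup.map hz)).mpr fun x hx => by
      obtain ⟨j, -, rfl⟩ := Multiset.mem_map.mp hx
      exact (Polynomial.mem_roots hp).mpr (hroot j)
  simpa using Multiset.card_le_card hle

theorem tendsto_eval_atTop_of_derivative_pos {q : ℝ[X]} {a : ℝ}
    (hq : ∀ x, a ≤ x → 0 < q.derivative.eval x) : Tendsto (fun x => q.eval x) atTop atTop := by
  have hmono : StrictMonoOn (fun x => q.eval x) (Set.Ici a) := by
    refine strictMonoOn_of_deriv_pos (convex_Ici a) q.continuous.continuousOn fun x hx => ?_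
    rw [interior_Ici] at hx
    simpa using hq x hx.le
  have hdeg : 0 < q.degree := by
    by_contra! hconst
    have := hq a le_rfl
    rw [Polynomial.eq_C_of_degree_le_zero hconst] at this
    simp at this
  refine q.tendsto_atTop_of_leadingCoeff_nonneg hdeg ?_
  by_contra! hneg
  have hbot := q.tendsto_atBot_of_leadingCoeff_nonpos hdeg hneg.le
  obtain ⟨x, hx, hax⟩ :=
    ((hbot.eventually_lt_atBot (q.eval a)).and (eventually_ge_atTop a)).exists
  exact (hmono.monotoneOn Set.self_mem_Ici hax hax).not_gt hx

end RealRoots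

section HalfTurns

/-- The number of completed half-turns of an angle `t`: the index `n` of the interval
`[nπ, (n + 1)π)` that contains `t`. -/
noncomputable def halfTurns (t : ℝ) : ℤ :=
  ⌊t / Real.pi⌋

theorem le_halfTurns_iff {n : ℤ} {t : ℝ} : n ≤ halfTurns t ↔ n * Real.pi ≤ t := by
  rw [halfTurns, Int.le_floor, le_div_iff₀ Real.pi_pos]

theorem halfTurns_lt_iff {n : ℤ} {t : ℝ} : halfTurns t < n ↔ t < n * Real.pi := by
  rw [halfTurns, Int.floor_lt, div_lt_iff₀ Real.pi_pos]

theorem halfTurns_add_int_mul_pi (t : ℝ) (n : ℤ) :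
    halfTurns (t + n * Real.pi) = halfTurns t + n := by
  rw [halfTurns, halfTurns, add_div, mul_div_cancel_right₀ _ Real.pi_ne_zero, Int.floor_add_intCast]

theorem neg_one_zpow_halfTurns_mul_sin_pos {t : ℝ} (ht : Real.sin t ≠ 0) :
    0 < (-1) ^ halfTurns t * Real.sin t := by
  have hle : halfTurns t * Real.pi ≤ t := le_halfTurns_iff.mp le_rfl
  have hlt : t < (halfTurns t + 1 : ℤ) * Real.pi := halfTurns_lt_iff.mp (lt_add_one _)
  push_cast at hlt
  rw [← Real.sin_sub_int_mul_pi]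
  refine (Real.sin_nonneg_of_nonneg_of_le_pi (by linarith) (by linarith)).lt_of_ne' ?_
  rw [Real.sin_sub_int_mul_pi]
  exact mul_ne_zero (zpow_ne_zero _ (by norm_num)) ht

theorem halfTurns_eq_of_isPreconnected {T : Type*} [TopologicalSpace T] {S : Set T}
    (hS : IsPreconnected S) {g : T → ℝ} (hg : ContinuousOn g S)
    (hsin : ∀ a ∈ S, Real.sin (g a) ≠ 0) {a b : T} (ha : a ∈ S) (hb : b ∈ S) :
    halfTurns (g a) = halfTurns (g b) := by
  wlog hlt : halfTurns (g a) < halfTurns (g b) generalizing a b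
  · obtain heq | hgt := (not_lt.mp hlt).eq_or_lt
    · exact heq.symm
    · exact (this hb ha hgt).symm
  obtain ⟨c, hc, hgc⟩ := hS.intermediate_value ha hb hg
    ⟨(halfTurns_lt_iff.mp hlt).le, le_halfTurns_iff.mp le_rfl⟩
  exact absurd (hgc ▸ Real.sin_int_mul_pi _) (hsin c hc)

theorem exists_first_hitting {g : ℝ → ℝ} {a b c : ℝ} (hab : a ≤ b)
    (hg : ContinuousOn g (Set.Icc a b)) (hc : c ∈ Set.Icc (g a) (g b)) :
    ∃ t ∈ Set.Icc a b, g t = c ∧ ∀ s ∈ Set.Icc a b, c ≤ g s → t ≤ s := by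
  have hcompact : IsCompact (Set.Icc a b ∩ g ⁻¹' Set.Ici c) :=
    isCompact_Icc.of_isClosed_subset (hg.preimage_isClosed_of_isClosed isClosed_Icc isClosed_Ici)
      Set.inter_subset_left
  obtain ⟨t, ⟨htI, hct⟩, hleast⟩ :=
    hcompact.exists_isLeast ⟨b, Set.right_mem_Icc.mpr hab, hc.2⟩
  obtain ⟨s, hs, rfl⟩ := intermediate_value_Icc htI.1
    (hg.mono (Set.Icc_subset_Icc_right htI.2)) ⟨hc.1, hct⟩
  have hsI : s ∈ Set.Icc a b := ⟨hs.1, hs.2.trans htI.2⟩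
  have hts : t = s := le_antisymm (hleast ⟨hsI, le_refl (g s)⟩) hs.2
  exact ⟨s, hsI, rfl, fun r hr hgr => hts ▸ hleast ⟨hr, hgr⟩⟩

theorem exists_strictMono_section {ι : Type*} [Preorder ι] {g : ℝ → ℝ} {a b : ℝ} (hab : a ≤ b)
    (hg : ContinuousOn g (Set.Icc a b)) {c : ι → ℝ} (hc : StrictMono c)
    (hmem : ∀ j, c j ∈ Set.Icc (g a) (g b)) : ∃ z : ι → ℝ, StrictMono z ∧ ∀ j, g (z j) = c j := by
  choose z hz hgz hfirst using fun j => exists_first_hitting hab hg (hmem j)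
  refine ⟨z, fun i j hij => ?_, hgz⟩
  refine (hfirst i (z j) (hz j) (hgz j ▸ (hc hij).le)).lt_of_ne fun heq => ?_
  exact (hc hij).ne (by rw [← hgz i, ← hgz j, heq])

theorem exists_strictMono_eq_int_mul_pi {g : ℝ → ℝ} {a b : ℝ} (hab : a ≤ b)
    (hg : ContinuousOn g (Set.Icc a b)) {k : ℕ} (hk : k ≤ halfTurns (g b) - halfTurns (g a)) :
    ∃ z : Fin k → ℝ, StrictMono z ∧
      ∀ j, g (z j) = (halfTurns (g a) + 1 + j : ℤ) * Real.pi := by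
  refine exists_strictMono_section hab hg (fun i j hij => ?_) fun j => ⟨?_, ?_⟩
  · gcongr
    exact hij
  · exact (halfTurns_lt_iff.mp (by lia)).le
  · exact le_halfTurns_iff.mp (by have := j.isLt; lia)

end HalfTurns

section LogDerivative

theorem hasDerivAt_of_exp_comp_eq {l h : ℝ → ℂ} {h' : ℂ} {t : ℝ} (hl : Continuous l)
    (hexp : ∀ s, Complex.exp (l s) = h s) (hh : HasDerivAt h h' t) :
    HasDerivAt l (h' / h t) t := by
  have exp_sub (s : ℝ) : h s / h t = Complex.exp (l s - l t) := by
    rw [Complex.exp_sub, hexp, hexp]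
  have near : ∀ᶠ s in nhds t, (l s - l t).im ∈ Set.Ioo (-Real.pi) Real.pi := by
    have hcont : Continuous fun s => (l s - l t).im := by fun_prop
    refine hcont.continuousAt.eventually_mem (Ioo_mem_nhds ?_ ?_) <;> simp [Real.pi_pos]
  have eq_log : l =ᶠ[nhds t] fun s => l t + Complex.log (h s / h t) := by
    filter_upwards [near] with s hs
    rw [exp_sub, Complex.log_exp hs.1 hs.2.le, add_sub_cancel]
  have one_mem : h t / h t ∈ Complex.slitPlane := by simp [exp_sub]
  have hlog := ((hh.div_const (h t)).clog_real one_mem).const_add (l t)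
  have ratio_one : h t / h t = 1 := by simp [exp_sub]
  rw [ratio_one, div_one] at hlog
  exact hlog.congr_of_eventuallyEq eq_log

theorem integral_deriv_angle_eq_sub {u v : ℝ → ℝ} (hu : ContDiff ℝ 1 u) (hv : ContDiff ℝ 1 v)
    {l : ℝ → ℂ} (hl : Continuous l) (hexp : ∀ t, Complex.exp (l t) = ⟨u t, v t⟩) (a b : ℝ) :
    ∫ t in a..b, (u t * deriv v t - v t * deriv u t) / (u t ^ 2 + v t ^ 2) =
      (l b).im - (l a).im := by
  have norm_ne (t : ℝ) : u t ^ 2 + v t ^ 2 ≠ 0 := by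
    have := Complex.normSq_pos.mpr (Complex.exp_ne_zero (l t))
    rw [hexp, Complex.normSq_mk] at this
    nlinarith
  have hderiv (t : ℝ) : HasDerivAt (fun t => (l t).im)
      ((u t * deriv v t - v t * deriv u t) / (u t ^ 2 + v t ^ 2)) t := by
    have hut := (hu.differentiable one_ne_zero t).hasDerivAt.ofReal_comp
    have hvt := (hv.differentiable one_ne_zero t).hasDerivAt.ofReal_comp
    have hlt := hasDerivAt_of_exp_comp_eq hl (fun s => (hexp s).trans (Complex.mk_eq_add_mul_I _ _))
      (hut.add (hvt.mul_const Complex.I))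
    refine (Complex.imCLM.hasFDerivAt.comp_hasDerivAt t hlt).congr_deriv ?_
    simp only [Complex.imCLM_apply, Complex.div_im, Complex.normSq_apply, Complex.add_im,
      Complex.ofReal_im, Complex.mul_im, Complex.ofReal_re, Complex.I_im, mul_one, Complex.I_re,
      mul_zero, add_zero, zero_add, Complex.add_re, Complex.mul_re, sub_self]
    ring
  refine intervalIntegral.integral_eq_sub_of_hasDerivAt (fun t _ => hderiv t) ?_
  refine Continuous.intervalIntegrable ?_ a b
  have := hu.continuous_deriv le_rfl
  have := hv.continuous_deriv le_rfl
  have := hu.continuous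
  have := hv.continuous
  exact Continuous.div (by fun_prop) (by fun_prop) norm_ne

end LogDerivative

section GradientLogarithm

variable {f : MvPolynomial (Fin 2) ℝ} {R : ℝ}

/-- The gradient of `f` at `z`, encoded as the complex number `f_x + i f_y`. -/
noncomputable def complexGradient (f : MvPolynomial (Fin 2) ℝ) (z : ℂ) : ℂ :=
  ⟨evalP (pderiv 0 f) z.re z.im, evalP (pderiv 1 f) z.re z.im⟩

theorem contDiff_evalP {E : Type*} [NormedAddCommGroup E] [NormedSpace ℝ E] {n : WithTop ℕ∞}
    (g : MvPolynomial (Fin 2) ℝ) {x y : E → ℝ} (hx : ContDiff ℝ n x) (hy : ContDiff ℝ n y) :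
    ContDiff ℝ n fun t => evalP g (x t) (y t) := by
  induction g using MvPolynomial.induction_on with
  | C a => simpa [evalP] using contDiff_const
  | add p q hp hq => simpa [evalP] using hp.add hq
  | mul_X p i hp =>
    fin_cases i
    · simpa [evalP] using hp.mul hx
    · simpa [evalP] using hp.mul hy

theorem continuous_complexGradient (f : MvPolynomial (Fin 2) ℝ) :
    Continuous (complexGradient f) := by
  have hre (g : MvPolynomial (Fin 2) ℝ) : Continuous fun z : ℂ => evalP g z.re z.im :=
    (contDiff_evalP (n := 0) g Complex.reCLM.contDiff Complex.imCLM.contDiff).continuous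
  have hcoe : complexGradient f = fun z : ℂ =>
      (evalP (pderiv 0 f) z.re z.im : ℂ) + evalP (pderiv 1 f) z.re z.im * Complex.I :=
    funext fun z => Complex.mk_eq_add_mul_I _ _
  rw [hcoe]
  have := hre (pderiv 0 f)
  have := hre (pderiv 1 f)
  fun_prop

theorem complexGradient_ne_zero
    (hadm : ∀ p : ℝ × ℝ, IsCriticalPt f p → p.1 ^ 2 + p.2 ^ 2 < R ^ 2) {z : ℂ} (hR : 0 ≤ R)
    (hz : R ≤ ‖z‖) : complexGradient f z ≠ 0 := by
  intro hzero
  obtain ⟨hx, hy⟩ := Complex.ext_iff.mp hzero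
  have hlt := hadm (z.re, z.im) ⟨hx, hy⟩
  have hle := pow_le_pow_left₀ hR hz 2
  rw [Complex.sq_norm, Complex.normSq_apply] at hle
  nlinarith

/-- `L` is a continuous logarithm of the gradient of `f` outside the disk of radius `R`, in the
logarithmic coordinate `w` with `exp w = x + i y`. It is continuous everywhere, but its values
carry no information for `w.re < Real.log R`. -/
structure IsGradLog (f : MvPolynomial (Fin 2) ℝ) (R : ℝ) (L : ℂ → ℂ) : Prop where
  continuous : Continuous L
  exp_eq : ∀ w : ℂ, Real.log R ≤ w.re → Complex.exp (L w) = complexGradient f (Complex.exp w)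

theorem exists_isGradLog (hR : 0 < R)
    (hadm : ∀ p : ℝ × ℝ, IsCriticalPt f p → p.1 ^ 2 + p.2 ^ 2 < R ^ 2) :
    ∃ L, IsGradLog f R L := by
  -- The half-plane `log R ≤ w.re` is a retract of the simply connected plane.
  let retract (w : ℂ) : ℂ := (max w.re (Real.log R) : ℝ) + w.im * Complex.I
  have hcont : Continuous fun w => complexGradient f (Complex.exp (retract w)) :=
    (continuous_complexGradient f).comp (by fun_prop)
  have hne : (0 : ℂ) ∉ (fun w => complexGradient f (Complex.exp (retract w))) '' Set.univ := by
    rintro ⟨w, -, hw⟩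
    refine complexGradient_ne_zero hadm hR.le ?_ hw
    rw [Complex.norm_exp, ← Real.log_le_iff_le_exp hR]
    simp [retract]
  obtain ⟨L, hL, hexp⟩ := Complex.exists_continuousOn_eqOn_exp_comp
    (Homeomorph.Set.univ ℂ).toHomotopyEquiv.simplyConnectedSpace isOpen_univ hcont.continuousOn hne
  refine ⟨L, continuousOn_univ.mp hL, fun w hw => ?_⟩
  have hretract : retract w = w := by
    simp [retract, max_eq_left hw]
  simpa [hretract] using hexp (Set.mem_univ w)

namespace IsGradLog

variable {L : ℂ → ℂ}

theorem im_add_two_pi_sub (hL : IsGradLog f R L) (hR : 0 < R) :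
    (L (Real.log R + 2 * Real.pi * Complex.I)).im - (L (Real.log R)).im =
      2 * Real.pi * gradIndex f R := by
  have hu : ContDiff ℝ 1 (uFun f R) :=
    contDiff_evalP _ (contDiff_const.mul Real.contDiff_cos) (contDiff_const.mul Real.contDiff_sin)
  have hv : ContDiff ℝ 1 (vFun f R) :=
    contDiff_evalP _ (contDiff_const.mul Real.contDiff_cos) (contDiff_const.mul Real.contDiff_sin)
  have hexp (t : ℝ) : Complex.exp (L (Real.log R + t * Complex.I)) = ⟨uFun f R t, vFun f R t⟩ := by
    rw [hL.exp_eq _ (by simp)]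
    have hre : (Complex.exp (Real.log R + t * Complex.I)).re = R * Real.cos t := by
      simp [Complex.exp_re, Real.exp_log hR]
    have him : (Complex.exp (Real.log R + t * Complex.I)).im = R * Real.sin t := by
      simp [Complex.exp_im, Real.exp_log hR]
    rw [complexGradient, hre, him, uFun, vFun]
  have hcont : Continuous fun t : ℝ => L (Real.log R + t * Complex.I) :=
    hL.continuous.comp (by fun_prop)
  rw [gradIndex, integral_deriv_angle_eq_sub hu hv hcont hexp, ← mul_assoc,
    mul_one_div_cancel Real.two_pi_pos.ne', one_mul]
  simp

theorem exists_int_eq_gradIndex (hL : IsGradLog f R L) (hR : 0 < R) :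
    ∃ i : ℤ, gradIndex f R = i ∧ ∀ w : ℂ, Real.log R ≤ w.re →
      L (w + 2 * Real.pi * Complex.I) = L w + i * (2 * Real.pi * Complex.I) := by
  have hexp : ∀ w : ℂ, Real.log R ≤ w.re →
      Complex.exp (L (w + 2 * Real.pi * Complex.I) - L w) = 1 := fun w hw => by
    rw [Complex.exp_sub, hL.exp_eq _ (by simpa using hw), hL.exp_eq _ hw,
      Complex.exp_periodic, ← hL.exp_eq _ hw, div_self (Complex.exp_ne_zero _)]
  obtain ⟨i, hi⟩ := Complex.exp_eq_one_iff.mp (hexp (Real.log R) (by simp))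
  refine ⟨i, ?_, fun w hw => ?_⟩
  · have him := congrArg Complex.im hi
    rw [Complex.sub_im, hL.im_add_two_pi_sub hR] at him
    have : gradIndex f R * (2 * Real.pi) = i * (2 * Real.pi) := by simpa [mul_comm] using him
    exact mul_right_cancel₀ Real.two_pi_pos.ne' this
  · have hconst := Complex.isCoveringMap_exp.constOn_of_comp
      (convex_halfSpace_re_ge (Real.log R)).isPreconnected
      (g := fun w => L (w + 2 * Real.pi * Complex.I) - L w)
      (by have := hL.continuous; fun_prop)
      (fun a ha b hb => Subtype.ext ((hexp a ha).trans (hexp b hb).symm))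
      hw (show (Real.log R : ℂ) ∈ _ by simp)
    rw [← hi, ← hconst]
    ring

end IsGradLog

end GradientLogarithm

section PolynomialSubstitution

open scoped Polynomial

theorem derivation_aeval_eq_sum {σ A B M : Type*} [Fintype σ] [CommSemiring A] [CommSemiring B]
    [Algebra A B] [AddCommMonoid M] [Module A M] [Module B M] [IsScalarTower A B M]
    (D : Derivation A B M) (g : σ → B) (p : MvPolynomial σ A) :
    D (aeval g p) = ∑ i, aeval g (pderiv i p) • D (g i) := by
  classical
  induction p using MvPolynomial.induction_on with
  | C a => simp
  | add p q hp hq => simp only [map_add, hp, hq, add_smul, Finset.sum_add_distrib]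
  | mul_X p j hp =>
    have hX (i : σ) : aeval g (pderiv i (X j : MvPolynomial σ A)) = if i = j then 1 else 0 := by
      rcases eq_or_ne i j with rfl | hij
      · simp
      · simp [pderiv_X_of_ne hij.symm, hij]
    simp only [map_mul, aeval_X, Derivation.leibniz, hp, smul_eq_mul, map_add, add_smul,
      Finset.sum_add_distrib, Finset.smul_sum, mul_smul, hX, ite_smul, one_smul, zero_smul,
      smul_ite, smul_zero, Finset.sum_ite_eq', Finset.mem_univ, if_true]

theorem natDegree_prod_pow_le {ι B : Type*} [CommSemiring B] {g : ι → B[X]}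
    (hg : ∀ i, (g i).natDegree ≤ 1) (k : ι → ℕ) (t : Finset ι) :
    (∏ i ∈ t, g i ^ k i).natDegree ≤ ∑ i ∈ t, k i :=
  (Polynomial.natDegree_prod_le _ _).trans <| Finset.sum_le_sum fun i _ => by
    simpa using Polynomial.natDegree_pow_le_of_le (k i) (hg i)

theorem coeff_prod_pow_of_natDegree_le {ι B : Type*} [CommSemiring B] {g : ι → B[X]}
    (hg : ∀ i, (g i).natDegree ≤ 1) (k : ι → ℕ) (t : Finset ι) :
    (∏ i ∈ t, g i ^ k i).coeff (∑ i ∈ t, k i) = ∏ i ∈ t, (g i).coeff 1 ^ k i := by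
  classical
  induction t using Finset.induction_on with
  | empty => simp
  | insert i t hi ih =>
    have hpow : (g i ^ k i).natDegree ≤ k i := by
      simpa using Polynomial.natDegree_pow_le_of_le (k i) (hg i)
    rw [Finset.prod_insert hi, Finset.sum_insert hi, Finset.prod_insert hi, ← ih,
      Polynomial.coeff_mul_add_eq_of_natDegree_le hpow (natDegree_prod_pow_le hg k t)]
    simpa using congrArg (· * _) (Polynomial.coeff_pow_of_natDegree_le (m := k i) (hg i))

theorem coeff_aeval_of_totalDegree_le {σ A B : Type*} [CommSemiring A] [CommSemiring B]
    [Algebra A B] {g : σ → B[X]} (hg : ∀ i, (g i).natDegree ≤ 1) {p : MvPolynomial σ A} {n : ℕ}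
    (hp : p.totalDegree ≤ n) :
    (aeval g p).coeff n = aeval (fun i => (g i).coeff 1) (homogeneousComponent n p) := by
  rw [homogeneousComponent_apply, aeval_def, eval₂_eq, Polynomial.finsetSum_coeff, map_sum,
    Finset.sum_filter]
  refine Finset.sum_congr rfl fun s hs => ?_
  rw [IsScalarTower.algebraMap_apply A B B[X], Polynomial.algebraMap_apply, Algebra.algebraMap_self,
    RingHom.id_apply, Polynomial.coeff_C_mul]
  split_ifs with hsn
  · rw [aeval_monomial, ← hsn, Finsupp.prod, ← coeff_prod_pow_of_natDegree_le hg]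
    rfl
  · have hlt : s.degree < n := lt_of_le_of_ne ((le_totalDegree hs).trans hp) hsn
    rw [Polynomial.coeff_eq_zero_of_natDegree_lt ((natDegree_prod_pow_le hg s _).trans_lt hlt),
      mul_zero]

theorem homogeneousComponent_totalDegree_ne_zero {σ A : Type*} [CommSemiring A]
    {p : MvPolynomial σ A} (hp : p ≠ 0) : homogeneousComponent p.totalDegree p ≠ 0 := by
  obtain ⟨s, hs, hdeg⟩ := Finset.exists_mem_eq_sup p.support (support_nonempty.mpr hp)
    fun s => s.degree
  have htotal : s.degree = p.totalDegree := hdeg.symm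
  rw [Ne, MvPolynomial.ext_iff, not_forall]
  refine ⟨s, ?_⟩
  rwa [coeff_homogeneousComponent, if_pos htotal, coeff_zero, ← Ne, ← mem_support_iff]

theorem eval_smul_of_isHomogeneous {σ A : Type*} [CommSemiring A] {p : MvPolynomial σ A} {n : ℕ}
    (hp : p.IsHomogeneous n) (r : A) (v : σ → A) : eval (r • v) p = r ^ n * eval v p := by
  rw [eval_eq, eval_eq, Finset.mul_sum]
  refine Finset.sum_congr rfl fun s hs => ?_
  have hdeg : ∑ i ∈ s.support, s i = n := by
    rw [← hp (mem_support_iff.mp hs), Finsupp.weight_apply]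
    simp [Finsupp.sum]
  simp only [Pi.smul_apply, smul_eq_mul, mul_pow, Finset.prod_mul_distrib,
    Finset.prod_pow_eq_pow_sum, hdeg]
  ring

end PolynomialSubstitution

section BivariatePolynomials

open scoped Polynomial Polynomial.Bivariate

theorem continuous_evalEval {A : Type*} [CommRing A] [TopologicalSpace A] [IsTopologicalRing A]
    (F : A[X][Y]) : Continuous fun z : A × A => F.evalEval z.1 z.2 := by
  have hsum (z : A × A) : F.evalEval z.1 z.2 =
      ∑ i ∈ Finset.range (F.natDegree + 1), (F.coeff i).eval z.1 * z.2 ^ i := by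
    rw [← Polynomial.eval₂_evalRingHom, Polynomial.eval₂_eq_sum_range]
    rfl
  simp only [hsum]
  fun_prop

theorem evalEval_zero_right {A : Type*} [CommSemiring A] (F : A[X][Y]) (x : A) :
    F.evalEval x 0 = (F.coeff 0).eval x := by
  rw [Polynomial.evalEval, Polynomial.C_0, Polynomial.coeff_zero_eq_eval_zero]

theorem evalEval_eq_reflect_mul_pow {A : Type*} [Field A] {F : A[X][Y]} {m : ℕ}
    (hF : F.natDegree ≤ m) (x : A) {y : A} (hy : y ≠ 0) :
    F.evalEval x y = (F.reflect m).evalEval x y⁻¹ * y ^ m := by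
  have := invertibleOfNonzero hy
  rw [← Polynomial.eval₂_evalRingHom, ← invOf_eq_inv y, Polynomial.eval₂_reflect_mul_pow _ _ _ _ hF]

theorem eventually_evalEval_mul_pos {F : ℝ[X][Y]} {m : ℕ} {b : ℝ} (hF : F.natDegree ≤ m)
    (hb : b ≠ 0) (hc : F.coeff m = Polynomial.C b) {K : Set ℝ} (hK : IsCompact K) :
    ∀ᶠ y in Bornology.cobounded ℝ, ∀ x ∈ K, 0 < F.evalEval x y * (b * y ^ m) := by
  have hzero (x : ℝ) : 0 < (F.reflect m).evalEval x 0 * b := by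
    rw [evalEval_zero_right, Polynomial.coeff_reflect, Polynomial.revAt_le m.zero_le, Nat.sub_zero,
      hc, Polynomial.eval_C]
    exact mul_self_pos.mpr hb
  have hcont : Continuous fun z : ℝ × ℝ => (F.reflect m).evalEval z.2 z.1 * b :=
    ((continuous_evalEval _).comp continuous_swap).mul_const b
  have hnear : ∀ᶠ t in nhds (0 : ℝ), ∀ x ∈ K, 0 < (F.reflect m).evalEval x t * b :=
    hK.eventually_forall_of_forall_eventually fun x _ =>
      hcont.continuousAt.eventually_const_lt (hzero x)
  filter_upwards [tendsto_inv₀_cobounded.eventually hnear, Bornology.eventually_ne_cobounded 0]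
    with y hy hy0 x hx
  calc 0 < (F.reflect m).evalEval x y⁻¹ * b * (y ^ m) ^ 2 := mul_pos (hy x hx) (by positivity)
    _ = (F.reflect m).evalEval x y⁻¹ * y ^ m * (b * y ^ m) := by ring
    _ = F.evalEval x y * (b * y ^ m) := by rw [← evalEval_eq_reflect_mul_pow hF x hy0]

/-- The derivation `∂/∂x` of `ℝ[X][Y]`, where `x` is the inner variable and `y` the outer one. -/
noncomputable def partialX : Derivation ℝ ℝ[X][Y] ℝ[X][Y] :=
  (PolynomialModule.equivPolynomialSelf (R := ℝ[X])).toLinearMap.compDer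
    Polynomial.derivative'.mapCoeffs

theorem coeff_partialX (F : ℝ[X][Y]) (k : ℕ) :
    (partialX F).coeff k = (F.coeff k).derivative := rfl

theorem partialX_C (p : ℝ[X]) : partialX (Polynomial.C p) = Polynomial.C p.derivative := by
  ext1 k
  rw [coeff_partialX, Polynomial.coeff_C, Polynomial.coeff_C]
  split_ifs <;> simp

theorem partialX_Y : partialX Y = 0 := by
  ext1 k
  rw [coeff_partialX, Polynomial.coeff_X]
  split_ifs <;> simp

/-- The gradient of `F` at `z`, encoded as the complex number `F_x + i F_y`. -/
noncomputable def bivariateGradient (F : ℝ[X][Y]) (z : ℂ) : ℂ :=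
  ⟨(partialX F).evalEval z.re z.im, F.derivative.evalEval z.re z.im⟩

end BivariatePolynomials

section Rotation

open scoped Polynomial Polynomial.Bivariate

/-- The coordinate functions `(cos a) x - (sin a) y` and `(sin a) x + (cos a) y` of the frame
obtained by rotation through the angle `a`. -/
noncomputable def rotatedCoord (a : ℝ) : Fin 2 → ℝ[X][Y] :=
  ![Real.cos a • Polynomial.C Polynomial.X - Real.sin a • Y,
    Real.sin a • Polynomial.C Polynomial.X + Real.cos a • Y]

/-- The polynomial `f ∘ ρ`, where `ρ` is the rotation of the plane by the angle `a`, as a polynomial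
in `y` with coefficients in `ℝ[x]`. -/
noncomputable def rotate (a : ℝ) (f : MvPolynomial (Fin 2) ℝ) : ℝ[X][Y] :=
  aeval (rotatedCoord a) f

theorem evalEval_rotate (a : ℝ) (f : MvPolynomial (Fin 2) ℝ) (z : ℂ) :
    (rotate a f).evalEval z.re z.im =
      evalP f (Complex.exp (a * Complex.I) * z).re (Complex.exp (a * Complex.I) * z).im := by
  have hre : (Complex.exp (a * Complex.I) * z).re = Real.cos a * z.re - Real.sin a * z.im := by
    simp [Complex.mul_re, Complex.exp_ofReal_mul_I_re, Complex.exp_ofReal_mul_I_im]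
  have him : (Complex.exp (a * Complex.I) * z).im = Real.sin a * z.re + Real.cos a * z.im := by
    simp [Complex.mul_im, Complex.exp_ofReal_mul_I_re, Complex.exp_ofReal_mul_I_im, add_comm]
  have hcoord : (fun i => Polynomial.aevalAeval z.re z.im (rotatedCoord a i)) =
      ![Real.cos a * z.re - Real.sin a * z.im, Real.sin a * z.re + Real.cos a * z.im] := by
    funext i
    fin_cases i <;>
      simp only [rotatedCoord, Fin.zero_eta, Fin.mk_one, Matrix.cons_val_zero, Matrix.cons_val_one,
        map_sub, map_add, map_smul, Polynomial.aevalAeval_X, Polynomial.aevalAeval_Y, smul_eq_mul]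
  rw [← Polynomial.coe_aevalAeval_eq_evalEval, rotate, comp_aeval_apply, hcoord, hre, him, evalP,
    aeval_eq_eval]

theorem partialX_rotate (a : ℝ) (f : MvPolynomial (Fin 2) ℝ) :
    partialX (rotate a f) =
      Real.cos a • rotate a (pderiv 0 f) + Real.sin a • rotate a (pderiv 1 f) := by
  have h0 : partialX (rotatedCoord a 0) = Real.cos a • 1 := by
    simp only [rotatedCoord, Matrix.cons_val_zero, map_sub, Derivation.map_smul, partialX_C,
      partialX_Y, Polynomial.derivative_X, Polynomial.C_1, smul_zero, sub_zero]
  have h1 : partialX (rotatedCoord a 1) = Real.sin a • 1 := by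
    simp only [rotatedCoord, Matrix.cons_val_one, Matrix.cons_val_zero, map_add,
      Derivation.map_smul, partialX_C, partialX_Y, Polynomial.derivative_X, Polynomial.C_1,
      smul_zero, add_zero]
  rw [rotate, derivation_aeval_eq_sum, Fin.sum_univ_two, h0, h1]
  simp only [smul_eq_mul, mul_smul_comm, mul_one, rotate]

theorem derivative_rotate (a : ℝ) (f : MvPolynomial (Fin 2) ℝ) :
    (rotate a f).derivative =
      -Real.sin a • rotate a (pderiv 0 f) + Real.cos a • rotate a (pderiv 1 f) := by
  let partialY : Derivation ℝ ℝ[X][Y] ℝ[X][Y] :=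
    (Polynomial.derivative' (R := ℝ[X])).restrictScalars ℝ
  have h0 : partialY (rotatedCoord a 0) = -Real.sin a • 1 := by
    simp only [rotatedCoord, partialY, Matrix.cons_val_zero, map_sub, Derivation.map_smul,
      Derivation.restrictScalars_apply, Polynomial.derivative'_apply, Polynomial.derivative_C,
      Polynomial.derivative_X, smul_zero, zero_sub, neg_smul]
  have h1 : partialY (rotatedCoord a 1) = Real.cos a • 1 := by
    simp only [rotatedCoord, partialY, Matrix.cons_val_one, Matrix.cons_val_zero, map_add,
      Derivation.map_smul, Derivation.restrictScalars_apply, Polynomial.derivative'_apply,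
      Polynomial.derivative_C, Polynomial.derivative_X, smul_zero, zero_add]
  have hsum := derivation_aeval_eq_sum partialY (rotatedCoord a) f
  rw [Fin.sum_univ_two, h0, h1] at hsum
  simpa only [smul_eq_mul, mul_smul_comm, mul_one] using! hsum

theorem bivariateGradient_rotate (a : ℝ) (f : MvPolynomial (Fin 2) ℝ) (z : ℂ) :
    bivariateGradient (rotate a f) z =
      Complex.exp (-(a * Complex.I)) * complexGradient f (Complex.exp (a * Complex.I) * z) := by
  have hexp : Complex.exp (-(a * Complex.I)) = ⟨Real.cos a, -Real.sin a⟩ :=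
    Complex.ext (by simpa using Complex.exp_ofReal_mul_I_re (-a))
      (by simpa using Complex.exp_ofReal_mul_I_im (-a))
  rw [hexp, bivariateGradient, partialX_rotate, derivative_rotate, complexGradient]
  simp only [← evalEval_rotate]
  apply Complex.ext
  · simp only [Polynomial.evalEval_add, Polynomial.evalEval_smul, smul_eq_mul, Complex.mul_re,
      neg_mul, sub_neg_eq_add]
  · simp only [Polynomial.evalEval_add, Polynomial.evalEval_smul, smul_eq_mul, Complex.mul_im,
      add_comm]

theorem natDegree_rotatedCoord_le (a : ℝ) (i : Fin 2) : (rotatedCoord a i).natDegree ≤ 1 := by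
  have hC (r : ℝ) : (r • Polynomial.C (Polynomial.X : ℝ[X])).natDegree ≤ 1 :=
    (Polynomial.natDegree_smul_le _ _).trans (by simp)
  have hY (r : ℝ) : (r • (Y : ℝ[X][Y])).natDegree ≤ 1 :=
    (Polynomial.natDegree_smul_le _ _).trans Polynomial.natDegree_X_le
  fin_cases i
  · exact Polynomial.natDegree_sub_le_of_le (hC _) (hY _)
  · exact Polynomial.natDegree_add_le_of_degree_le (hC _) (hY _)

theorem natDegree_rotate_le (a : ℝ) (f : MvPolynomial (Fin 2) ℝ) :
    (rotate a f).natDegree ≤ f.totalDegree := by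
  refine Polynomial.natDegree_le_iff_coeff_eq_zero.mpr fun n hn => ?_
  rw [rotate, coeff_aeval_of_totalDegree_le (natDegree_rotatedCoord_le a) hn.le,
    homogeneousComponent_eq_zero n f hn, map_zero]

/-- The coefficient of `y ^ d` in `rotate a f`, where `d` is the total degree of `f`: the value of
the leading form of `f` at the unit vector `(-sin a, cos a)`. -/
noncomputable def topCoeff (a : ℝ) (f : MvPolynomial (Fin 2) ℝ) : ℝ :=
  eval ![-Real.sin a, Real.cos a] (homogeneousComponent f.totalDegree f)

theorem coeff_rotate_totalDegree (a : ℝ) (f : MvPolynomial (Fin 2) ℝ) :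
    (rotate a f).coeff f.totalDegree = Polynomial.C (topCoeff a f) := by
  have hcoord : (fun i => (rotatedCoord a i).coeff 1) =
      fun i => Polynomial.C (![-Real.sin a, Real.cos a] i) := by
    funext i
    fin_cases i <;> simp [rotatedCoord, Polynomial.smul_eq_C_mul]
  rw [rotate, coeff_aeval_of_totalDegree_le (natDegree_rotatedCoord_le a) le_rfl, hcoord]
  exact aeval_algebraMap_apply ℝ[X] _ _

theorem topCoeff_add_pi (a : ℝ) (f : MvPolynomial (Fin 2) ℝ) :
    topCoeff (a + Real.pi) f = (-1) ^ f.totalDegree * topCoeff a f := by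
  rw [topCoeff, topCoeff,
    ← eval_smul_of_isHomogeneous (homogeneousComponent_isHomogeneous f.totalDegree f)]
  simp

theorem topCoeff_add_pi_ne_zero {a : ℝ} {f : MvPolynomial (Fin 2) ℝ} (ha : topCoeff a f ≠ 0) :
    topCoeff (a + Real.pi) f ≠ 0 := by
  rw [topCoeff_add_pi]
  exact mul_ne_zero (pow_ne_zero _ (neg_ne_zero.mpr one_ne_zero)) ha

theorem exists_topCoeff_ne_zero {f : MvPolynomial (Fin 2) ℝ} (hf : f ≠ 0) :
    ∃ a, topCoeff a f ≠ 0 := by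
  by_contra! hzero
  refine homogeneousComponent_totalDegree_ne_zero hf (MvPolynomial.funext fun v => ?_)
  let w : ℂ := ⟨v 1, -v 0⟩
  have hv : v = ‖w‖ • ![-Real.sin w.arg, Real.cos w.arg] := by
    funext i
    fin_cases i <;> simp [w]
  rw [hv, eval_smul_of_isHomogeneous (homogeneousComponent_isHomogeneous _ f), ← topCoeff, hzero,
    mul_zero, map_zero]

end Rotation

section PolynomialCurves

open scoped Polynomial

theorem neg_one_zpow_halfTurns_mul_im_exp_pos {w : ℂ} (hw : (Complex.exp w).im ≠ 0) :
    0 < (-1) ^ halfTurns w.im * (Complex.exp w).im := by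
  rw [Complex.exp_im] at hw ⊢
  rw [mul_left_comm]
  exact mul_pos (Real.exp_pos _) (neg_one_zpow_halfTurns_mul_sin_pos (right_ne_zero_of_mul hw))

theorem neg_one_zpow_mul_re_exp_pos {w : ℂ} {k : ℤ} (hw : w.im = k * Real.pi) :
    0 < (-1) ^ k * (Complex.exp w).re := by
  rw [Complex.exp_re, hw, Real.cos_int_mul_pi, mul_left_comm, ← mul_zpow]
  simpa using Real.exp_pos _

theorem eventually_eval_mul_pos {p : ℝ[X]} (hp : p ≠ 0) :
    ∀ᶠ y in Bornology.cobounded ℝ, 0 < p.eval y * (p.leadingCoeff * y ^ p.natDegree) := by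
  have hsign := eventually_evalEval_mul_pos (F := p.map Polynomial.C) Polynomial.natDegree_map_le
    (Polynomial.leadingCoeff_ne_zero.mpr hp) (Polynomial.coeff_map _ _)
    (isCompact_singleton (x := 0))
  refine hsign.mono fun y hy => ?_
  simpa [Polynomial.evalEval, Polynomial.eval_map] using hy 0 rfl

variable {l : ℝ → ℂ} {h p : ℝ[X]} {top bot : ℤ}

theorem exists_strictMono_root_of_le_sub (hl : Continuous l)
    (hexp : ∀ y, Complex.exp (l y) = ⟨h.eval y, p.eval y⟩)
    (htop : ∀ᶠ y in atTop, halfTurns (l y).im = top)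
    (hbot : ∀ᶠ y in atBot, halfTurns (l y).im = bot) {k : ℕ} (hk : k ≤ top - bot) :
    ∃ z : Fin k → ℝ, StrictMono z ∧
      ∀ j, p.eval (z j) = 0 ∧ 0 < (-1) ^ (bot + 1 + j : ℤ) * h.eval (z j) := by
  obtain ⟨b, hb, hb0⟩ := (htop.and (eventually_ge_atTop 0)).exists
  obtain ⟨a, ha, ha0⟩ := (hbot.and (eventually_le_atBot 0)).exists
  have him : ContinuousOn (fun y => (l y).im) (Set.Icc a b) := by fun_prop
  obtain ⟨z, hz, hval⟩ := exists_strictMono_eq_int_mul_pi (ha0.trans hb0) him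
    (k := k) (by rwa [hb, ha])
  refine ⟨z, hz, fun j => ⟨?_, ?_⟩⟩
  · have := congrArg Complex.im (hexp (z j))
    rw [Complex.exp_im, hval, Real.sin_int_mul_pi, mul_zero] at this
    exact this.symm
  · have := neg_one_zpow_mul_re_exp_pos (hval j)
    rwa [hexp, ha] at this

theorem sub_le_natDegree (hp : p ≠ 0) (hl : Continuous l)
    (hexp : ∀ y, Complex.exp (l y) = ⟨h.eval y, p.eval y⟩)
    (htop : ∀ᶠ y in atTop, halfTurns (l y).im = top)
    (hbot : ∀ᶠ y in atBot, halfTurns (l y).im = bot) : top - bot ≤ p.natDegree := by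
  by_contra! hlt
  obtain ⟨z, hz, hroot⟩ := exists_strictMono_root_of_le_sub hl hexp htop hbot
    (k := p.natDegree + 1) (by push_cast; omega)
  have hcard := (card_le_card_roots hp hz.injective fun j => (hroot j).1).trans p.card_roots'
  rw [Fintype.card_fin] at hcard
  omega

theorem neg_one_zpow_halfTurns_mul_pos {y c : ℝ}
    (hexp : ∀ y, Complex.exp (l y) = ⟨h.eval y, p.eval y⟩) (hc : 0 < p.eval y * c) :
    0 < (-1) ^ halfTurns (l y).im * c := by
  have him := neg_one_zpow_halfTurns_mul_im_exp_pos (w := l y) <| by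
    rw [hexp]
    exact left_ne_zero_of_mul hc.ne'
  rw [hexp] at him
  refine pos_of_mul_pos_left (b := p.eval y ^ 2) ?_ (sq_nonneg _)
  linear_combination mul_pos him hc

theorem neg_one_zpow_top_mul_leadingCoeff_pos (hp : p ≠ 0)
    (hexp : ∀ y, Complex.exp (l y) = ⟨h.eval y, p.eval y⟩)
    (htop : ∀ᶠ y in atTop, halfTurns (l y).im = top) :
    0 < (-1) ^ top * p.leadingCoeff := by
  have hsign := (eventually_eval_mul_pos hp).filter_mono IsOrderBornology.atTop_le_cobounded
  obtain ⟨y, hy, hpos, hy0⟩ := (htop.and (hsign.and (eventually_gt_atTop 0))).exists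
  have := neg_one_zpow_halfTurns_mul_pos hexp hpos
  rw [hy, ← mul_assoc] at this
  exact pos_of_mul_pos_left this (by positivity)

theorem neg_one_zpow_bot_mul_leadingCoeff_pos (hp : p ≠ 0)
    (hexp : ∀ y, Complex.exp (l y) = ⟨h.eval y, p.eval y⟩)
    (hbot : ∀ᶠ y in atBot, halfTurns (l y).im = bot) :
    0 < (-1) ^ (bot + p.natDegree) * p.leadingCoeff := by
  have hsign := (eventually_eval_mul_pos hp).filter_mono IsOrderBornology.atBot_le_cobounded
  obtain ⟨y, hy, hpos, hy0⟩ := (hbot.and (hsign.and (eventually_lt_atBot 0))).exists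
  have := neg_one_zpow_halfTurns_mul_pos hexp hpos
  have hy_pow : y ^ p.natDegree = (-1) ^ p.natDegree * (-y) ^ p.natDegree := by
    rw [← neg_pow, neg_neg]
  rw [hy, hy_pow] at this
  rw [zpow_add₀ (by norm_num), zpow_natCast]
  refine pos_of_mul_pos_left (b := (-y) ^ p.natDegree) ?_ (pow_nonneg (by linarith) _)
  linear_combination this

theorem even_sub_sub_natDegree (hp : p ≠ 0)
    (hexp : ∀ y, Complex.exp (l y) = ⟨h.eval y, p.eval y⟩)
    (htop : ∀ᶠ y in atTop, halfTurns (l y).im = top)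
    (hbot : ∀ᶠ y in atBot, halfTurns (l y).im = bot) : Even (top - bot - p.natDegree) := by
  have hprod := mul_pos (neg_one_zpow_top_mul_leadingCoeff_pos hp hexp htop)
    (neg_one_zpow_bot_mul_leadingCoeff_pos hp hexp hbot)
  rw [mul_mul_mul_comm, ← zpow_add₀ (by norm_num)] at hprod
  have heven : Even (top + (bot + p.natDegree)) := by
    by_contra hodd
    rw [(Int.not_even_iff_odd.mp hodd).neg_one_zpow] at hprod
    linarith [mul_self_nonneg p.leadingCoeff]
  rwa [sub_sub, Int.even_sub, ← Int.even_add]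

theorem splits_and_coeff_mul_coeff_lt_of_sub_eq {n : ℕ} (hp : p.natDegree = n + 1)
    (hh : h.natDegree ≤ n + 1) (hl : Continuous l)
    (hexp : ∀ y, Complex.exp (l y) = ⟨h.eval y, p.eval y⟩)
    (htop : ∀ᶠ y in atTop, halfTurns (l y).im = top)
    (hbot : ∀ᶠ y in atBot, halfTurns (l y).im = bot) (hsub : top - bot = n + 1) :
    p.Splits ∧ h.coeff (n + 1) * p.coeff n < p.coeff (n + 1) * h.coeff n := by
  have hp0 : p ≠ 0 := Polynomial.ne_zero_of_natDegree_gt (n := n) (by omega)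
  obtain ⟨z, hz, hroot⟩ := exists_strictMono_root_of_le_sub hl hexp htop hbot
    (k := n + 1) (by push_cast; omega)
  have hcard := card_le_card_roots hp0 hz.injective fun j => (hroot j).1
  rw [Fintype.card_fin, ← hp] at hcard
  refine ⟨Polynomial.splits_iff_card_roots.mpr (le_antisymm p.card_roots' hcard),
    coeff_mul_coeff_lt_of_alternating hz hp.le hh (fun j => (hroot j).1) fun j => ?_⟩
  have hlead := neg_one_zpow_bot_mul_leadingCoeff_pos hp0 hexp hbot
  have hprod := mul_pos hlead (hroot j).2
  rw [Polynomial.leadingCoeff, hp, mul_mul_mul_comm, ← zpow_add₀ (by norm_num)] at hprod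
  have hparity : (-1 : ℝ) ^ (bot + (n + 1 : ℕ) + (bot + 1 + j)) = (-1) ^ (n + j : ℕ) := by
    rw [show bot + (n + 1 : ℕ) + (bot + 1 + j) = (n + j : ℕ) + 2 * (bot + 1) by push_cast; ring,
      zpow_add₀ (by norm_num), zpow_natCast, (even_two_mul _).neg_one_zpow, mul_one]
  rwa [hparity] at hprod

end PolynomialCurves

section HalfPlane

open scoped Polynomial Polynomial.Bivariate

variable {F : ℝ[X][Y]} {c R : ℝ} {ℓ : ℂ → ℂ} {top bot : ℤ}

theorem coeff_derivative_map_evalRingHom (F : ℝ[X][Y]) (x : ℝ) (k : ℕ) :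
    (F.derivative.map (Polynomial.evalRingHom x)).coeff k = (F.coeff (k + 1)).eval x * (k + 1) := by
  simp [Polynomial.coeff_derivative]

theorem coeff_partialX_map_evalRingHom (F : ℝ[X][Y]) (x : ℝ) (k : ℕ) :
    ((partialX F).map (Polynomial.evalRingHom x)).coeff k = (F.coeff k).derivative.eval x := by
  rw [Polynomial.coeff_map, coeff_partialX, Polynomial.coe_evalRingHom]

theorem derivative_map_evalRingHom_ne_zero {n : ℕ} (hcoeff : F.coeff (n + 1) = Polynomial.C c)
    (hc : c ≠ 0) (x : ℝ) : F.derivative.map (Polynomial.evalRingHom x) ≠ 0 := by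
  intro hzero
  have hcoeffn := coeff_derivative_map_evalRingHom F x n
  rw [hzero, Polynomial.coeff_zero, hcoeff, Polynomial.eval_C] at hcoeffn
  exact mul_ne_zero hc (Nat.cast_add_one_ne_zero n) hcoeffn.symm

theorem natDegree_derivative_map_evalRingHom {n : ℕ} (hdeg : F.natDegree ≤ n + 1)
    (hcoeff : F.coeff (n + 1) = Polynomial.C c) (hc : c ≠ 0) (x : ℝ) :
    (F.derivative.map (Polynomial.evalRingHom x)).natDegree = n := by
  refine Polynomial.natDegree_eq_of_le_of_coeff_ne_zero ?_ ?_
  · exact Polynomial.natDegree_map_le.trans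
      ((Polynomial.natDegree_derivative_le F).trans (by omega))
  · rw [coeff_derivative_map_evalRingHom, hcoeff, Polynomial.eval_C]
    positivity

theorem natDegree_partialX_map_evalRingHom_le {n : ℕ} (hdeg : F.natDegree ≤ n + 1)
    (hcoeff : F.coeff (n + 1) = Polynomial.C c) (x : ℝ) :
    ((partialX F).map (Polynomial.evalRingHom x)).natDegree ≤ n := by
  refine Polynomial.natDegree_le_iff_coeff_eq_zero.mpr fun k hk => ?_
  rw [coeff_partialX_map_evalRingHom]
  rcases (Nat.succ_le_iff.mpr hk).eq_or_lt with rfl | hlt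
  · rw [hcoeff, Polynomial.derivative_C, Polynomial.eval_zero]
  · rw [Polynomial.coeff_eq_zero_of_natDegree_lt (hdeg.trans_lt hlt), Polynomial.derivative_zero,
      Polynomial.eval_zero]

/-- The map `ℓ` is a continuous logarithm of the gradient of `F` on the half-plane `R ≤ x`. -/
structure IsHalfPlaneLog (F : ℝ[X][Y]) (R : ℝ) (ℓ : ℂ → ℂ) : Prop where
  continuousOn : ContinuousOn ℓ {z | R ≤ z.re}
  exp_eq : ∀ z : ℂ, R ≤ z.re → Complex.exp (ℓ z) = bivariateGradient F z

namespace IsHalfPlaneLog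

theorem continuous_vertical (hℓ : IsHalfPlaneLog F R ℓ) {x : ℝ} (hx : R ≤ x) :
    Continuous fun y : ℝ => ℓ ⟨x, y⟩ := by
  have hmk : Continuous fun y : ℝ => (⟨x, y⟩ : ℂ) :=
    Complex.equivRealProdCLM.symm.continuous.comp (by fun_prop : Continuous fun y : ℝ => (x, y))
  exact hℓ.continuousOn.comp_continuous hmk fun _ => hx

theorem exp_vertical (hℓ : IsHalfPlaneLog F R ℓ) {x : ℝ} (hx : R ≤ x) (y : ℝ) :
    Complex.exp (ℓ ⟨x, y⟩) = ⟨((partialX F).map (Polynomial.evalRingHom x)).eval y,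
      (F.derivative.map (Polynomial.evalRingHom x)).eval y⟩ := by
  rw [hℓ.exp_eq _ hx, Polynomial.map_evalRingHom_eval, Polynomial.map_evalRingHom_eval]
  rfl

theorem sub_ne_of_three_le {m : ℕ} (hℓ : IsHalfPlaneLog F R ℓ) (hdeg : F.natDegree ≤ m + 3)
    (hcoeff : F.coeff (m + 3) = Polynomial.C c) (hc : c ≠ 0)
    (htop : ∀ x, R ≤ x → ∀ᶠ y in atTop, halfTurns (ℓ ⟨x, y⟩).im = top)
    (hbot : ∀ x, R ≤ x → ∀ᶠ y in atBot, halfTurns (ℓ ⟨x, y⟩).im = bot) :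
    top - bot ≠ m + 2 := by
  intro hsub
  let q : ℝ[X] := Polynomial.C (2 * c * (m + 3)) * F.coeff (m + 1) -
    Polynomial.C (m + 2 : ℝ) * F.coeff (m + 2) ^ 2
  have hdegp (x : ℝ) := natDegree_derivative_map_evalRingHom hdeg hcoeff hc x
  have hextremal {x : ℝ} (hx : R ≤ x) := splits_and_coeff_mul_coeff_lt_of_sub_eq (hdegp x)
    (natDegree_partialX_map_evalRingHom_le hdeg hcoeff x) (hℓ.continuous_vertical hx)
    (hℓ.exp_vertical hx) (htop x hx) (hbot x hx) (by push_cast; linarith)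
  have hnonpos (x : ℝ) (hx : R ≤ x) : q.eval x ≤ 0 := by
    have hnewton := newton_inequality_top_coeffs (hextremal hx).1 (hdegp x)
    simp only [coeff_derivative_map_evalRingHom, hcoeff, Polynomial.eval_C] at hnewton
    have hpos : (0 : ℝ) < (m + 1) * (m + 2) := by positivity
    refine nonpos_of_mul_nonpos_right ?_ hpos
    simp only [q, Polynomial.eval_sub, Polynomial.eval_mul, Polynomial.eval_C, Polynomial.eval_pow]
    push_cast at hnewton
    linear_combination hnewton
  have hderiv (x : ℝ) (hx : R ≤ x) : 0 < q.derivative.eval x := by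
    have hlt := (hextremal hx).2
    simp only [coeff_derivative_map_evalRingHom, coeff_partialX_map_evalRingHom, hcoeff,
      Polynomial.eval_C] at hlt
    simp only [q, Polynomial.derivative_sub, Polynomial.derivative_C_mul, Polynomial.derivative_sq,
      Polynomial.eval_sub, Polynomial.eval_mul, Polynomial.eval_C]
    push_cast at hlt
    linear_combination 2 * hlt
  have hlarge := (tendsto_eval_atTop_of_derivative_pos hderiv).eventually_gt_atTop 0
  obtain ⟨x, hpos, hx⟩ := (hlarge.and (eventually_ge_atTop R)).exists
  exact (hnonpos x hx).not_gt hpos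

theorem sub_le_max (hℓ : IsHalfPlaneLog F R ℓ) {n : ℕ} (hdeg : F.natDegree ≤ n + 1)
    (hcoeff : F.coeff (n + 1) = Polynomial.C c) (hc : c ≠ 0)
    (htop : ∀ x, R ≤ x → ∀ᶠ y in atTop, halfTurns (ℓ ⟨x, y⟩).im = top)
    (hbot : ∀ x, R ≤ x → ∀ᶠ y in atBot, halfTurns (ℓ ⟨x, y⟩).im = bot) :
    top - bot ≤ max 1 (n - 2 : ℤ) := by
  have hp := natDegree_derivative_map_evalRingHom hdeg hcoeff hc R
  have hp0 : F.derivative.map (Polynomial.evalRingHom R) ≠ 0 :=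
    derivative_map_evalRingHom_ne_zero hcoeff hc R
  have hle := sub_le_natDegree hp0 (hℓ.continuous_vertical le_rfl) (hℓ.exp_vertical le_rfl)
    (htop R le_rfl) (hbot R le_rfl)
  have heven := even_sub_sub_natDegree hp0 (hℓ.exp_vertical le_rfl) (htop R le_rfl) (hbot R le_rfl)
  rw [hp] at hle heven
  obtain ⟨k, hk⟩ := heven
  rcases n with - | - | m
  · omega
  · omega
  · have hne := hℓ.sub_ne_of_three_le hdeg hcoeff hc htop hbot
    omega

end IsHalfPlaneLog

end HalfPlane

section Frames

variable {f : MvPolynomial (Fin 2) ℝ} {R : ℝ} {L : ℂ → ℂ}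

/-- For a logarithm `L` of the gradient of `f` as in `IsGradLog`, the logarithm of the gradient of
`rotate a f` in Cartesian coordinates. It is continuous off the negative real axis. -/
noncomputable def frameLog (L : ℂ → ℂ) (a : ℝ) (z : ℂ) : ℂ :=
  L (Complex.log z + a * Complex.I) - a * Complex.I

theorem frameLog_add_pi (L : ℂ → ℂ) (a : ℝ) {z : ℂ} (hz : z.im < 0) :
    frameLog L (a + Real.pi) z = frameLog L a (-z) - Real.pi * Complex.I := by
  have hlog : Complex.log (-z) = Complex.log z + Real.pi * Complex.I := by
    rw [Complex.log, norm_neg, Complex.arg_neg_eq_arg_add_pi_of_im_neg hz, Complex.log]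
    push_cast
    ring
  rw [frameLog, frameLog, hlog]
  push_cast
  ring_nf

theorem log_le_re_log_add (hR : 0 < R) {z : ℂ} (hz : R ≤ ‖z‖) (a : ℝ) :
    Real.log R ≤ (Complex.log z + a * Complex.I).re := by
  simpa [Complex.log_re] using Real.log_le_log hR hz

namespace IsGradLog

theorem exp_frameLog (hL : IsGradLog f R L) (hR : 0 < R) (a : ℝ) {z : ℂ} (hz : R ≤ ‖z‖) :
    Complex.exp (frameLog L a z) = bivariateGradient (rotate a f) z := by
  have hz0 : z ≠ 0 := norm_pos_iff.mp (hR.trans_le hz)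
  rw [frameLog, Complex.exp_sub, hL.exp_eq _ (log_le_re_log_add hR hz a), Complex.exp_add,
    Complex.exp_log hz0, bivariateGradient_rotate, Complex.exp_neg, div_eq_inv_mul,
    mul_comm z]

theorem continuousOn_frameLog (hL : IsGradLog f R L) (a : ℝ) :
    ContinuousOn (frameLog L a) Complex.slitPlane :=
  (hL.continuous.comp_continuousOn
    ((continuousOn_id.clog fun _ hz => hz).add continuousOn_const)).sub continuousOn_const

theorem isHalfPlaneLog_frameLog (hL : IsGradLog f R L) (hR : 0 < R) (a : ℝ) :
    IsHalfPlaneLog (rotate a f) R (frameLog L a) where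
  continuousOn := (hL.continuousOn_frameLog a).mono fun _ hz => Or.inl (hR.trans_le hz)
  exp_eq z hz := hL.exp_frameLog hR a (le_trans hz (Complex.re_le_norm z))

end IsGradLog

theorem eventually_derivative_rotate_ne_zero (hdeg : f.totalDegree ≠ 0) {a : ℝ}
    (ha : topCoeff a f ≠ 0) {K : Set ℝ} (hK : IsCompact K) :
    ∀ᶠ y in atTop, ∀ x ∈ K, (rotate a f).derivative.evalEval x y ≠ 0 := by
  obtain ⟨n, hn⟩ := Nat.exists_eq_succ_of_ne_zero hdeg
  have hcoeff : (rotate a f).derivative.coeff n = Polynomial.C (topCoeff a f * (n + 1)) := by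
    rw [Polynomial.coeff_derivative, ← Nat.succ_eq_add_one, ← hn, coeff_rotate_totalDegree]
    simp
  have hnat : (rotate a f).derivative.natDegree ≤ n :=
    (Polynomial.natDegree_derivative_le _).trans
      (Nat.sub_le_of_le_add ((natDegree_rotate_le a f).trans_eq hn))
  have hne : topCoeff a f * (n + 1) ≠ 0 := mul_ne_zero ha (Nat.cast_add_one_ne_zero n)
  filter_upwards [(eventually_evalEval_mul_pos hnat hne hcoeff hK).filter_mono
    IsOrderBornology.atTop_le_cobounded] with y hy x hx
  exact left_ne_zero_of_mul (hy x hx).ne'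

theorem IsGradLog.exists_forall_halfTurns_frameLog_eq (hL : IsGradLog f R L) (hR : 0 < R)
    (hdeg : f.totalDegree ≠ 0) {a : ℝ} (ha : topCoeff a f ≠ 0) (x x' : ℝ) :
    ∃ Y, ∀ y, Y ≤ y → ∀ y', Y ≤ y' →
      halfTurns (frameLog L a ⟨x, y⟩).im = halfTurns (frameLog L a ⟨x', y'⟩).im := by
  obtain ⟨Y, hY⟩ := eventually_atTop.mp
    ((eventually_derivative_rotate_ne_zero hdeg ha isCompact_uIcc).and (eventually_ge_atTop R))
  let S : Set ℂ := Set.uIcc x x' ×ℂ Set.Ici Y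
  have hR_le {z : ℂ} (hz : z ∈ S) : R ≤ z.im := (hY z.im hz.2).2
  have hcont : ContinuousOn (fun z => (frameLog L a z).im) S :=
    Complex.continuous_im.comp_continuousOn
      ((hL.continuousOn_frameLog a).mono fun z hz => Or.inr (hR.trans_le (hR_le hz)).ne')
  have hsin : ∀ z ∈ S, Real.sin (frameLog L a z).im ≠ 0 := fun z hz => by
    have him := congrArg Complex.im
      (hL.exp_frameLog hR a ((hR_le hz).trans (Complex.im_le_norm z)))
    rw [Complex.exp_im] at him
    exact right_ne_zero_of_mul (him.trans_ne ((hY z.im hz.2).1 z.re hz.1))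
  have hS : IsPreconnected S :=
    (((convex_uIcc x x').is_linear_preimage Complex.reLm.isLinear).inter
      ((convex_Ici Y).is_linear_preimage Complex.imLm.isLinear)).isPreconnected
  exact ⟨Y, fun y hy y' hy' => halfTurns_eq_of_isPreconnected hS hcont hsin
    ⟨Set.left_mem_uIcc, hy⟩ ⟨Set.right_mem_uIcc, hy'⟩⟩

theorem IsGradLog.exists_eventually_halfTurns_frameLog_eq (hL : IsGradLog f R L) (hR : 0 < R)
    (hdeg : f.totalDegree ≠ 0) {a : ℝ} (ha : topCoeff a f ≠ 0) :
    ∃ n : ℤ, ∀ x, ∀ᶠ y in atTop, halfTurns (frameLog L a ⟨x, y⟩).im = n := by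
  obtain ⟨Y₀, hY₀⟩ := hL.exists_forall_halfTurns_frameLog_eq hR hdeg ha 0 0
  refine ⟨halfTurns (frameLog L a ⟨0, Y₀⟩).im, fun x => ?_⟩
  obtain ⟨Y, hY⟩ := hL.exists_forall_halfTurns_frameLog_eq hR hdeg ha x 0
  filter_upwards [eventually_ge_atTop Y, eventually_ge_atTop Y₀] with y hy hy₀
  exact (hY y hy y hy).trans (hY₀ y hy₀ Y₀ le_rfl)

theorem eventually_halfTurns_frameLog_add_pi {a : ℝ} {n : ℤ}
    (hn : ∀ x, ∀ᶠ y in atTop, halfTurns (frameLog L a ⟨x, y⟩).im = n) (x : ℝ) :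
    ∀ᶠ y in atBot, halfTurns (frameLog L (a + Real.pi) ⟨x, y⟩).im = n - 1 := by
  filter_upwards [tendsto_neg_atBot_atTop.eventually (hn (-x)), eventually_lt_atBot 0]
    with y hy hneg
  have hz : -(⟨x, y⟩ : ℂ) = ⟨-x, -y⟩ := Complex.ext rfl rfl
  have him : (frameLog L (a + Real.pi) ⟨x, y⟩).im =
      (frameLog L a ⟨-x, -y⟩).im + (-1 : ℤ) * Real.pi := by
    rw [frameLog_add_pi L a hneg, hz]
    simp [sub_eq_add_neg]
  rw [him, halfTurns_add_int_mul_pi, hy, sub_eq_add_neg]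

theorem IsGradLog.halfTurns_sub_le_max (hL : IsGradLog f R L) (hR : 0 < R)
    (hdeg : f.totalDegree ≠ 0) {a : ℝ} (ha : topCoeff (a + Real.pi) f ≠ 0) {m n : ℤ}
    (hm : ∀ x, ∀ᶠ y in atTop, halfTurns (frameLog L a ⟨x, y⟩).im = m)
    (hn : ∀ x, ∀ᶠ y in atTop, halfTurns (frameLog L (a + Real.pi) ⟨x, y⟩).im = n) :
    n - (m - 1) ≤ max 1 ((f.totalDegree : ℤ) - 3) := by
  obtain ⟨k, hk⟩ := Nat.exists_eq_succ_of_ne_zero hdeg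
  have hcoeff := coeff_rotate_totalDegree (a + Real.pi) f
  have hnat := natDegree_rotate_le (a + Real.pi) f
  rw [hk] at hcoeff hnat
  have hle := (hL.isHalfPlaneLog_frameLog hR (a + Real.pi)).sub_le_max hnat hcoeff ha
    (fun x _ => hn x) (fun x _ => eventually_halfTurns_frameLog_add_pi hm x)
  omega

theorem halfTurns_frameLog_add_two_pi {i : ℤ}
    (hi : ∀ w : ℂ, Real.log R ≤ w.re →
      L (w + 2 * Real.pi * Complex.I) = L w + i * (2 * Real.pi * Complex.I))
    (hR : 0 < R) (a : ℝ) {z : ℂ} (hz : R ≤ ‖z‖) :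
    halfTurns (frameLog L (a + Real.pi + Real.pi) z).im =
      halfTurns (frameLog L a z).im + 2 * (i - 1) := by
  have him : (frameLog L (a + Real.pi + Real.pi) z).im =
      (frameLog L a z).im + (2 * (i - 1) : ℤ) * Real.pi := by
    have hlog : Complex.log z + ((a + Real.pi + Real.pi : ℝ) : ℂ) * Complex.I =
        Complex.log z + a * Complex.I + 2 * Real.pi * Complex.I := by
      push_cast
      ring
    rw [frameLog, hlog, hi _ (log_le_re_log_add hR hz a), frameLog]
    simp only [Complex.ofReal_add, Complex.sub_im, Complex.add_im, Complex.mul_im,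
      Complex.intCast_re, Complex.mul_re, Complex.re_ofNat, Complex.ofReal_re, Complex.im_ofNat,
      Complex.ofReal_im, mul_zero, sub_zero, Complex.I_im, mul_one, zero_mul, add_zero,
      Complex.I_re, Complex.intCast_im, sub_self, Complex.add_re, Int.cast_mul, Int.cast_ofNat,
      Int.cast_sub, Int.cast_one]
    ring
  rw [him, halfTurns_add_int_mul_pi]

theorem totalDegree_ne_zero_of_criticalPts_bounded
    (hadm : ∀ p : ℝ × ℝ, IsCriticalPt f p → p.1 ^ 2 + p.2 ^ 2 < R ^ 2) : f.totalDegree ≠ 0 := by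
  intro hzero
  obtain ⟨r, hr⟩ : ∃ r, f = C r := ⟨_, totalDegree_eq_zero_iff_eq_C.mp hzero⟩
  have hlt := hadm (R, 0) (by simp [IsCriticalPt, hr, evalP])
  simp at hlt

end Frames

theorem index_le_max_one_degree_sub_three_general (f : MvPolynomial (Fin 2) ℝ) (R : ℝ) (hR : 0 < R)
    (hadm : ∀ p : ℝ × ℝ, IsCriticalPt f p → p.1 ^ 2 + p.2 ^ 2 < R ^ 2) :
    gradIndex f R ≤ max 1 ((f.totalDegree : ℝ) - 3) := by
  have hdeg : f.totalDegree ≠ 0 := totalDegree_ne_zero_of_criticalPts_bounded hadm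
  obtain ⟨L, hL⟩ := exists_isGradLog hR hadm
  obtain ⟨i, hindex, hi⟩ := hL.exists_int_eq_gradIndex hR
  obtain ⟨a, h₀⟩ := exists_topCoeff_ne_zero (ne_of_apply_ne totalDegree hdeg : f ≠ 0)
  have h₁ : topCoeff (a + Real.pi) f ≠ 0 := topCoeff_add_pi_ne_zero h₀
  have h₂ : topCoeff (a + Real.pi + Real.pi) f ≠ 0 := topCoeff_add_pi_ne_zero h₁
  obtain ⟨n₀, hn₀⟩ := hL.exists_eventually_halfTurns_frameLog_eq hR hdeg h₀
  obtain ⟨n₁, hn₁⟩ := hL.exists_eventually_halfTurns_frameLog_eq hR hdeg h₁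
  obtain ⟨n₂, hn₂⟩ := hL.exists_eventually_halfTurns_frameLog_eq hR hdeg h₂
  have hle₁ := hL.halfTurns_sub_le_max hR hdeg h₁ hn₀ hn₁
  have hle₂ := hL.halfTurns_sub_le_max hR hdeg h₂ hn₁ hn₂
  have hturn : n₂ = n₀ + 2 * (i - 1) := by
    obtain ⟨y, hy₀, hy₂, hy⟩ := ((hn₀ 0).and ((hn₂ 0).and (eventually_ge_atTop R))).exists
    rw [← hy₀, ← hy₂]
    exact halfTurns_frameLog_add_two_pi hi hR a (hy.trans (Complex.im_le_norm ⟨0, y⟩))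
  have hle : i ≤ max 1 ((f.totalDegree : ℤ) - 3) := by omega
  rw [hindex]
  exact_mod_cast hle

theorem index_le_max_one_degree_sub_three
    (f : MvPolynomial (Fin 2) ℝ) (d : ℕ) (hd : f.totalDegree = d) (hd1 : 1 ≤ d)
    (hfin : {p : ℝ × ℝ | IsCriticalPt f p}.Finite)
    (R : ℝ) (hR : 0 < R)
    (hadm : ∀ p : ℝ × ℝ, IsCriticalPt f p → p.1 ^ 2 + p.2 ^ 2 < R ^ 2)
    (i : ℤ) (hi : (i : ℝ) = gradIndex f R) :
    i ≤ max 1 ((d : ℤ) - 3) := by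
  have hle := index_le_max_one_degree_sub_three_general f R hR hadm
  rw [← hi, hd] at hle
  exact_mod_cast hle
end

section
/- Let f : ℝ² → ℝ be a nonconstant real polynomial function in two variables with only finitely many critical points. If every level set {(x,y) : f(x,y) = t}, t ∈ ℝ, is compact, then for every admissible radius R the index i of grad f around the circle of radius R equals 1. -/
open MvPolynomial Filter

/-!
Outside a large disc the plane is connected, so a function with compact level sets is there either
above or below any given value. Hence it tends to `+∞`, or tends to `-∞`, or is bounded; a bounded
polynomial is constant, and then one of its level sets is the whole plane. Passing to `-f`, which
multiplies the gradient by `-1`, we may assume that `f` tends to `+∞`.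

Let `T z = z - ε ∇f z` be a gradient-descent step, with `ε` so small that on a compact sublevel set
all steps of length at most `ε` decrease `f`. The field `z - T z = ε ∇f z` has the winding number of
`∇f` on a large circle. Along that circle `z - Tⁿ⁺¹ z` is homotopic to `z - Tⁿ⁺² z`, by letting the
length of the last step run from `0` to `ε`: the intermediate fields never vanish because `f` has
strictly decreased. Since `∇f` does not vanish outside the disc of radius `R`, a large iterate of
`T` maps the circle into the open disc it bounds, and then `z - Tⁿ z` is homotopic to `z`, whose
winding number is `1`.
-/

section Winding

open scoped Topology Real

/-- The winding number around `0` of a loop parametrised by `[0, 2π]`, as the integral of its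
logarithmic derivative. It carries its usual meaning for the loops satisfying `IsC1Loop` and
avoiding `0`, and is left complex-valued because integrality is never needed. -/
noncomputable def windingNumber (γ : ℝ → ℂ) : ℂ :=
  (2 * π * Complex.I)⁻¹ * ∫ t in (0 : ℝ)..(2 * π), deriv γ t / γ t

/-- A `C¹` map of the line into the plane whose restriction to `[0, 2π]` closes up. The
derivatives at the two end points need not agree. -/
structure IsC1Loop (γ : ℝ → ℂ) : Prop where
  contDiff : ContDiff ℝ 1 γ
  closed : γ 0 = γ (2 * π)

namespace IsC1Loop

lemma circleMap (c : ℂ) (R : ℝ) : IsC1Loop (circleMap c R) :=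
  ⟨contDiff_circleMap c R, by simpa using (periodic_circleMap c R 0).symm⟩

lemma comp {γ : ℝ → ℂ} {G : ℂ → ℂ} (hγ : IsC1Loop γ) (hG : ContDiff ℝ 1 G) :
    IsC1Loop (fun t => G (γ t)) :=
  ⟨hG.comp hγ.contDiff, by rw [hγ.closed]⟩

lemma sub {γ η : ℝ → ℂ} (hγ : IsC1Loop γ) (hη : IsC1Loop η) : IsC1Loop (fun t => γ t - η t) :=
  ⟨hγ.contDiff.sub hη.contDiff, by rw [hγ.closed, hη.closed]⟩

lemma intervalIntegrable_logDeriv {γ : ℝ → ℂ} (hγ : IsC1Loop γ) (h0 : ∀ t, γ t ≠ 0) (a b : ℝ) :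
    IntervalIntegrable (fun t => deriv γ t / γ t) MeasureTheory.volume a b :=
  ((hγ.contDiff.continuous_deriv le_rfl).div hγ.contDiff.continuous h0).intervalIntegrable a b

end IsC1Loop

lemma windingNumber_circleMap {R : ℝ} (hR : R ≠ 0) : windingNumber (circleMap 0 R) = 1 := by
  have hlog (t : ℝ) : deriv (circleMap 0 R) t / circleMap 0 R t = Complex.I := by
    rw [deriv_circleMap, mul_div_cancel_left₀ _ (circleMap_ne_center hR)]
  simp only [windingNumber, hlog, intervalIntegral.integral_const, sub_zero]
  rw [Complex.real_smul, Complex.ofReal_mul, Complex.ofReal_ofNat]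
  exact inv_mul_cancel₀ Complex.two_pi_I_ne_zero

lemma windingNumber_const_mul {c : ℂ} (hc : c ≠ 0) (γ : ℝ → ℂ) :
    windingNumber (fun t => c * γ t) = windingNumber γ := by
  simp only [windingNumber, deriv_const_mul_field, mul_div_mul_left _ _ hc]

lemma windingNumber_eq_of_div_mem_slitPlane {γ η : ℝ → ℂ} (hγ : IsC1Loop γ) (hη : IsC1Loop η)
    (hγ0 : ∀ t, γ t ≠ 0) (hη0 : ∀ t, η t ≠ 0)
    (hslit : ∀ t ∈ Set.Icc 0 (2 * π), η t / γ t ∈ Complex.slitPlane) :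
    windingNumber η = windingNumber γ := by
  have hintη := hη.intervalIntegrable_logDeriv hη0 0 (2 * π)
  have hintγ := hγ.intervalIntegrable_logDeriv hγ0 0 (2 * π)
  have hlog : ∀ t ∈ Set.uIcc 0 (2 * π), HasDerivAt (fun t => Complex.log (η t / γ t))
      (deriv η t / η t - deriv γ t / γ t) t := by
    intro t ht
    rw [Set.uIcc_of_le Real.two_pi_pos.le] at ht
    have hdη := (hη.contDiff.differentiable one_ne_zero t).hasDerivAt
    have hdγ := (hγ.contDiff.differentiable one_ne_zero t).hasDerivAt
    convert! (hdη.div hdγ (hγ0 t)).clog_real (hslit t ht) using 1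
    have := hη0 t
    have := hγ0 t
    simp only [Pi.div_apply]
    field_simp
  have hdiff := intervalIntegral.integral_eq_sub_of_hasDerivAt hlog (hintη.sub hintγ)
  rw [intervalIntegral.integral_sub hintη hintγ, ← hη.closed, ← hγ.closed, sub_self,
    sub_eq_zero] at hdiff
  rw [windingNumber, windingNumber, hdiff]

theorem windingNumber_eq_of_homotopy {X : Type*} [TopologicalSpace X] [PreconnectedSpace X]
    {H : X → ℝ → ℂ} (hH : Continuous fun p : X × ℝ => H p.1 p.2) (hloop : ∀ x, IsC1Loop (H x))
    (h0 : ∀ x t, H x t ≠ 0) (x y : X) : windingNumber (H x) = windingNumber (H y) := by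
  suffices hloc : IsLocallyConstant fun x => windingNumber (H x) from
    hloc.apply_eq_of_preconnectedSpace x y
  rw [IsLocallyConstant.iff_eventually_eq]
  intro x
  have hslit : ∀ᶠ y in 𝓝 x, ∀ t ∈ Set.Icc 0 (2 * π), H y t / H x t ∈ Complex.slitPlane := by
    refine isCompact_Icc.eventually_forall_of_forall_eventually fun t _ => ?_
    have hquot : ContinuousAt (fun p : X × ℝ => H p.1 p.2 / H x p.2) (x, t) :=
      hH.continuousAt.div (hH.comp (.prodMk_right x) |>.continuousAt.comp continuousAt_snd) (h0 x t)
    refine hquot.eventually_mem (Complex.isOpen_slitPlane.mem_nhds ?_)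
    rw [div_self (h0 x t)]
    exact Complex.one_mem_slitPlane
  exact hslit.mono fun y hy =>
    windingNumber_eq_of_div_mem_slitPlane (hloop x) (hloop y) (h0 x) (h0 y) hy

lemma windingNumber_sub_of_norm_lt {γ η : ℝ → ℂ} (hγ : IsC1Loop γ) (hη : IsC1Loop η)
    (h : ∀ t, ‖η t‖ < ‖γ t‖) : windingNumber (fun t => γ t - η t) = windingNumber γ := by
  have hcγ := hγ.contDiff.continuous
  have hcη := hη.contDiff.continuous
  have hhom := windingNumber_eq_of_homotopy (X := unitInterval)
    (H := fun s t => γ t - (s : ℝ) • η t) (by fun_prop)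
    (fun s => hγ.sub (hη.comp (contDiff_const_smul (s : ℝ))))
    (fun s t h0 => ?_) 1 0
  · simpa using hhom
  · refine (h t).not_ge ?_
    rw [sub_eq_zero.1 h0, norm_smul, Real.norm_of_nonneg s.2.1]
    exact mul_le_of_le_one_left (norm_nonneg _) s.2.2

lemma windingNumber_comp_circleMap_eq {G : ℂ → ℂ} (hG : ContDiff ℝ 1 G) {R ρ : ℝ}
    (h0 : ∀ z, R ≤ ‖z‖ → G z ≠ 0) (hρ : R ≤ ρ) :
    windingNumber (fun t => G (circleMap 0 R t)) =
      windingNumber (fun t => G (circleMap 0 ρ t)) := by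
  have : PreconnectedSpace (Set.Ici R) := Subtype.preconnectedSpace isPreconnected_Ici
  have hcG := hG.continuous
  refine windingNumber_eq_of_homotopy (X := Set.Ici R)
    (H := fun r t => G (circleMap 0 r t)) (by unfold circleMap; fun_prop)
    (fun r => (IsC1Loop.circleMap 0 r).comp hG) (fun r t => h0 _ ?_) ⟨R, Set.self_mem_Ici⟩ ⟨ρ, hρ⟩
  rw [norm_circleMap_zero]
  exact (Set.mem_Ici.1 r.2).trans (le_abs_self _)

end Winding

section Descent

open scoped Topology InnerProductSpace

variable {E : Type*} [NormedAddCommGroup E]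

/-- The endpoint of the gradient-descent step of length `r` from `y`, for a gradient field `G`. -/
def gradientStep [NormedSpace ℝ E] (G : E → E) (r : ℝ) (y : E) : E := y - r • G y

/-- Sufficient decrease (Armijo's condition with constant `1/2`) on the sublevel set `{F ≤ C}`,
for every step length in `[0, ε]`. -/
def SufficientDecrease [NormedSpace ℝ E] (F : E → ℝ) (G : E → E) (C ε : ℝ) : Prop :=
  ∀ y, F y ≤ C → ∀ r ∈ Set.Icc 0 ε, F (gradientStep G r y) ≤ F y - r / 2 * ‖G y‖ ^ 2

@[simp]
lemma gradientStep_zero [NormedSpace ℝ E] (G : E → E) (y : E) : gradientStep G 0 y = y := by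
  simp [gradientStep]

lemma contDiff_gradientStep [NormedSpace ℝ E] {G : E → E} {n : WithTop ℕ∞} (hG : ContDiff ℝ n G)
    (r : ℝ) : ContDiff ℝ n (gradientStep G r) :=
  contDiff_id.sub (hG.const_smul r)

lemma contDiff_iterate_gradientStep [NormedSpace ℝ E] {G : E → E} {m : WithTop ℕ∞}
    (hG : ContDiff ℝ m G) (r : ℝ) (n : ℕ) : ContDiff ℝ m (gradientStep G r)^[n] := by
  induction n with
  | zero => exact contDiff_id
  | succ n ih => exact ih.comp (contDiff_gradientStep hG r)

lemma continuous_gradientStep [NormedSpace ℝ E] {G : E → E} (hG : Continuous G) :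
    Continuous fun p : ℝ × E => gradientStep G p.1 p.2 := by
  unfold gradientStep
  fun_prop

section Gradient

variable [InnerProductSpace ℝ E]

lemma half_norm_sq_le_inner {a b : E} (h : ‖a - b‖ ≤ ‖b‖ / 2) : ‖b‖ ^ 2 / 2 ≤ ⟪a, b⟫_ℝ := by
  have hcs : -(‖a - b‖ * ‖b‖) ≤ ⟪a - b, b⟫_ℝ := neg_le_of_abs_le (abs_real_inner_le_norm _ _)
  rw [inner_sub_left, real_inner_self_eq_norm_sq] at hcs
  nlinarith [norm_nonneg b]

variable [CompleteSpace E] {F : E → ℝ} {G : E → E}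

lemma hasDerivAt_gradientStep (hgrad : ∀ z, HasGradientAt F (G z) z) (y : E) (r : ℝ) :
    HasDerivAt (fun r => F (gradientStep G r y)) (-⟪G (gradientStep G r y), G y⟫_ℝ) r := by
  have hline : HasDerivAt (fun r : ℝ => gradientStep G r y) (-G y) r := by
    simpa [gradientStep] using ((hasDerivAt_id r).smul_const (G y)).const_sub y
  simpa [Function.comp_def] using! (hgrad _).hasFDerivAt.comp_hasDerivAt r hline

lemma gradientStep_le_of_lipschitzOnWith (hgrad : ∀ z, HasGradientAt F (G z) z) {s : Set E}
    (hs : Convex ℝ s) {L : NNReal} (hG : LipschitzOnWith L G s) {y : E} {r : ℝ} (hr : 0 ≤ r)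
    (hy : y ∈ s) (hyr : gradientStep G r y ∈ s) (hrL : r * L ≤ 1 / 2) :
    F (gradientStep G r y) ≤ F y - r / 2 * ‖G y‖ ^ 2 := by
  have hφ := hasDerivAt_gradientStep hgrad y
  have hderiv : ∀ q ∈ Set.Ioo 0 r,
      deriv (fun q => F (gradientStep G q y)) q ≤ -(‖G y‖ ^ 2 / 2) := by
    rintro q ⟨hq0, hqr⟩
    have hqs : gradientStep G q y ∈ s := by
      refine (Convex.segment_subset hs hy hyr) ⟨1 - q / r, q / r, ?_, by positivity, by ring, ?_⟩
      · exact sub_nonneg.2 (div_le_one_of_le₀ hqr.le hr)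
      · have : r ≠ 0 := (hq0.trans hqr).ne'
        simp only [gradientStep]
        match_scalars <;> field_simp
        ring
    have hclose : ‖G (gradientStep G q y) - G y‖ ≤ ‖G y‖ / 2 :=
      calc ‖G (gradientStep G q y) - G y‖ ≤ L * ‖gradientStep G q y - y‖ :=
            hG.norm_sub_le hqs hy
        _ = q * L * ‖G y‖ := by
            rw [gradientStep, sub_sub_cancel_left, norm_neg, norm_smul, Real.norm_of_nonneg hq0.le]
            ring
        _ ≤ r * L * ‖G y‖ := by gcongr
        _ ≤ 1 / 2 * ‖G y‖ := by gcongr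
        _ = ‖G y‖ / 2 := by ring
    rw [(hφ q).deriv]
    exact neg_le_neg (half_norm_sq_le_inner hclose)
  have hmean := (convex_Icc 0 r).image_sub_le_mul_sub_of_deriv_le
    (fun q _ => (hφ q).continuousAt.continuousWithinAt)
    (fun q _ => (hφ q).differentiableAt.differentiableWithinAt)
    (by rwa [interior_Icc]) 0 ⟨le_rfl, hr⟩ r ⟨hr, le_rfl⟩ hr
  rw [gradientStep_zero] at hmean
  linarith

lemma exists_sufficientDecrease (hgrad : ∀ z, HasGradientAt F (G z) z) (hG : LocallyLipschitz G)
    {C : ℝ} (hC : IsCompact {y | F y ≤ C}) : ∃ ε > 0, SufficientDecrease F G C ε := by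
  have hev : ∀ᶠ r in 𝓝 (0 : ℝ), ∀ y ∈ {y | F y ≤ C}, 0 ≤ r →
      F (gradientStep G r y) ≤ F y - r / 2 * ‖G y‖ ^ 2 := by
    refine hC.eventually_forall_of_forall_eventually fun y₀ _ => ?_
    obtain ⟨L, t, ht, hL⟩ := hG y₀
    obtain ⟨δ, hδ, hball⟩ := Metric.mem_nhds_iff.1 ht
    have hfst : ∀ᶠ p : ℝ × E in 𝓝 (0, y₀), p.2 ∈ Metric.ball y₀ δ :=
      continuousAt_snd.eventually_mem (Metric.ball_mem_nhds y₀ hδ)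
    have hsnd : ∀ᶠ p : ℝ × E in 𝓝 (0, y₀), gradientStep G p.1 p.2 ∈ Metric.ball y₀ δ :=
      (continuous_gradientStep hG.continuous).continuousAt.eventually_mem
        (by simpa using Metric.ball_mem_nhds y₀ hδ)
    have hsmall : ∀ᶠ p : ℝ × E in 𝓝 (0, y₀), p.1 * L < 1 / 2 :=
      (continuous_fst.mul continuous_const).continuousAt.eventually_lt_const (by simp)
    filter_upwards [hfst, hsnd, hsmall] with p hp hp' hpL hp0
    exact gradientStep_le_of_lipschitzOnWith hgrad (convex_ball y₀ δ) (hL.mono hball) hp0 hp hp'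
      hpL.le
  obtain ⟨ε, hε, hball⟩ := Metric.nhds_basis_closedBall.eventually_iff.1 hev
  refine ⟨ε, hε, fun y hy r hr => hball ?_ y hy hr.1⟩
  simpa [abs_of_nonneg hr.1] using hr.2

end Gradient

namespace SufficientDecrease

variable [NormedSpace ℝ E] {F : E → ℝ} {G : E → E} {C ε : ℝ}

lemma iterate_le (h : SufficientDecrease F G C ε) (hε : 0 ≤ ε) {x : E} (hx : F x ≤ C) (n : ℕ) :
    F ((gradientStep G ε)^[n] x) ≤ F x := by
  induction n with
  | zero => exact le_rfl
  | succ n ih =>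
    rw [Function.iterate_succ_apply']
    refine (h _ (ih.trans hx) ε ⟨hε, le_rfl⟩).trans ((sub_le_self _ ?_).trans ih)
    positivity

lemma gradientStep_iterate_lt (h : SufficientDecrease F G C ε) (hε : 0 < ε) {x : E}
    (hx : F x ≤ C) (hGx : G x ≠ 0) (n : ℕ) {r : ℝ} (hr : r ∈ Set.Icc 0 ε) :
    F (gradientStep G r ((gradientStep G ε)^[n + 1] x)) < F x := by
  have hfirst : F (gradientStep G ε x) < F x :=
    (h x hx ε ⟨hε.le, le_rfl⟩).trans_lt (sub_lt_self _ (by positivity))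
  have hiter := h.iterate_le hε.le (hfirst.le.trans hx) n
  rw [Function.iterate_succ_apply]
  refine (h _ (hiter.trans (hfirst.le.trans hx)) r hr).trans_lt
    ((sub_le_self _ ?_).trans_lt (hiter.trans_lt hfirst))
  have := hr.1
  positivity

lemma iterate_le_max (h : SufficientDecrease F G C ε) (hε : 0 ≤ ε) {a δ : ℝ} (hδ : 0 ≤ δ)
    (hG : ∀ y, a ≤ F y → F y ≤ C → δ ≤ ‖G y‖) {x : E} (hx : F x ≤ C) (n : ℕ) :
    F ((gradientStep G ε)^[n] x) ≤ max a (C - n * (ε / 2 * δ ^ 2)) := by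
  induction n with
  | zero => exact le_max_of_le_right (by simpa using hx)
  | succ n ih =>
    rw [Function.iterate_succ_apply']
    set y := (gradientStep G ε)^[n] x
    have hyC : F y ≤ C := (h.iterate_le hε hx n).trans hx
    have hstep := h y hyC ε ⟨hε, le_rfl⟩
    rcases le_total (F y) a with hya | hya
    · exact le_max_of_le_left (hstep.trans ((sub_le_self _ (by positivity)).trans hya))
    · have hdrop : ε / 2 * δ ^ 2 ≤ ε / 2 * ‖G y‖ ^ 2 := by gcongr; exact hG y hya hyC
      have hnonneg : 0 ≤ ε / 2 * δ ^ 2 := by positivity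
      rw [le_max_iff] at ih ⊢
      push_cast
      exact ih.imp (fun _ => by linarith) (fun _ => by linarith)

lemma eventually_iterate_le (h : SufficientDecrease F G C ε) (hε : 0 < ε) {a δ : ℝ} (hδ : 0 < δ)
    (hG : ∀ y, a ≤ F y → F y ≤ C → δ ≤ ‖G y‖) :
    ∀ᶠ n in atTop, ∀ x, F x ≤ C → F ((gradientStep G ε)^[n] x) ≤ a := by
  have hlim : Tendsto (fun n : ℕ => (n : ℝ) * (ε / 2 * δ ^ 2)) atTop atTop :=
    tendsto_natCast_atTop_atTop.atTop_mul_const (by positivity)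
  filter_upwards [hlim.eventually_ge_atTop (C - a)] with n hn x hx
  exact (h.iterate_le_max hε.le hδ.le hG hx n).trans (max_le le_rfl (by linarith))

end SufficientDecrease

end Descent

section Coercive

lemma isCompact_sublevel_of_tendsto_cocompact_atTop {X : Type*} [TopologicalSpace X] {F : X → ℝ}
    (hF : Continuous F) (hcoer : Tendsto F (cocompact X) atTop) (C : ℝ) :
    IsCompact {x | F x ≤ C} := by
  obtain ⟨K, hK, hKF⟩ := mem_cocompact.1 (hcoer.eventually_gt_atTop C)
  refine hK.of_isClosed_subset (isClosed_le hF continuous_const) fun x hx => ?_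
  by_contra hxK
  exact (hKF hxK : C < F x).not_ge (show F x ≤ C from hx)

variable {E : Type*} [NormedAddCommGroup E] [NormedSpace ℝ E]

lemma isPreconnected_compl_closedBall_zero (hE : 1 < Module.rank ℝ E) {M : ℝ} (hM : 0 ≤ M) :
    IsPreconnected (Metric.closedBall (0 : E) M)ᶜ := by
  have hpolar : (Metric.closedBall (0 : E) M)ᶜ =
      (fun p : ℝ × E => p.1 • p.2) '' (Set.Ioi M ×ˢ Metric.sphere 0 1) := by
    ext z
    simp only [Set.mem_compl_iff, mem_closedBall_zero_iff, not_le, Set.mem_image, Set.mem_prod,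
      Set.mem_Ioi, mem_sphere_zero_iff_norm, Prod.exists]
    constructor
    · intro hz
      have hz0 : ‖z‖ ≠ 0 := (hM.trans_lt hz).ne'
      refine ⟨‖z‖, ‖z‖⁻¹ • z, ⟨hz, ?_⟩, smul_inv_smul₀ hz0 z⟩
      rw [norm_smul, norm_inv, norm_norm, inv_mul_cancel₀ hz0]
    · rintro ⟨r, w, ⟨hr, hw⟩, rfl⟩
      rwa [norm_smul, hw, mul_one, Real.norm_of_nonneg (hM.trans hr.le)]
  rw [hpolar]
  exact (isPreconnected_Ioi.prod (isPreconnected_sphere hE 0 1)).image _ (by fun_prop)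

variable [ProperSpace E] {F : E → ℝ}

lemma eventually_lt_or_eventually_gt_of_isCompact_level (hE : 1 < Module.rank ℝ E)
    (hF : Continuous F) {c : ℝ} (hc : IsCompact {z | F z = c}) :
    (∀ᶠ z in cocompact E, F z < c) ∨ ∀ᶠ z in cocompact E, c < F z := by
  obtain ⟨M, hM, hcM⟩ := hc.isBounded.subset_closedBall_lt 0 0
  have houter : ∀ᶠ z in cocompact E, z ∈ (Metric.closedBall (0 : E) M)ᶜ :=
    (isCompact_closedBall 0 M).compl_mem_cocompact
  by_contra! ⟨hge, hle⟩
  obtain ⟨z, hz, hzM⟩ := (hge.and_eventually houter).exists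
  obtain ⟨w, hw, hwM⟩ := (hle.and_eventually houter).exists
  obtain ⟨y, hyM, hy⟩ := (isPreconnected_compl_closedBall_zero hE hM.le).intermediate_value
    hwM hzM hF.continuousOn ⟨hw, hz⟩
  exact hyM (hcM hy)

lemma tendsto_cocompact_or_bounded_of_isCompact_levels (hE : 1 < Module.rank ℝ E)
    (hF : Continuous F) (hlevel : ∀ c, IsCompact {z | F z = c}) :
    Tendsto F (cocompact E) atTop ∨ Tendsto F (cocompact E) atBot ∨ ∃ B, ∀ z, |F z| ≤ B := by
  have hdich c := eventually_lt_or_eventually_gt_of_isCompact_level hE hF (hlevel c)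
  by_cases htop : ∀ c, ∀ᶠ z in cocompact E, c < F z
  · exact .inl (tendsto_atTop.2 fun c => (htop c).mono fun _ => le_of_lt)
  by_cases hbot : ∀ c, ∀ᶠ z in cocompact E, F z < c
  · exact .inr (.inl (tendsto_atBot.2 fun c => (hbot c).mono fun _ => le_of_lt))
  rw [not_forall] at htop hbot
  obtain ⟨⟨b, hb⟩, ⟨a, ha⟩⟩ := And.intro htop hbot
  obtain ⟨K, hK, hKF⟩ := mem_cocompact.1
    (((hdich b).resolve_right hb).and ((hdich a).resolve_left ha))
  obtain ⟨B, hB⟩ := hK.exists_bound_of_continuousOn hF.continuousOn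
  refine .inr (.inr ⟨max B (max |a| |b|), fun z => ?_⟩)
  by_cases hz : z ∈ K
  · exact le_max_of_le_left (hB z hz)
  · obtain ⟨hzb, haz⟩ : F z < b ∧ a < F z := hKF hz
    exact le_max_of_le_right (abs_le_max_abs_abs haz.le hzb.le)

end Coercive

section GradientWinding

variable {F : ℂ → ℝ} {G : ℂ → ℂ}

lemma windingNumber_sub_iterate_gradientStep {C ε : ℝ} (h : SufficientDecrease F G C ε)
    (hε : 0 < ε) (hG : ContDiff ℝ 1 G) {γ : ℝ → ℂ} (hγ : IsC1Loop γ) (hγC : ∀ t, F (γ t) ≤ C)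
    (hGγ : ∀ t, G (γ t) ≠ 0) (n : ℕ) :
    windingNumber (fun t => γ t - (gradientStep G ε)^[n + 1] (γ t)) =
      windingNumber (fun t => G (γ t)) := by
  induction n with
  | zero =>
    simpa [gradientStep] using windingNumber_const_mul (Complex.ofReal_ne_zero.2 hε.ne') _
  | succ n ih =>
    rw [← ih]
    have : PreconnectedSpace (Set.Icc 0 ε) := Subtype.preconnectedSpace isPreconnected_Icc
    have hT : ContDiff ℝ 1 (gradientStep G ε)^[n + 1] := contDiff_iterate_gradientStep hG ε _
    have hcγ := hγ.contDiff.continuous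
    have hcstep := (continuous_gradientStep hG.continuous).comp
      ((continuous_subtype_val (p := (· ∈ Set.Icc 0 ε))).prodMap (hT.continuous.comp hcγ))
    have hhom := windingNumber_eq_of_homotopy (X := Set.Icc 0 ε)
      (H := fun r t => γ t - gradientStep G r ((gradientStep G ε)^[n + 1] (γ t)))
      ((hcγ.comp continuous_snd).sub hcstep)
      (fun r => hγ.sub (hγ.comp ((contDiff_gradientStep hG r).comp hT)))
      (fun r t h0 => ?_) ⟨ε, hε.le, le_rfl⟩ ⟨0, le_rfl, hε.le⟩
    · simpa only [gradientStep_zero, Function.iterate_succ_apply' _ (n + 1)] using hhom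
    · have hlt := h.gradientStep_iterate_lt hε (hγC t) (hGγ t) n r.2
      rw [← sub_eq_zero.1 h0] at hlt
      exact lt_irrefl _ hlt

theorem windingNumber_gradient_comp_circleMap (hgrad : ∀ z, HasGradientAt F (G z) z)
    (hG : ContDiff ℝ 1 G) (hcoer : Tendsto F (cocompact ℂ) atTop) {R : ℝ}
    (h0 : ∀ z, R ≤ ‖z‖ → G z ≠ 0) : windingNumber (fun t => G (circleMap 0 R t)) = 1 := by
  have hF : Continuous F := continuous_iff_continuousAt.2 fun z => (hgrad z).continuousAt
  have hsub := isCompact_sublevel_of_tendsto_cocompact_atTop hF hcoer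
  obtain ⟨b, hb⟩ := (isCompact_closedBall (0 : ℂ) R).bddAbove_image hF.continuousOn
  obtain ⟨ρ, hρ, hbρ⟩ := (hsub (b + 1)).isBounded.subset_ball_lt (max R 0) 0
  obtain ⟨hRρ, hρ0⟩ := max_lt_iff.1 hρ
  obtain ⟨C, hC⟩ := (isCompact_closedBall (0 : ℂ) ρ).bddAbove_image hF.continuousOn
  obtain ⟨ε, hε, hdec⟩ := exists_sufficientDecrease hgrad hG.locallyLipschitz (hsub C)
  have hcircle (t : ℝ) : ‖circleMap 0 ρ t‖ = ρ := by rw [norm_circleMap_zero, abs_of_pos hρ0]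
  have hcircleC (t : ℝ) : F (circleMap 0 ρ t) ≤ C :=
    hC (Set.mem_image_of_mem F (circleMap_mem_closedBall 0 hρ0.le t))
  have houter : ∀ z ∈ {z | b + 1 ≤ F z ∧ F z ≤ C}, 0 < ‖G z‖ := by
    refine fun z hz => norm_pos_iff.2 (h0 z (le_of_not_ge fun hzR => ?_))
    have := hb (Set.mem_image_of_mem F (mem_closedBall_zero_iff.2 hzR))
    linarith [hz.1]
  have hshell : IsCompact {z | b + 1 ≤ F z ∧ F z ≤ C} :=
    (hsub C).inter_left (isClosed_le continuous_const hF)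
  obtain ⟨δ, hδ, hGδ⟩ := hshell.exists_forall_le' hG.continuous.norm.continuousOn houter
  obtain ⟨n, hn⟩ := ((tendsto_add_atTop_nat 1).eventually
    (hdec.eventually_iterate_le hε hδ fun z hz hzC => hGδ z ⟨hz, hzC⟩)).exists
  have hT : ContDiff ℝ 1 (gradientStep G ε)^[n + 1] := contDiff_iterate_gradientStep hG ε _
  have hloop := IsC1Loop.circleMap 0 ρ
  calc windingNumber (fun t => G (circleMap 0 R t))
      = windingNumber (fun t => G (circleMap 0 ρ t)) :=
        windingNumber_comp_circleMap_eq hG h0 hRρ.le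
    _ = windingNumber (fun t => circleMap 0 ρ t - (gradientStep G ε)^[n + 1] (circleMap 0 ρ t)) :=
        (windingNumber_sub_iterate_gradientStep hdec hε hG hloop hcircleC
          (fun t => h0 _ (hRρ.le.trans (hcircle t).ge)) n).symm
    _ = windingNumber (circleMap 0 ρ) := by
        refine windingNumber_sub_of_norm_lt hloop (hloop.comp hT) fun t => ?_
        rw [hcircle]
        exact mem_ball_zero_iff.1 (hbρ (hn _ (hcircleC t)))
    _ = 1 := windingNumber_circleMap hρ0.ne'

end GradientWinding

section MvPolynomial

variable {σ : Type*}

lemma hasFDerivAt_mvPolynomial_eval [Fintype σ] {𝕜 : Type*} [NontriviallyNormedField 𝕜]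
    (f : MvPolynomial σ 𝕜) (x : σ → 𝕜) :
    HasFDerivAt (fun x => eval x f)
      (∑ i, eval x (pderiv i f) • ContinuousLinearMap.proj (R := 𝕜) (φ := fun _ : σ => 𝕜) i) x := by
  induction f using MvPolynomial.induction_on with
  | C a =>
    simp only [eval_C]
    convert! hasFDerivAt_const (𝕜 := 𝕜) a x using 1
    ext v
    simp
  | add p q hp hq =>
    simp only [eval_add]
    convert! hp.add hq using 1
    ext v
    simp [add_mul, Finset.sum_add_distrib]
  | mul_X p j hp =>
    classical
    simp only [eval_mul, eval_X]
    convert! hp.mul (hasFDerivAt_apply (𝕜 := 𝕜) j x) using 1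
    ext v
    simp [Derivation.leibniz, pderiv_X, Pi.single_apply, add_mul, Finset.sum_add_distrib,
      Finset.mul_sum, mul_assoc, apply_ite (eval x), ite_mul]

lemma eq_C_of_bounded_eval (f : MvPolynomial σ ℝ) {B : ℝ} (hB : ∀ x, |eval x f| ≤ B) :
    f = C (eval 0 f) := by
  refine MvPolynomial.funext fun x => ?_
  set P : Polynomial ℝ := aeval (fun i => Polynomial.C (x i) * Polynomial.X) f with hP
  have hPeval (s : ℝ) : P.eval s = eval (fun i => x i * s) f := by
    rw [hP, ← Polynomial.coe_aeval_eq_eval, comp_aeval_apply]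
    simp [aeval_eq_eval]
  have hdeg : P.degree ≤ 0 := P.isBoundedUnder_abs_atTop_iff.1
    (isBoundedUnder_of ⟨B, fun s => by rw [hPeval]; exact hB _⟩)
  have hconst : P.eval 1 = P.eval 0 := by
    rw [Polynomial.eq_C_of_degree_le_zero hdeg, Polynomial.eval_C, Polynomial.eval_C]
  simpa [hPeval, ← Pi.zero_def] using hconst

end MvPolynomial

section PlanePolynomial

/-- The polynomial function of `f` on the plane, identified with `ℂ` by `(x, y) ↦ x + y i`. -/
noncomputable def planeEval (f : MvPolynomial (Fin 2) ℝ) (z : ℂ) : ℝ := evalP f z.re z.im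

/-- The gradient `(f_x, f_y)` as a vector field `f_x + f_y i` on the plane identified with `ℂ`. -/
noncomputable def planeGrad (f : MvPolynomial (Fin 2) ℝ) (z : ℂ) : ℂ :=
  ⟨planeEval (pderiv 0 f) z, planeEval (pderiv 1 f) z⟩

variable (f : MvPolynomial (Fin 2) ℝ)

lemma contDiff_planeEval {n : WithTop ℕ∞} : ContDiff ℝ n (planeEval f) := by
  have hcoord (i : Fin 2) (z : ℂ) : AnalyticAt ℝ (fun z : ℂ => ![z.re, z.im] i) z := by
    fin_cases i
    exacts [Complex.reCLM.analyticAt z, Complex.imCLM.analyticAt z]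
  have han (z : ℂ) : AnalyticAt ℝ (planeEval f) z := by
    simpa [planeEval, evalP, aeval_eq_eval] using! AnalyticAt.aeval_mvPolynomial (hcoord · z) f
  exact contDiff_iff_contDiffAt.2 fun z => (han z).contDiffAt

lemma contDiff_planeGrad {n : WithTop ℕ∞} : ContDiff ℝ n (planeGrad f) :=
  Complex.equivRealProdCLM.symm.contDiff.comp
    ((contDiff_planeEval (pderiv 0 f)).prodMk (contDiff_planeEval (pderiv 1 f)))

lemma hasGradientAt_planeEval (z : ℂ) : HasGradientAt (planeEval f) (planeGrad f z) z := by
  have hcoord : HasFDerivAt (fun z : ℂ => ![z.re, z.im])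
      (ContinuousLinearMap.pi ![Complex.reCLM, Complex.imCLM]) z := by
    refine hasFDerivAt_pi.2 fun i => ?_
    fin_cases i
    exacts [Complex.reCLM.hasFDerivAt, Complex.imCLM.hasFDerivAt]
  rw [hasGradientAt_iff_hasFDerivAt]
  convert! (hasFDerivAt_mvPolynomial_eval f ![z.re, z.im]).comp z hcoord using 1
  ext w
  simp [planeGrad, planeEval, evalP, Complex.inner]
  ring

lemma planeEval_neg (z : ℂ) : planeEval (-f) z = -planeEval f z := by
  simp [planeEval, evalP]

lemma planeGrad_neg (z : ℂ) : planeGrad (-f) z = -1 * planeGrad f z := by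
  apply Complex.ext <;> simp [planeGrad, planeEval_neg]

lemma planeGrad_eq_zero_iff {z : ℂ} : planeGrad f z = 0 ↔ IsCriticalPt f (z.re, z.im) :=
  Complex.ext_iff

variable {f}

lemma tendsto_planeEval_of_isCompact_levels
    (hlevel : ∀ c, IsCompact {p : ℝ × ℝ | evalP f p.1 p.2 = c}) :
    Tendsto (planeEval f) (cocompact ℂ) atTop ∨ Tendsto (planeEval f) (cocompact ℂ) atBot := by
  have hlevelC (c : ℝ) : IsCompact {z | planeEval f z = c} :=
    Complex.equivRealProdCLM.toHomeomorph.isCompact_preimage.2 (hlevel c)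
  have hrank : 1 < Module.rank ℝ ℂ := by rw [Complex.rank_real_complex]; exact Nat.one_lt_ofNat
  rcases tendsto_cocompact_or_bounded_of_isCompact_levels hrank
    (contDiff_planeEval f (n := 0)).continuous hlevelC with htop | hbot | ⟨B, hB⟩
  · exact .inl htop
  · exact .inr hbot
  · have hbounded (x : Fin 2 → ℝ) : |eval x f| ≤ B := by
      have hx : ![x 0, x 1] = x := by ext i; fin_cases i <;> rfl
      simpa [planeEval, evalP, hx] using hB ⟨x 0, x 1⟩
    have hconst (z : ℂ) : planeEval f z = eval 0 f := by
      rw [planeEval, evalP, eq_C_of_bounded_eval f hbounded, eval_C, eval_C]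
    refine absurd ?_ (noncompact_univ ℂ)
    simpa [hconst] using hlevelC (eval 0 f)

lemma windingNumber_planeGrad_comp_circleMap
    (hlevel : ∀ c, IsCompact {p : ℝ × ℝ | evalP f p.1 p.2 = c}) {R : ℝ}
    (h0 : ∀ z, R ≤ ‖z‖ → planeGrad f z ≠ 0) :
    windingNumber (fun t => planeGrad f (circleMap 0 R t)) = 1 := by
  rcases tendsto_planeEval_of_isCompact_levels hlevel with htop | hbot
  · exact windingNumber_gradient_comp_circleMap (hasGradientAt_planeEval f)
      (contDiff_planeGrad f) htop h0
  · have hneg := windingNumber_gradient_comp_circleMap (hasGradientAt_planeEval (-f))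
      (contDiff_planeGrad (-f))
      ((tendsto_neg_atBot_atTop.comp hbot).congr fun z => (planeEval_neg f z).symm)
      (fun z hz => by simpa [planeGrad_neg] using h0 z hz)
    simpa only [planeGrad_neg, windingNumber_const_mul (neg_ne_zero.2 one_ne_zero)] using hneg

lemma gradIndex_eq_re_windingNumber {R : ℝ} (h0 : ∀ t, planeGrad f (circleMap 0 R t) ≠ 0) :
    gradIndex f R = (windingNumber fun t => planeGrad f (circleMap 0 R t)).re := by
  set γ : ℝ → ℂ := fun t => planeGrad f (circleMap 0 R t)
  have hγ : IsC1Loop γ := (IsC1Loop.circleMap 0 R).comp (contDiff_planeGrad f)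
  have hu : uFun f R = fun t => (γ t).re := by
    ext t; simp [γ, uFun, planeGrad, planeEval, circleMap_zero_re, circleMap_zero_im]
  have hv : vFun f R = fun t => (γ t).im := by
    ext t; simp [γ, vFun, planeGrad, planeEval, circleMap_zero_re, circleMap_zero_im]
  have hderiv (t : ℝ) : HasDerivAt γ (deriv γ t) t :=
    (hγ.contDiff.differentiable one_ne_zero t).hasDerivAt
  have hu' (t : ℝ) : deriv (uFun f R) t = (deriv γ t).re := by
    rw [hu]; exact (Complex.reCLM.hasFDerivAt.comp_hasDerivAt t (hderiv t)).deriv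
  have hv' (t : ℝ) : deriv (vFun f R) t = (deriv γ t).im := by
    rw [hv]; exact (Complex.imCLM.hasFDerivAt.comp_hasDerivAt t (hderiv t)).deriv
  have hintegrand (t : ℝ) :
      (uFun f R t * deriv (vFun f R) t - vFun f R t * deriv (uFun f R) t) /
        (uFun f R t ^ 2 + vFun f R t ^ 2) = (deriv γ t / γ t).im := by
    rw [hu', hv', hu, hv, Complex.div_im, Complex.normSq_apply]
    ring
  have him := Complex.imCLM.intervalIntegral_comp_comm
    (hγ.intervalIntegrable_logDeriv h0 0 (2 * Real.pi))
  simp only [Complex.imCLM_apply] at him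
  simp only [gradIndex, hintegrand, him, windingNumber]
  simp [Complex.mul_re, mul_assoc]

end PlanePolynomial

theorem index_eq_one_of_compact_level_sets_general (f : MvPolynomial (Fin 2) ℝ)
    (hcpt : ∀ t : ℝ, IsCompact {p : ℝ × ℝ | evalP f p.1 p.2 = t}) (R : ℝ) (hR : 0 < R)
    (hadm : ∀ p : ℝ × ℝ, IsCriticalPt f p → p.1 ^ 2 + p.2 ^ 2 < R ^ 2) :
    gradIndex f R = 1 := by
  have h0 (z : ℂ) (hz : R ≤ ‖z‖) : planeGrad f z ≠ 0 := fun hcrit => by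
    have hlt := hadm _ ((planeGrad_eq_zero_iff f).1 hcrit)
    rw [sq, sq, ← Complex.normSq_apply, ← Complex.sq_norm] at hlt
    exact hlt.not_ge (pow_le_pow_left₀ hR.le hz 2)
  have hcircle (t : ℝ) : R ≤ ‖circleMap 0 R t‖ := by
    rw [norm_circleMap_zero]
    exact le_abs_self R
  rw [gradIndex_eq_re_windingNumber fun t => h0 _ (hcircle t),
    windingNumber_planeGrad_comp_circleMap hcpt h0, Complex.one_re]

theorem index_eq_one_of_compact_level_sets
    (f : MvPolynomial (Fin 2) ℝ) (hnc : 0 < f.totalDegree)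
    (hfin : {p : ℝ × ℝ | IsCriticalPt f p}.Finite)
    (hcpt : ∀ t : ℝ, IsCompact {p : ℝ × ℝ | evalP f p.1 p.2 = t})
    (R : ℝ) (hR : 0 < R)
    (hadm : ∀ p : ℝ × ℝ, IsCriticalPt f p → p.1 ^ 2 + p.2 ^ 2 < R ^ 2)
    (i : ℤ) (hi : (i : ℝ) = gradIndex f R) :
    i = 1 :=
  mod_cast hi.trans (index_eq_one_of_compact_level_sets_general f hcpt R hR hadm)
end

section
/- Let f : ℝ² → ℝ be a nonconstant real polynomial function of degree d in two variables with only finitely many critical points, and suppose that at least one level set {(x,y) : f(x,y) = t} is not compact. Then for every admissible radius R the index i of grad f around the circle of radius R satisfies |i| ≤ d_R − 1, where d_R is the real degree of f. -/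
open MvPolynomial Filter

/-- The multiplicity of the real linear form `b·x − a·y` in `F`: the largest `m`
such that `(b·x − a·y)^m` divides `F` in `ℝ[x,y]`. -/
noncomputable def linMult (F : MvPolynomial (Fin 2) ℝ) (a b : ℝ) : ℕ :=
  sSup {m : ℕ | (C b * X 0 - C a * X 1) ^ m ∣ F}

/-- The "real degree" of a homogeneous polynomial `F`: the sum, over the points
`[a : b]` of the real projective line (represented by `[a : 1]` for `a ∈ ℝ`,
together with `[1 : 0]`), of the multiplicity of the real linear factor
`b·x − a·y` in `F`; i.e. the sum of the multiplicities of the real linear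
factors of `F`. -/
noncomputable def realDegreeOf (F : MvPolynomial (Fin 2) ℝ) : ℕ :=
  (∑ᶠ a : ℝ, linMult F a 1) + linMult F 1 0

/-!
On a large circle the gradient of `f`, written in the polar frame, is `1 / r` times the vector
`(r ∂_r f, ∂_t f)`, whose leading part is `r ^ d • (d G, G')`, where `G` is the restriction of `f_d`
to the unit circle. Away from the zeros of `G` the radial component keeps its sign, so the number of
half turns made by the gradient relative to the frame does not change. Across a zero of `G` of
multiplicity `m`, the tangential component has at most `m - 1` zeros by Rolle's theorem, while
`G G'` passes from negative to positive; hence the number of half turns changes by at least `-m`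
and at most `m - 2`. A full circle meets every real linear factor of `f_d` twice, so it crosses at
least two zeros of `G`, and the frame itself makes one turn: `-2 d_R ≤ 2 (i - 1) ≤ 2 d_R - 4`.
-/

/-! ### Homogeneous polynomials and their real linear factors -/

section Homogeneous

variable {σ R : Type*} [CommRing R]

lemma aeval_mul_of_isHomogeneous {A : Type*} [CommRing A] [Algebra R A]
    {Q : MvPolynomial σ R} {n : ℕ} (hQ : Q.IsHomogeneous n) (r : A) (w : σ → A) :
    aeval (fun i => r * w i) Q = r ^ n * aeval w Q := by
  rw [aeval_def, aeval_def, eval₂_eq, eval₂_eq, Finset.mul_sum]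
  refine Finset.sum_congr rfl fun s hs => ?_
  have hdeg : ∑ i ∈ s.support, s i = n := (hQ.degree_eq_sum_deg_support hs).symm
  simp_rw [mul_pow]
  rw [Finset.prod_mul_distrib, Finset.prod_pow_eq_pow_sum, hdeg]
  ring

lemma exists_isHomogeneous_eq_mul_of_dvd {F L : MvPolynomial σ R} {d m : ℕ}
    (hF : F.IsHomogeneous d) (hL : L.IsHomogeneous m) (hLF : L ∣ F) :
    ∃ Q e, Q.IsHomogeneous e ∧ F = L * Q := by
  obtain ⟨Q, rfl⟩ := hLF
  let _ := gradedAlgebra (σ := σ) (R := R)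
  have hcomp : homogeneousComponent d (L * Q) =
      if m ≤ d then L * homogeneousComponent (d - m) Q else 0 := by
    classical
    rw [← decomposition.decompose'_apply, ← decomposition.decompose'_apply]
    exact DirectSum.coe_decompose_mul_of_left_mem (homogeneousSubmodule σ R) d hL
  rw [homogeneousComponent_eq_self hF] at hcomp
  split_ifs at hcomp with hmd
  · exact ⟨_, d - m, homogeneousComponent_isHomogeneous _ _, hcomp⟩
  · exact ⟨0, 0, isHomogeneous_zero _ _ _, by rw [hcomp, mul_zero]⟩

lemma homogeneousComponent_totalDegree_ne_zero_s3 {f : MvPolynomial σ R} (hf : f ≠ 0) :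
    homogeneousComponent f.totalDegree f ≠ 0 := by
  obtain ⟨s, hs, hdeg⟩ :=
    Finset.exists_mem_eq_sup f.support (support_nonempty.2 hf) fun s => s.sum fun _ e => e
  refine ne_zero_iff.2 ⟨s, ?_⟩
  rw [coeff_homogeneousComponent, if_pos]
  · exact mem_support_iff.1 hs
  · exact hdeg.symm

end Homogeneous

/-- The linear form `b·x − a·y`, which vanishes on the line through the origin and `(a, b)`. -/
noncomputable def linForm (a b : ℝ) : MvPolynomial (Fin 2) ℝ := C b * X 0 - C a * X 1

lemma isHomogeneous_linForm (a b : ℝ) : (linForm a b).IsHomogeneous 1 :=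
  (isHomogeneous_C_mul_X _ _).sub (isHomogeneous_C_mul_X _ _)

lemma evalP_linForm (a b x y : ℝ) : evalP (linForm a b) x y = b * x - a * y := by
  simp [evalP, linForm]

lemma evalP_mul_of_isHomogeneous {Q : MvPolynomial (Fin 2) ℝ} {n : ℕ} (hQ : Q.IsHomogeneous n)
    (r x y : ℝ) : evalP Q (r * x) (r * y) = r ^ n * evalP Q x y := by
  have hvec : (fun i => r * ![x, y] i) = ![r * x, r * y] := by
    funext i; fin_cases i <;> rfl
  simpa only [evalP, aeval_eq_eval, hvec] using aeval_mul_of_isHomogeneous hQ r ![x, y]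

lemma evalP_eq_zero_of_linForm_dvd {Q : MvPolynomial (Fin 2) ℝ} {a b : ℝ}
    (h : linForm a b ∣ Q) : evalP Q a b = 0 := by
  obtain ⟨P, rfl⟩ := h
  have hL := evalP_linForm a b a b
  rw [mul_comm b, sub_self] at hL
  rw [evalP, map_mul, ← evalP, hL, zero_mul]

lemma linForm_dvd_of_evalP_eq_zero {Q : MvPolynomial (Fin 2) ℝ} {n : ℕ}
    (hQ : Q.IsHomogeneous n) {a b : ℝ} (hab : a ^ 2 + b ^ 2 = 1) (h0 : evalP Q a b = 0) :
    linForm a b ∣ Q := by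
  rw [← Ideal.mem_span_singleton, ← Ideal.Quotient.eq_zero_iff_mem]
  set I := Ideal.span {linForm a b}
  set π := Ideal.Quotient.mkₐ ℝ I
  have hL : π (linForm a b) = 0 := Ideal.Quotient.eq_zero_iff_mem.2 (Ideal.subset_span rfl)
  have hCC : (C a : MvPolynomial (Fin 2) ℝ) ^ 2 + C b ^ 2 = 1 := by
    rw [← C_pow, ← C_pow, ← C_add, hab, C_1]
  -- Modulo `b·x − a·y`, the point `(x, y)` is the multiple `(a·x + b·y)·(a, b)` of `(a, b)`.
  have hX : ∀ i, π (X i) = π (C a * X 0 + C b * X 1) * algebraMap ℝ _ (![a, b] i) := by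
    have halg : ∀ c : ℝ, algebraMap ℝ (MvPolynomial (Fin 2) ℝ ⧸ I) c = π (C c) := fun _ => rfl
    intro i
    rw [halg, ← map_mul, ← sub_eq_zero, ← map_sub]
    fin_cases i
    · have : (X 0 - (C a * X 0 + C b * X 1) * C a : MvPolynomial (Fin 2) ℝ) =
          C b * linForm a b := by
        unfold linForm; linear_combination (-X 0) * hCC
      simpa [hL] using congrArg π this
    · have : (X 1 - (C a * X 0 + C b * X 1) * C b : MvPolynomial (Fin 2) ℝ) =
          -C a * linForm a b := by
        unfold linForm; linear_combination (-X 1) * hCC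
      simpa [hL] using congrArg π this
  calc π Q = aeval (fun i => π (X i)) Q := DFunLike.congr_fun (aeval_unique π) Q
    _ = π (C a * X 0 + C b * X 1) ^ n * algebraMap ℝ _ (evalP Q a b) := by
      simp_rw [hX]
      rw [aeval_mul_of_isHomogeneous hQ, evalP, ← aeval_eq_eval]
      exact congrArg _ (aeval_algebraMap_apply _ _ _)
    _ = 0 := by rw [h0, map_zero, mul_zero]

lemma finiteMultiplicity_linForm {F : MvPolynomial (Fin 2) ℝ} (hF : F ≠ 0) (a b : ℝ) :
    FiniteMultiplicity (linForm a b) F := by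
  refine FiniteMultiplicity.of_not_isUnit (fun hunit => ?_) hF
  have h1 := evalP_eq_zero_of_linForm_dvd (hunit.dvd (a := 1))
  simp [evalP] at h1

lemma linMult_eq_multiplicity {F : MvPolynomial (Fin 2) ℝ} (hF : F ≠ 0) (a b : ℝ) :
    linMult F a b = multiplicity (linForm a b) F := by
  have : {m : ℕ | (C b * X 0 - C a * X 1) ^ m ∣ F} = Set.Iic (multiplicity (linForm a b) F) :=
    Set.ext fun _ => (finiteMultiplicity_linForm hF a b).pow_dvd_iff_le_multiplicity
  rw [linMult, this, csSup_Iic]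

lemma one_le_linMult_iff {F : MvPolynomial (Fin 2) ℝ} (hF : F ≠ 0) (a b : ℝ) :
    1 ≤ linMult F a b ↔ linForm a b ∣ F := by
  rw [linMult_eq_multiplicity hF,
    ← (finiteMultiplicity_linForm hF a b).pow_dvd_iff_le_multiplicity, pow_one]

lemma linMult_mul_left {F : MvPolynomial (Fin 2) ℝ} (hF : F ≠ 0) (a b : ℝ) {c : ℝ} (hc : c ≠ 0) :
    linMult F (c * a) (c * b) = linMult F a b := by
  rw [linMult_eq_multiplicity hF, linMult_eq_multiplicity hF]
  apply multiplicity_eq_of_associated_left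
  have hscale : linForm (c * a) (c * b) = linForm a b * C c := by
    simp only [linForm, C_mul]; ring
  have hunit : IsUnit (C c : MvPolynomial (Fin 2) ℝ) := (isUnit_iff_ne_zero.2 hc).map C
  exact hscale ▸ (associated_mul_unit_left (linForm a b) (C c) hunit).symm

lemma exists_isHomogeneous_eq_linForm_pow_mul {F : MvPolynomial (Fin 2) ℝ} {d : ℕ}
    (hF : F.IsHomogeneous d) (hF0 : F ≠ 0) {a b : ℝ} (hab : a ^ 2 + b ^ 2 = 1) :
    ∃ Q e, Q.IsHomogeneous e ∧ evalP Q a b ≠ 0 ∧ F = linForm a b ^ linMult F a b * Q := by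
  have hfin := finiteMultiplicity_linForm hF0 a b
  obtain ⟨Q, e, hQ, hFQ⟩ := exists_isHomogeneous_eq_mul_of_dvd hF
    ((isHomogeneous_linForm a b).pow _) (pow_multiplicity_dvd (linForm a b) F)
  rw [← linMult_eq_multiplicity hF0] at hFQ
  refine ⟨Q, e, hQ, fun h0 => ?_, hFQ⟩
  have hdvd : linForm a b ^ (linMult F a b + 1) ∣ F := by
    conv_rhs => rw [hFQ]
    rw [pow_succ]
    exact mul_dvd_mul_left _ (linForm_dvd_of_evalP_eq_zero hQ hab h0)
  rw [hfin.pow_dvd_iff_le_multiplicity, ← linMult_eq_multiplicity hF0] at hdvd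
  exact Nat.not_succ_le_self _ hdvd

lemma finite_setOf_evalP_slope_eq_zero {F : MvPolynomial (Fin 2) ℝ} {d : ℕ}
    (hF : F.IsHomogeneous d) (hF0 : F ≠ 0) : {a : ℝ | evalP F a 1 = 0}.Finite := by
  set P : Polynomial ℝ := aeval ![Polynomial.X, 1] F with hP
  have heval : ∀ a, P.eval a = evalP F a 1 := by
    intro a
    have : (Polynomial.aeval a).comp (aeval ![Polynomial.X, 1]) =
        (aeval ![a, 1] : MvPolynomial (Fin 2) ℝ →ₐ[ℝ] ℝ) := by
      ext i; fin_cases i <;> simp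
    simpa [evalP, aeval_eq_eval, hP, Polynomial.coe_aeval_eq_eval] using DFunLike.congr_fun this F
  have hP0 : P ≠ 0 := by
    intro hzero
    have hmul : F * X 1 = 0 := by
      refine MvPolynomial.funext fun w => ?_
      rw [map_mul, map_zero, eval_X, mul_eq_zero, or_iff_not_imp_right]
      intro hw
      have hvec : ![w 0, w 1] = w := by funext i; fin_cases i <;> rfl
      have hdehom := evalP_mul_of_isHomogeneous hF (w 1) (w 0 / w 1) 1
      rwa [← heval, hzero, Polynomial.eval_zero, mul_zero, mul_one, mul_div_cancel₀ _ hw, evalP,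
        hvec] at hdehom
    exact hF0 ((mul_eq_zero.1 hmul).resolve_right (X_ne_zero 1))
  refine P.roots.toFinset.finite_toSet.subset fun a ha => ?_
  rw [Finset.mem_coe, Multiset.mem_toFinset, Polynomial.mem_roots hP0, Polynomial.IsRoot.def,
    heval]
  exact ha

/-! ### Polynomials in polar coordinates -/

/-- Evaluation at the point with polar coordinates `(r, t)`. A homogeneous polynomial is studied
through its values `circleEval 1 t` on the unit circle. -/
noncomputable def circleEval (r t : ℝ) : MvPolynomial (Fin 2) ℝ →+* ℝ :=
  eval ![r * Real.cos t, r * Real.sin t]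

lemma circleEval_one_eq_evalP (t : ℝ) (F : MvPolynomial (Fin 2) ℝ) :
    circleEval 1 t F = evalP F (Real.cos t) (Real.sin t) := by
  rw [circleEval, one_mul, one_mul, evalP]

lemma circleEval_of_isHomogeneous {F : MvPolynomial (Fin 2) ℝ} {n : ℕ} (hF : F.IsHomogeneous n)
    (r t : ℝ) : circleEval r t F = r ^ n * circleEval 1 t F := by
  rw [circleEval_one_eq_evalP, ← evalP_mul_of_isHomogeneous hF, evalP, circleEval]

lemma circleEval_one_add_pi {F : MvPolynomial (Fin 2) ℝ} {n : ℕ} (hF : F.IsHomogeneous n)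
    (t : ℝ) : circleEval 1 (t + Real.pi) F = (-1) ^ n * circleEval 1 t F := by
  rw [← circleEval_of_isHomogeneous hF]
  simp only [circleEval, Real.cos_add_pi, Real.sin_add_pi, one_mul, neg_mul]

lemma exists_evalP_eq_circleEval (x y : ℝ) :
    ∃ t ∈ Set.Icc (-Real.pi) Real.pi, ∀ P, evalP P x y = circleEval ‖(⟨x, y⟩ : ℂ)‖ t P :=
  ⟨Complex.arg ⟨x, y⟩, ⟨(Complex.neg_pi_lt_arg _).le, Complex.arg_le_pi _⟩, fun P => by
    rw [circleEval, Complex.norm_mul_cos_arg, Complex.norm_mul_sin_arg, evalP]⟩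

lemma continuous_circleEval (P : MvPolynomial (Fin 2) ℝ) {X : Type*} [TopologicalSpace X]
    {r t : X → ℝ} (hr : Continuous r) (ht : Continuous t) :
    Continuous fun x => circleEval (r x) (t x) P := by
  have hpoint : Continuous fun x =>
      (![r x * Real.cos (t x), r x * Real.sin (t x)] : Fin 2 → ℝ) := by fun_prop
  exact P.continuous_eval.comp hpoint

lemma continuous_circleEval_right (r : ℝ) (P : MvPolynomial (Fin 2) ℝ) :
    Continuous fun t => circleEval r t P :=
  continuous_circleEval P continuous_const continuous_id

lemma circleEval_linForm (z t : ℝ) :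
    circleEval 1 t (linForm (Real.cos z) (Real.sin z)) = Real.sin (z - t) := by
  rw [circleEval_one_eq_evalP, evalP_linForm, Real.sin_sub]

/-- The multiplicity in `F` of the linear form vanishing in the direction of angle `z`. -/
noncomputable def angularMult (F : MvPolynomial (Fin 2) ℝ) (z : ℝ) : ℕ :=
  linMult F (Real.cos z) (Real.sin z)

lemma one_le_angularMult_iff {F : MvPolynomial (Fin 2) ℝ} {n : ℕ} (hF : F.IsHomogeneous n)
    (hF0 : F ≠ 0) (z : ℝ) : 1 ≤ angularMult F z ↔ circleEval 1 z F = 0 := by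
  rw [angularMult, one_le_linMult_iff hF0, circleEval_one_eq_evalP]
  exact ⟨evalP_eq_zero_of_linForm_dvd,
    linForm_dvd_of_evalP_eq_zero hF (Real.cos_sq_add_sin_sq z)⟩

/-- The point of the projective line in the direction of angle `z`, encoded as in `realDegreeOf`:
`some a` stands for `[a : 1]` and `none` for `[1 : 0]`. -/
noncomputable def projClass (z : ℝ) : Option ℝ :=
  open Classical in if Real.sin z = 0 then none else some (Real.cos z / Real.sin z)

lemma injOn_projClass (a : ℝ) : Set.InjOn projClass (Set.Ioo a (a + Real.pi)) := by
  intro z hz w hw h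
  have hsin : Real.sin (z - w) = 0 := by
    rw [Real.sin_sub]
    unfold projClass at h
    split_ifs at h with hz0 hw0 hw0
    · rw [hz0, hw0]; ring
    · rw [Option.some.injEq] at h
      field_simp at h
      linarith
  rw [Real.sin_eq_zero_iff_of_lt_of_lt (by linarith [hz.1, hw.2]) (by linarith [hz.2, hw.1])]
    at hsin
  linarith

lemma angularMult_eq_elim_projClass {F : MvPolynomial (Fin 2) ℝ} (hF0 : F ≠ 0) (z : ℝ) :
    angularMult F z = (projClass z).elim (linMult F 1 0) fun a => linMult F a 1 := by
  unfold projClass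
  split_ifs with hsin
  · have hcos : Real.cos z ≠ 0 := fun hcos => by
      simpa [hsin, hcos] using Real.cos_sq_add_sin_sq z
    simpa [angularMult, hsin] using linMult_mul_left hF0 1 0 hcos
  · have hscale := linMult_mul_left hF0 (Real.cos z / Real.sin z) 1 hsin
    rw [mul_div_cancel₀ _ hsin, mul_one] at hscale
    exact hscale

lemma finite_support_linMult {F : MvPolynomial (Fin 2) ℝ} {n : ℕ} (hF : F.IsHomogeneous n)
    (hF0 : F ≠ 0) : (Function.support fun a => linMult F a 1).Finite :=
  (finite_setOf_evalP_slope_eq_zero hF hF0).subset fun a ha =>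
    evalP_eq_zero_of_linForm_dvd ((one_le_linMult_iff hF0 a 1).1 (Nat.one_le_iff_ne_zero.2 ha))

lemma sum_angularMult_le_realDegreeOf {F : MvPolynomial (Fin 2) ℝ} {n : ℕ}
    (hF : F.IsHomogeneous n) (hF0 : F ≠ 0) {a : ℝ} {Z : Finset ℝ}
    (hZ : (Z : Set ℝ) ⊆ Set.Ioo a (a + Real.pi)) :
    ∑ z ∈ Z, angularMult F z ≤ realDegreeOf F := by
  classical
  set v : Option ℝ → ℕ := fun o => o.elim (linMult F 1 0) fun a => linMult F a 1 with hv
  have hsupp := finite_support_linMult hF hF0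
  calc ∑ z ∈ Z, angularMult F z = ∑ o ∈ Z.image projClass, v o := by
        simp_rw [Finset.sum_image ((injOn_projClass a).mono hZ), hv,
          angularMult_eq_elim_projClass hF0]
    _ ≤ ∑ o ∈ Finset.insertNone hsupp.toFinset, v o := by
        refine Finset.sum_le_sum_of_ne_zero fun o _ ho => Finset.mem_insertNone.2 fun a ha => ?_
        cases ha
        exact hsupp.mem_toFinset.2 ho
    _ = realDegreeOf F := by
        rw [Finset.sum_insertNone, add_comm, realDegreeOf,
          finsum_eq_sum_of_support_subset _ (s := hsupp.toFinset) (by simp)]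
        rfl

lemma finite_setOf_circleEval_eq_zero {F : MvPolynomial (Fin 2) ℝ} {n : ℕ}
    (hF : F.IsHomogeneous n) (hF0 : F ≠ 0) (a : ℝ) :
    {z ∈ Set.Ioo a (a + Real.pi) | circleEval 1 z F = 0}.Finite := by
  refine Set.Finite.of_finite_image ?_ ((injOn_projClass a).mono (Set.sep_subset _ _))
  refine (((finite_support_linMult hF hF0).image some).insert none).subset ?_
  rintro _ ⟨z, hz, rfl⟩
  have hmult := (one_le_angularMult_iff hF hF0 z).2 hz.2
  rw [angularMult_eq_elim_projClass hF0] at hmult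
  cases hc : projClass z with
  | none => exact Set.mem_insert _ _
  | some b =>
    rw [hc] at hmult
    exact Set.mem_insert_of_mem _ ⟨b, Nat.one_le_iff_ne_zero.1 hmult, rfl⟩

lemma exists_circleEval_ne_zero {F : MvPolynomial (Fin 2) ℝ} {n : ℕ}
    (hF : F.IsHomogeneous n) (hF0 : F ≠ 0) : ∃ t, circleEval 1 t F ≠ 0 := by
  obtain ⟨t, ht⟩ := ((Set.Ioo_infinite (lt_add_of_pos_right 0 Real.pi_pos)).sdiff
    (finite_setOf_circleEval_eq_zero hF hF0 0)).nonempty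
  exact ⟨t, fun h => ht.2 ⟨ht.1, h⟩⟩

lemma ne_zero_of_one_le_realDegreeOf {F : MvPolynomial (Fin 2) ℝ} (h : 1 ≤ realDegreeOf F) :
    F ≠ 0 := by
  rintro rfl
  have hzero : ∀ a b, linMult 0 a b = 0 := fun a b => by
    simp only [linMult, dvd_zero, Set.ofPred_true]
    exact Nat.sSup_of_not_bddAbove not_bddAbove_univ
  simp [realDegreeOf, hzero] at h

lemma exists_circleEval_eq_zero {F : MvPolynomial (Fin 2) ℝ} {n : ℕ} (hF : F.IsHomogeneous n)
    (h : 1 ≤ realDegreeOf F) : ∃ t, circleEval 1 t F = 0 := by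
  have hF0 := ne_zero_of_one_le_realDegreeOf h
  obtain ⟨a, b, hab, hmult⟩ : ∃ a b : ℝ, (⟨a, b⟩ : ℂ) ≠ 0 ∧ 1 ≤ linMult F a b := by
    by_contra! hnone
    have hslope : ∀ a, linMult F a 1 = 0 := fun a =>
      Nat.lt_one_iff.1 (hnone a 1 (by simp [Complex.ext_iff]))
    have hvert := hnone 1 0 (by simp [Complex.ext_iff])
    simp only [realDegreeOf, hslope, finsum_zero] at h
    omega
  obtain ⟨t, -, ht⟩ := exists_evalP_eq_circleEval a b
  have hzero := evalP_eq_zero_of_linForm_dvd ((one_le_linMult_iff hF0 a b).1 hmult)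
  rw [ht, circleEval_of_isHomogeneous hF, mul_eq_zero] at hzero
  exact ⟨t, hzero.resolve_left (pow_ne_zero _ (norm_ne_zero_iff.2 hab))⟩

/-! ### Derivations preserving the degree -/

section PreservingDegree

variable {σ R : Type*} [CommRing R] {D : MvPolynomial σ R →ₗ[R] MvPolynomial σ R}

lemma homogeneousComponent_map_of_preserves
    (hD : ∀ {n Q}, Q.IsHomogeneous n → (D Q).IsHomogeneous n)
    (n : ℕ) (f : MvPolynomial σ R) :
    homogeneousComponent n (D f) = D (homogeneousComponent n f) := by
  conv_lhs => rw [← sum_homogeneousComponent f, map_sum, map_sum]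
  simp_rw [homogeneousComponent_of_mem (hD (homogeneousComponent_isHomogeneous _ f))]
  rw [Finset.sum_ite_eq, ite_eq_left_iff, Finset.mem_range, not_lt]
  intro hn
  rw [homogeneousComponent_eq_zero _ _ hn, map_zero]

lemma totalDegree_map_le_of_preserves (hD : ∀ {n Q}, Q.IsHomogeneous n → (D Q).IsHomogeneous n)
    (f : MvPolynomial σ R) : (D f).totalDegree ≤ f.totalDegree := by
  conv_lhs => rw [← sum_homogeneousComponent f, map_sum]
  exact totalDegree_finsetSum_le fun n hn =>
    (hD (homogeneousComponent_isHomogeneous n f)).totalDegree_le.trans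
      (Nat.le_of_lt_succ (Finset.mem_range.1 hn))

lemma isHomogeneous_X_mul_pderiv {Q : MvPolynomial σ R} {n : ℕ} (hQ : Q.IsHomogeneous n)
    (i j : σ) : (X i * pderiv j Q).IsHomogeneous n := by
  cases n with
  | zero =>
    rw [totalDegree_eq_zero_iff_eq_C.1 ((totalDegree_zero_iff_isHomogeneous σ).2 hQ), pderiv_C,
      mul_zero]
    exact isHomogeneous_zero _ _ _
  | succ n => exact add_comm 1 n ▸ (isHomogeneous_X R i).mul hQ.pderiv

end PreservingDegree

/-- The derivation `x ∂_y − y ∂_x` of `ℝ[x, y]`, which is `∂_t` in polar coordinates. -/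
noncomputable def rotDerivation :
    Derivation ℝ (MvPolynomial (Fin 2) ℝ) (MvPolynomial (Fin 2) ℝ) :=
  (X 0 : MvPolynomial (Fin 2) ℝ) • pderiv 1 - (X 1 : MvPolynomial (Fin 2) ℝ) • pderiv 0

/-- The derivation `x ∂_x + y ∂_y` of `ℝ[x, y]`, which is `r ∂_r` in polar coordinates. -/
noncomputable def eulerDerivation :
    Derivation ℝ (MvPolynomial (Fin 2) ℝ) (MvPolynomial (Fin 2) ℝ) :=
  (X 0 : MvPolynomial (Fin 2) ℝ) • pderiv 0 + (X 1 : MvPolynomial (Fin 2) ℝ) • pderiv 1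

lemma isHomogeneous_rotDerivation {n : ℕ} {Q : MvPolynomial (Fin 2) ℝ} (hQ : Q.IsHomogeneous n) :
    (rotDerivation Q).IsHomogeneous n :=
  (isHomogeneous_X_mul_pderiv hQ 0 1).sub (isHomogeneous_X_mul_pderiv hQ 1 0)

lemma homogeneousComponent_iterate_rotDerivation (n k : ℕ) (f : MvPolynomial (Fin 2) ℝ) :
    homogeneousComponent n (rotDerivation^[k] f) =
      rotDerivation^[k] (homogeneousComponent n f) := by
  induction k with
  | zero => rfl
  | succ k ih =>
    rw [Function.iterate_succ_apply', Function.iterate_succ_apply', ← ih]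
    exact homogeneousComponent_map_of_preserves (D := rotDerivation.toLinearMap)
      isHomogeneous_rotDerivation n _

lemma totalDegree_iterate_rotDerivation_le (k : ℕ) (f : MvPolynomial (Fin 2) ℝ) :
    (rotDerivation^[k] f).totalDegree ≤ f.totalDegree := by
  induction k with
  | zero => exact le_rfl
  | succ k ih =>
    rw [Function.iterate_succ_apply']
    exact (totalDegree_map_le_of_preserves (D := rotDerivation.toLinearMap)
      isHomogeneous_rotDerivation _).trans ih

lemma isHomogeneous_eulerDerivation {n : ℕ} {Q : MvPolynomial (Fin 2) ℝ}
    (hQ : Q.IsHomogeneous n) : (eulerDerivation Q).IsHomogeneous n :=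
  (isHomogeneous_X_mul_pderiv hQ 0 0).add (isHomogeneous_X_mul_pderiv hQ 1 1)

lemma homogeneousComponent_eulerDerivation (n : ℕ) (f : MvPolynomial (Fin 2) ℝ) :
    homogeneousComponent n (eulerDerivation f) = n • homogeneousComponent n f := by
  rw [← (homogeneousComponent_isHomogeneous n f).sum_X_mul_pderiv, Fin.sum_univ_two]
  exact homogeneousComponent_map_of_preserves (D := eulerDerivation.toLinearMap)
    isHomogeneous_eulerDerivation n f

lemma totalDegree_eulerDerivation_le (f : MvPolynomial (Fin 2) ℝ) :
    (eulerDerivation f).totalDegree ≤ f.totalDegree :=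
  totalDegree_map_le_of_preserves (D := eulerDerivation.toLinearMap)
    isHomogeneous_eulerDerivation f

lemma hasDerivAt_circleEval (r t : ℝ) (P : MvPolynomial (Fin 2) ℝ) :
    HasDerivAt (fun t => circleEval r t P) (circleEval r t (rotDerivation P)) t := by
  induction P using MvPolynomial.induction_on with
  | C a => simpa [circleEval, rotDerivation] using hasDerivAt_const t a
  | add P Q hP hQ => simp only [map_add]; exact hP.add hQ
  | mul_X P i hP =>
    have hX : HasDerivAt (fun t => circleEval r t (X i))
        (circleEval r t (rotDerivation (X i))) t := by
      fin_cases i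
      · simpa [circleEval, rotDerivation] using (Real.hasDerivAt_cos t).const_mul r
      · simpa [circleEval, rotDerivation] using (Real.hasDerivAt_sin t).const_mul r
    have hmul := hP.mul hX
    rw [Derivation.leibniz, map_add, smul_eq_mul, smul_eq_mul, map_mul, map_mul, add_comm,
      mul_comm (circleEval r t (X i))]
    simp only [map_mul]
    exact hmul

/-! ### Domination by the leading form on large circles -/

lemma circleEval_eq_pow_mul_sum {P : MvPolynomial (Fin 2) ℝ} {d : ℕ} (hP : P.totalDegree ≤ d)
    {r : ℝ} (hr : r ≠ 0) (t : ℝ) :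
    circleEval r t P = r ^ d * ∑ k ∈ Finset.range (d + 1),
      r⁻¹ ^ (d - k) * circleEval 1 t (homogeneousComponent k P) := by
  have hsum : ∑ k ∈ Finset.range (d + 1), homogeneousComponent k P = P := by
    conv_rhs => rw [← sum_homogeneousComponent P]
    symm
    refine Finset.sum_subset (Finset.range_mono (by omega)) fun k _ hk => ?_
    exact homogeneousComponent_eq_zero _ _ (by simpa using hk)
  conv_lhs => rw [← hsum, map_sum]
  rw [Finset.mul_sum]
  refine Finset.sum_congr rfl fun k hk => ?_
  have hpow : r ^ d * r⁻¹ ^ (d - k) = r ^ k := by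
    rw [inv_pow, ← div_eq_mul_inv, div_eq_iff (pow_ne_zero _ hr), ← pow_add]
    congr 1
    have := Finset.mem_range.1 hk
    omega
  rw [circleEval_of_isHomogeneous (homogeneousComponent_isHomogeneous k P), ← mul_assoc, hpow]

lemma eventually_forall_circleEval_mul_pos {P : MvPolynomial (Fin 2) ℝ} {d : ℕ}
    (hP : P.totalDegree ≤ d) {K : Set ℝ} (hK : IsCompact K)
    (hne : ∀ t ∈ K, circleEval 1 t (homogeneousComponent d P) ≠ 0) :
    ∀ᶠ r in atTop, ∀ t ∈ K,
      0 < circleEval 1 t (homogeneousComponent d P) * circleEval r t P := by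
  set g : ℝ → ℝ → ℝ := fun s t => ∑ k ∈ Finset.range (d + 1),
    s ^ (d - k) * circleEval 1 t (homogeneousComponent k P) with hg
  have hcont : Continuous fun p : ℝ × ℝ =>
      circleEval 1 p.2 (homogeneousComponent d P) * g p.1 p.2 := by
    have hk : ∀ k, Continuous fun p : ℝ × ℝ => circleEval 1 p.2 (homogeneousComponent k P) :=
      fun k => (continuous_circleEval_right 1 _).comp continuous_snd
    exact (hk d).mul (continuous_finsetSum _ fun k _ => (continuous_fst.pow _).mul (hk k))
  have hg0 : ∀ t, g 0 t = circleEval 1 t (homogeneousComponent d P) := fun t => by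
    simp only [hg]
    rw [Finset.sum_range_succ, Finset.sum_eq_zero, tsub_self, pow_zero, one_mul, zero_add]
    intro k hk
    rw [zero_pow (Nat.sub_ne_zero_of_lt (Finset.mem_range.1 hk)), zero_mul]
  have hnear : ∀ᶠ s in nhds (0 : ℝ), ∀ t ∈ K,
      0 < circleEval 1 t (homogeneousComponent d P) * g s t := by
    refine hK.eventually_forall_of_forall_eventually fun t ht => ?_
    refine (hcont.tendsto (0, t)).eventually (lt_mem_nhds ?_)
    rw [hg0]
    exact mul_self_pos.2 (hne t ht)
  filter_upwards [tendsto_inv_atTop_zero.eventually hnear, eventually_gt_atTop 0]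
    with r hr hr0 t ht
  rw [circleEval_eq_pow_mul_sum hP hr0.ne', mul_left_comm]
  exact mul_pos (pow_pos hr0 d) (hr t ht)

/-! ### The leading form near its real zeros -/

lemma circleEval_rotDerivation_linForm (z t : ℝ) :
    circleEval 1 t (rotDerivation (linForm (Real.cos z) (Real.sin z))) = -Real.cos (z - t) := by
  have hsin : HasDerivAt (fun t => Real.sin (z - t)) (-Real.cos (z - t)) t := by
    simpa using ((hasDerivAt_id t).const_sub z).sin
  refine (hasDerivAt_circleEval 1 t _).unique ?_
  simpa only [circleEval_linForm] using hsin

lemma exists_rotDerivation_linForm_pow_succ_mul (z : ℝ) (k : ℕ) (Q : MvPolynomial (Fin 2) ℝ) :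
    ∃ Q', rotDerivation (linForm (Real.cos z) (Real.sin z) ^ (k + 1) * Q) =
        linForm (Real.cos z) (Real.sin z) ^ k * Q' ∧
      circleEval 1 z Q' = -(k + 1) * circleEval 1 z Q := by
  set L := linForm (Real.cos z) (Real.sin z)
  refine ⟨(k + 1) * rotDerivation L * Q + L * rotDerivation Q, ?_, ?_⟩
  · rw [Derivation.leibniz, Derivation.leibniz_pow]
    simp only [smul_eq_mul, nsmul_eq_mul, Nat.cast_add, Nat.cast_one, add_tsub_cancel_right]
    ring
  · simp only [map_add, map_mul, map_natCast, map_one, L, circleEval_linForm,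
      circleEval_rotDerivation_linForm, sub_self, Real.cos_zero, Real.sin_zero]
    ring

lemma circleEval_iterate_rotDerivation_linForm_pow_mul_ne_zero {z : ℝ} (k : ℕ)
    {Q : MvPolynomial (Fin 2) ℝ} (hQ : circleEval 1 z Q ≠ 0) :
    circleEval 1 z (rotDerivation^[k] (linForm (Real.cos z) (Real.sin z) ^ k * Q)) ≠ 0 := by
  induction k generalizing Q with
  | zero => simpa using hQ
  | succ k ih =>
    obtain ⟨Q', hQ', hval⟩ := exists_rotDerivation_linForm_pow_succ_mul z k Q
    rw [Function.iterate_succ_apply, hQ']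
    exact ih (hval ▸ mul_ne_zero (neg_ne_zero.2 k.cast_add_one_ne_zero) hQ)

lemma exists_eq_linForm_pow_angularMult_mul {F : MvPolynomial (Fin 2) ℝ} {n : ℕ}
    (hF : F.IsHomogeneous n) (hF0 : F ≠ 0) (z : ℝ) :
    ∃ Q, circleEval 1 z Q ≠ 0 ∧ F = linForm (Real.cos z) (Real.sin z) ^ angularMult F z * Q := by
  obtain ⟨Q, -, -, hQ, hFQ⟩ :=
    exists_isHomogeneous_eq_linForm_pow_mul hF hF0 (Real.cos_sq_add_sin_sq z)
  exact ⟨Q, by rwa [circleEval_one_eq_evalP], hFQ⟩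

lemma circleEval_iterate_rotDerivation_angularMult_ne_zero {F : MvPolynomial (Fin 2) ℝ} {n : ℕ}
    (hF : F.IsHomogeneous n) (hF0 : F ≠ 0) (z : ℝ) :
    circleEval 1 z (rotDerivation^[angularMult F z] F) ≠ 0 := by
  obtain ⟨Q, hQ, hFQ⟩ := exists_eq_linForm_pow_angularMult_mul hF hF0 z
  have := circleEval_iterate_rotDerivation_linForm_pow_mul_ne_zero (angularMult F z) hQ
  rwa [← hFQ] at this

lemma eventually_sub_mul_sin_sub_neg (z : ℝ) :
    ∀ᶠ t in nhdsWithin z {z}ᶜ, (t - z) * Real.sin (z - t) < 0 := by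
  filter_upwards [self_mem_nhdsWithin,
    nhdsWithin_le_nhds (Ioo_mem_nhds (sub_lt_self z Real.pi_pos)
      (lt_add_of_pos_right z Real.pi_pos))]
    with t hne ht
  rcases lt_or_gt_of_ne hne with hlt | hgt
  · exact mul_neg_of_neg_of_pos (by linarith)
      (Real.sin_pos_of_pos_of_lt_pi (by linarith) (by linarith [ht.1]))
  · exact mul_neg_of_pos_of_neg (by linarith)
      (Real.sin_neg_of_neg_of_neg_pi_lt (by linarith) (by linarith [ht.2]))

lemma eventually_sub_mul_circleEval_mul_rotDerivation_pos {F : MvPolynomial (Fin 2) ℝ} {n : ℕ}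
    (hF : F.IsHomogeneous n) (hF0 : F ≠ 0) {z : ℝ} (hz : circleEval 1 z F = 0) :
    ∀ᶠ t in nhdsWithin z {z}ᶜ,
      0 < (t - z) * (circleEval 1 t F * circleEval 1 t (rotDerivation F)) := by
  obtain ⟨Q, hQ, hFQ⟩ := exists_eq_linForm_pow_angularMult_mul hF hF0 z
  obtain ⟨k, hk⟩ := Nat.exists_eq_add_of_le' ((one_le_angularMult_iff hF hF0 z).2 hz)
  rw [hk] at hFQ
  obtain ⟨Q', hQ', hval⟩ := exists_rotDerivation_linForm_pow_succ_mul z k Q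
  have hneg : ∀ᶠ t in nhdsWithin z {z}ᶜ, circleEval 1 t Q * circleEval 1 t Q' < 0 := by
    refine nhdsWithin_le_nhds (((continuous_circleEval_right 1 Q).mul
      (continuous_circleEval_right 1 Q')).tendsto z |>.eventually (gt_mem_nhds ?_))
    rw [Pi.mul_apply, hval, mul_left_comm]
    exact mul_neg_of_neg_of_pos (by linarith [k.cast_nonneg (α := ℝ)]) (mul_self_pos.2 hQ)
  filter_upwards [hneg, eventually_sub_mul_sin_sub_neg z] with t hQt hsin
  have hprod : (t - z) * (circleEval 1 t F * circleEval 1 t (rotDerivation F)) =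
      (Real.sin (z - t) ^ k) ^ 2 *
        (((t - z) * Real.sin (z - t)) * (circleEval 1 t Q * circleEval 1 t Q')) := by
    rw [hFQ, hQ']
    simp only [map_mul, map_pow, circleEval_linForm]
    ring
  have hpow : Real.sin (z - t) ^ k ≠ 0 := pow_ne_zero _ (right_ne_zero_of_mul hsin.ne)
  rw [hprod]
  exact mul_pos (sq_pos_of_ne_zero hpow) (mul_pos_of_neg_of_neg hsin hQt)

/-! ### Counting zeros by Rolle's theorem -/

lemma exists_strictMono_zeros_of_hasDerivAt {g g' : ℝ → ℝ} (hg : ∀ t, HasDerivAt g (g' t) t)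
    {n : ℕ} {x : Fin (n + 2) → ℝ} (hx : StrictMono x) {a b : ℝ}
    (hmem : ∀ i, x i ∈ Set.Icc a b) (hzero : ∀ i, g (x i) = 0) :
    ∃ y : Fin (n + 1) → ℝ, StrictMono y ∧ (∀ i, y i ∈ Set.Icc a b) ∧ ∀ i, g' (y i) = 0 := by
  have hrolle : ∀ i : Fin (n + 1), ∃ c ∈ Set.Ioo (x i.castSucc) (x i.succ), g' c = 0 := fun i =>
    exists_hasDerivAt_eq_zero (hx i.castSucc_lt_succ)
      (fun t _ => (hg t).continuousAt.continuousWithinAt)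
      ((hzero i.castSucc).trans (hzero i.succ).symm) fun t _ => hg t
  choose y hy hy0 using hrolle
  refine ⟨y, Fin.strictMono_iff_lt_succ.2 fun i => ?_, fun i => ?_, hy0⟩
  · exact (hy i.castSucc).2.trans (Fin.succ_castSucc i ▸ (hy i.succ).1)
  · exact ⟨(hmem _).1.trans (hy i).1.le, (hy i).2.le.trans (hmem _).2⟩

lemma exists_zero_of_strictMono_zeros {g : ℕ → ℝ → ℝ}
    (hg : ∀ k t, HasDerivAt (g k) (g (k + 1) t) t) {n : ℕ} {x : Fin (n + 1) → ℝ}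
    (hx : StrictMono x) {a b : ℝ} (hmem : ∀ i, x i ∈ Set.Icc a b) (hzero : ∀ i, g 0 (x i) = 0) :
    ∃ t ∈ Set.Icc a b, g n t = 0 := by
  induction n generalizing g with
  | zero => exact ⟨x 0, hmem 0, hzero 0⟩
  | succ n ih =>
    obtain ⟨y, hy, hymem, hy0⟩ := exists_strictMono_zeros_of_hasDerivAt (hg 0) hx hmem hzero
    exact ih (g := fun k => g (k + 1)) (fun k => hg (k + 1)) hy hymem hy0

lemma encard_zeros_le_of_forall_ne_zero {g : ℕ → ℝ → ℝ}
    (hg : ∀ k t, HasDerivAt (g k) (g (k + 1) t) t) {n : ℕ} {a b : ℝ}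
    (hne : ∀ t ∈ Set.Icc a b, g n t ≠ 0) : {t ∈ Set.Icc a b | g 0 t = 0}.encard ≤ n := by
  by_contra! hlt
  obtain ⟨Z, hZ, hcard⟩ := Set.exists_subset_encard_eq (Order.add_one_le_of_lt hlt)
  have hfin : Z.Finite := Set.finite_of_encard_eq_coe (k := n + 1) (by simpa using hcard)
  have hcard' : hfin.toFinset.card = n + 1 := by
    rw [hfin.encard_eq_coe_toFinset_card] at hcard
    exact_mod_cast hcard
  have hmem : ∀ i, hfin.toFinset.orderEmbOfFin hcard' i ∈ {t ∈ Set.Icc a b | g 0 t = 0} :=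
    fun i => hZ (hfin.mem_toFinset.1 (Finset.orderEmbOfFin_mem _ hcard' i))
  obtain ⟨t, ht, ht0⟩ := exists_zero_of_strictMono_zeros hg
    (hfin.toFinset.orderEmbOfFin hcard').strictMono (fun i => (hmem i).1) fun i => (hmem i).2
  exact hne t ht ht0

lemma encard_zeros_circleEval_le (P : MvPolynomial (Fin 2) ℝ) {r : ℝ} {n : ℕ} {a b : ℝ}
    (hne : ∀ t ∈ Set.Icc a b, circleEval r t (rotDerivation^[n] P) ≠ 0) :
    {t ∈ Set.Icc a b | circleEval r t P = 0}.encard ≤ n :=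
  encard_zeros_le_of_forall_ne_zero (g := fun k t => circleEval r t (rotDerivation^[k] P))
    (fun k t => Function.iterate_succ_apply' rotDerivation k P ▸ hasDerivAt_circleEval r t _) hne

/-! ### Half turns of an angle -/

/-- The number of half turns in the angle `x`: the `k` for which `k π` is nearest to `x`. -/
noncomputable def halfTurn (x : ℝ) : ℤ := round (x / Real.pi)

lemma abs_sub_halfTurn_mul_pi_le (x : ℝ) : |x - halfTurn x * Real.pi| ≤ Real.pi / 2 := by
  have hround := mul_le_mul_of_nonneg_right (abs_sub_round (x / Real.pi)) Real.pi_pos.le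
  rw [← abs_of_pos Real.pi_pos, ← abs_mul, abs_of_pos Real.pi_pos, sub_mul,
    div_mul_cancel₀ _ Real.pi_ne_zero] at hround
  rw [halfTurn]
  linarith

lemma halfTurn_intCast_mul_pi (k : ℤ) : halfTurn (k * Real.pi) = k := by
  rw [halfTurn, mul_div_cancel_right₀ _ Real.pi_ne_zero, round_intCast]

lemma halfTurn_add_intCast_mul_pi (x : ℝ) (k : ℤ) :
    halfTurn (x + k * Real.pi) = halfTurn x + k := by
  rw [halfTurn, add_div, mul_div_cancel_right₀ _ Real.pi_ne_zero, round_add_intCast, halfTurn]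

lemma two_mul_sin_mul_cos_eq (x : ℝ) :
    2 * (Real.sin x * Real.cos x) = Real.sin (2 * (x - halfTurn x * Real.pi)) := by
  rw [mul_sub, mul_left_comm 2 (halfTurn x : ℝ), Real.sin_sub_int_mul_two_pi,
    Real.sin_two_mul, mul_assoc]

lemma halfTurn_mul_pi_lt_of_sin_mul_cos_pos {x : ℝ} (h : 0 < Real.sin x * Real.cos x) :
    halfTurn x * Real.pi < x := by
  by_contra! hle
  have hx := abs_le.1 (abs_sub_halfTurn_mul_pi_le x)
  have hsin := Real.sin_nonpos_of_nonpos_of_neg_pi_le (x := 2 * (x - halfTurn x * Real.pi))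
    (by linarith) (by linarith)
  rw [← two_mul_sin_mul_cos_eq] at hsin
  linarith

lemma lt_halfTurn_mul_pi_of_sin_mul_cos_neg {x : ℝ} (h : Real.sin x * Real.cos x < 0) :
    x < halfTurn x * Real.pi := by
  by_contra! hle
  have hx := abs_le.1 (abs_sub_halfTurn_mul_pi_le x)
  have hsin := Real.sin_nonneg_of_nonneg_of_le_pi (x := 2 * (x - halfTurn x * Real.pi))
    (by linarith) (by linarith)
  rw [← two_mul_sin_mul_cos_eq] at hsin
  linarith

section ContinuousAngle

variable {ψ : ℝ → ℝ} {a b : ℝ}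

lemma halfTurn_le_of_forall_cos_ne_zero (hψ : ContinuousOn ψ (Set.uIcc a b))
    (hcos : ∀ t ∈ Set.uIcc a b, Real.cos (ψ t) ≠ 0) : halfTurn (ψ b) ≤ halfTurn (ψ a) := by
  by_contra! hlt
  have ha := abs_le.1 (abs_sub_halfTurn_mul_pi_le (ψ a))
  have hb := abs_le.1 (abs_sub_halfTurn_mul_pi_le (ψ b))
  have hlt' : (halfTurn (ψ a) + 1) * Real.pi ≤ halfTurn (ψ b) * Real.pi :=
    mul_le_mul_of_nonneg_right (by exact_mod_cast hlt) Real.pi_pos.le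
  obtain ⟨t, ht, hψt⟩ := intermediate_value_uIcc hψ (Set.mem_uIcc.2 (Or.inl
    (⟨by linarith, by linarith⟩ : Real.pi / 2 + halfTurn (ψ a) * Real.pi ∈ Set.Icc (ψ a) (ψ b))))
  refine hcos t ht (Real.cos_eq_zero_iff.2 ⟨halfTurn (ψ a), ?_⟩)
  rw [hψt]
  ring

lemma halfTurn_eq_of_forall_cos_ne_zero (hψ : Continuous ψ) (hab : a ≤ b)
    (hcos : ∀ t ∈ Set.Icc a b, Real.cos (ψ t) ≠ 0) : halfTurn (ψ b) = halfTurn (ψ a) := by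
  rw [← Set.uIcc_of_le hab] at hcos
  exact le_antisymm (halfTurn_le_of_forall_cos_ne_zero hψ.continuousOn hcos)
    (halfTurn_le_of_forall_cos_ne_zero hψ.continuousOn (Set.uIcc_comm a b ▸ hcos))

lemma card_le_encard_zeros_sin (hψ : Continuous ψ) (hab : a ≤ b) {S : Finset ℤ}
    (hS : ∀ k ∈ S, k * Real.pi ∈ Set.uIcc (ψ a) (ψ b)) :
    S.card ≤ {t ∈ Set.Icc a b | Real.sin (ψ t) = 0}.encard := by
  have himage : (S : Set ℤ) ⊆
      (fun t => halfTurn (ψ t)) '' {t ∈ Set.Icc a b | Real.sin (ψ t) = 0} := by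
    intro k hk
    obtain ⟨t, ht, hψt⟩ := intermediate_value_uIcc hψ.continuousOn (hS k hk)
    refine ⟨t, ⟨Set.uIcc_of_le hab ▸ ht, ?_⟩, ?_⟩
    · rw [hψt, Real.sin_int_mul_pi]
    · simp only [hψt, halfTurn_intCast_mul_pi]
  rw [← Set.encard_coe_eq_coe_finsetCard]
  exact (Set.encard_le_encard himage).trans (Set.encard_image_le _ _)

lemma halfTurn_sub_mem_Icc_of_encard_zeros_le (hψ : Continuous ψ) (hab : a ≤ b) {n : ℕ}
    (ha : Real.sin (ψ a) * Real.cos (ψ a) < 0) (hb : 0 < Real.sin (ψ b) * Real.cos (ψ b))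
    (hn : {t ∈ Set.Icc a b | Real.sin (ψ t) = 0}.encard ≤ n) :
    halfTurn (ψ b) - halfTurn (ψ a) ∈ Set.Icc (-(n + 1) : ℤ) (n - 1) := by
  have hcard : ∀ {S : Finset ℤ}, (∀ k ∈ S, k * Real.pi ∈ Set.uIcc (ψ a) (ψ b)) → S.card ≤ n :=
    fun hS => by exact_mod_cast (card_le_encard_zeros_sin hψ hab hS).trans hn
  have hmono : ∀ {j k : ℤ}, j ≤ k → j * Real.pi ≤ k * Real.pi := fun h =>
    mul_le_mul_of_nonneg_right (by exact_mod_cast h) Real.pi_pos.le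
  constructor
  · have hIoo : (Finset.Ioo (halfTurn (ψ b)) (halfTurn (ψ a))).card ≤ n := by
      refine hcard fun k hk => Set.mem_uIcc.2 (Or.inr ?_)
      obtain ⟨hbk, hka⟩ := Finset.mem_Ioo.1 hk
      have hb' := abs_le.1 (abs_sub_halfTurn_mul_pi_le (ψ b))
      have ha' := abs_le.1 (abs_sub_halfTurn_mul_pi_le (ψ a))
      have hbk' := hmono (Int.add_one_le_iff.2 hbk)
      have hka' := hmono (Int.add_one_le_iff.2 hka)
      push_cast at hbk' hka'
      constructor <;> linarith [Real.pi_pos]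
    rw [Int.card_Ioo] at hIoo
    omega
  · have hIcc : (Finset.Icc (halfTurn (ψ a)) (halfTurn (ψ b))).card ≤ n := by
      refine hcard fun k hk => Set.mem_uIcc.2 (Or.inl ?_)
      obtain ⟨hak, hkb⟩ := Finset.mem_Icc.1 hk
      exact ⟨(lt_halfTurn_mul_pi_of_sin_mul_cos_neg ha).le.trans (hmono hak),
        (hmono hkb).trans (halfTurn_mul_pi_lt_of_sin_mul_cos_pos hb).le⟩
    rw [Int.card_Icc] at hIcc
    omega

end ContinuousAngle

/-! ### The angle of the gradient in the polar frame on large circles -/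

/-- The leading form `f_d` of a polynomial `f` of degree `d`. -/
noncomputable def leadingForm (f : MvPolynomial (Fin 2) ℝ) : MvPolynomial (Fin 2) ℝ :=
  homogeneousComponent f.totalDegree f

lemma isHomogeneous_leadingForm (f : MvPolynomial (Fin 2) ℝ) :
    (leadingForm f).IsHomogeneous f.totalDegree :=
  homogeneousComponent_isHomogeneous _ _

lemma leadingForm_ne_zero {f : MvPolynomial (Fin 2) ℝ} (hd : f.totalDegree ≠ 0) :
    leadingForm f ≠ 0 :=
  homogeneousComponent_totalDegree_ne_zero_s3 fun hf => hd (hf ▸ totalDegree_zero)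

lemma totalDegree_ne_zero_of_one_le_realDegreeOf {f : MvPolynomial (Fin 2) ℝ}
    (h : 1 ≤ realDegreeOf (leadingForm f)) : f.totalDegree ≠ 0 := by
  intro hd
  obtain ⟨t, ht⟩ := exists_circleEval_eq_zero (isHomogeneous_leadingForm f) h
  apply ne_zero_of_one_le_realDegreeOf h
  rw [leadingForm, hd, homogeneousComponent_zero, circleEval, eval_C] at ht
  rw [leadingForm, hd, homogeneousComponent_zero, ht, C_0]

/-- `ψ` is a continuous choice of the angle of `grad f` along the circle of radius `r`, measured
in the polar frame: there the gradient has the components `f_r = (r ∂_r f) / r` and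
`(∂_t f) / r`. -/
structure IsPolarGradAngle (f : MvPolynomial (Fin 2) ℝ) (r : ℝ) (ψ : ℝ → ℝ) : Prop where
  continuous : Continuous ψ
  exists_polar : ∀ t, ∃ ρ > 0, circleEval r t (eulerDerivation f) = ρ * Real.cos (ψ t) ∧
    circleEval r t (rotDerivation f) = ρ * Real.sin (ψ t)

namespace IsPolarGradAngle

variable {f : MvPolynomial (Fin 2) ℝ} {r : ℝ} {ψ : ℝ → ℝ}

lemma cos_ne_zero (hψ : IsPolarGradAngle f r ψ) {t : ℝ}
    (h : circleEval r t (eulerDerivation f) ≠ 0) : Real.cos (ψ t) ≠ 0 := by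
  obtain ⟨ρ, -, hcos, -⟩ := hψ.exists_polar t
  exact right_ne_zero_of_mul (hcos ▸ h)

lemma circleEval_rotDerivation_eq_zero (hψ : IsPolarGradAngle f r ψ) {t : ℝ}
    (h : Real.sin (ψ t) = 0) : circleEval r t (rotDerivation f) = 0 := by
  obtain ⟨ρ, -, -, hsin⟩ := hψ.exists_polar t
  rw [hsin, h, mul_zero]

lemma mul_sin_mul_cos_pos (hψ : IsPolarGradAngle f r ψ) {t x y : ℝ}
    (hx : 0 < x * circleEval r t (eulerDerivation f))
    (hy : 0 < y * circleEval r t (rotDerivation f)) :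
    0 < (x * y) * (Real.sin (ψ t) * Real.cos (ψ t)) := by
  obtain ⟨ρ, hρ, hcos, hsin⟩ := hψ.exists_polar t
  rw [hcos] at hx
  rw [hsin] at hy
  refine pos_of_mul_pos_right ?_ (sq_nonneg ρ)
  calc 0 < (x * (ρ * Real.cos (ψ t))) * (y * (ρ * Real.sin (ψ t))) := mul_pos hx hy
    _ = ρ ^ 2 * ((x * y) * (Real.sin (ψ t) * Real.cos (ψ t))) := by ring

end IsPolarGradAngle

lemma eventually_forall_leadingForm_mul_eulerDerivation_pos {f : MvPolynomial (Fin 2) ℝ}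
    (hd : f.totalDegree ≠ 0) {K : Set ℝ} (hK : IsCompact K)
    (hne : ∀ t ∈ K, circleEval 1 t (leadingForm f) ≠ 0) :
    ∀ᶠ r in atTop, ∀ t ∈ K,
      0 < circleEval 1 t (leadingForm f) * circleEval r t (eulerDerivation f) := by
  have hd' : (0 : ℝ) < f.totalDegree := by exact_mod_cast Nat.pos_of_ne_zero hd
  have hlead : ∀ t, circleEval 1 t (homogeneousComponent f.totalDegree (eulerDerivation f)) =
      f.totalDegree * circleEval 1 t (leadingForm f) := fun t => by
    rw [homogeneousComponent_eulerDerivation, map_nsmul, nsmul_eq_mul, leadingForm]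
  filter_upwards [eventually_forall_circleEval_mul_pos (totalDegree_eulerDerivation_le f) hK
    fun t ht => hlead t ▸ mul_ne_zero hd'.ne' (hne t ht)] with r hr t ht
  have := hr t ht
  rw [hlead, mul_assoc] at this
  exact pos_of_mul_pos_right this hd'.le

lemma eventually_forall_iterate_rotDerivation_mul_pos (f : MvPolynomial (Fin 2) ℝ) (k : ℕ)
    {K : Set ℝ} (hK : IsCompact K)
    (hne : ∀ t ∈ K, circleEval 1 t (rotDerivation^[k] (leadingForm f)) ≠ 0) :
    ∀ᶠ r in atTop, ∀ t ∈ K,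
      0 < circleEval 1 t (rotDerivation^[k] (leadingForm f)) *
        circleEval r t (rotDerivation^[k] f) := by
  have := eventually_forall_circleEval_mul_pos (totalDegree_iterate_rotDerivation_le k f) hK
  rw [homogeneousComponent_iterate_rotDerivation] at this
  exact this hne

lemma eventually_leadingForm_mul_sin_mul_cos_pos {f : MvPolynomial (Fin 2) ℝ}
    (hd : f.totalDegree ≠ 0) {t : ℝ}
    (ht : circleEval 1 t (leadingForm f) * circleEval 1 t (rotDerivation (leadingForm f)) ≠ 0) :
    ∀ᶠ r in atTop, ∀ ψ, IsPolarGradAngle f r ψ →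
      0 < (circleEval 1 t (leadingForm f) * circleEval 1 t (rotDerivation (leadingForm f))) *
        (Real.sin (ψ t) * Real.cos (ψ t)) := by
  filter_upwards [eventually_forall_leadingForm_mul_eulerDerivation_pos hd
      (isCompact_singleton (x := t)) (by simpa using left_ne_zero_of_mul ht),
    eventually_forall_iterate_rotDerivation_mul_pos f 1
      (isCompact_singleton (x := t)) (by simpa using right_ne_zero_of_mul ht)] with r hE hJ ψ hψ
  exact hψ.mul_sin_mul_cos_pos (hE t rfl) (hJ t rfl)

lemma eventually_encard_zeros_sin_le (f : MvPolynomial (Fin 2) ℝ) {n : ℕ} {a b : ℝ}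
    (hne : ∀ t ∈ Set.Icc a b, circleEval 1 t (rotDerivation^[n + 1] (leadingForm f)) ≠ 0) :
    ∀ᶠ r in atTop, ∀ ψ, IsPolarGradAngle f r ψ →
      {t ∈ Set.Icc a b | Real.sin (ψ t) = 0}.encard ≤ n := by
  filter_upwards [eventually_forall_iterate_rotDerivation_mul_pos f (n + 1) isCompact_Icc hne]
    with r hr ψ hψ
  calc {t ∈ Set.Icc a b | Real.sin (ψ t) = 0}.encard
      ≤ {t ∈ Set.Icc a b | circleEval r t (rotDerivation f) = 0}.encard :=
        Set.encard_le_encard fun _ ht => ⟨ht.1, hψ.circleEval_rotDerivation_eq_zero ht.2⟩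
    _ ≤ n := encard_zeros_circleEval_le (rotDerivation f) fun t ht =>
        right_ne_zero_of_mul (hr t ht).ne'

/-- On all sufficiently large circles, the polar angle of `grad f` gains at least `m` and at most
`n` half turns from the direction `a` to the direction `b`. -/
def HalfTurnsWithin (f : MvPolynomial (Fin 2) ℝ) (a b : ℝ) (m n : ℤ) : Prop :=
  ∀ᶠ r in atTop, ∀ ψ, IsPolarGradAngle f r ψ →
    halfTurn (ψ b) - halfTurn (ψ a) ∈ Set.Icc m n

namespace HalfTurnsWithin

variable {f : MvPolynomial (Fin 2) ℝ} {a b z : ℝ}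

lemma trans {c : ℝ} {m n m' n' : ℤ} (hab : HalfTurnsWithin f a b m n)
    (hbc : HalfTurnsWithin f b c m' n') : HalfTurnsWithin f a c (m + m') (n + n') := by
  filter_upwards [hab, hbc] with r hab hbc ψ hψ
  obtain ⟨hm, hn⟩ := hab ψ hψ
  obtain ⟨hm', hn'⟩ := hbc ψ hψ
  exact ⟨by linarith, by linarith⟩

lemma mono {m n m' n' : ℤ} (h : HalfTurnsWithin f a b m n) (hm : m' ≤ m) (hn : n ≤ n') :
    HalfTurnsWithin f a b m' n' :=
  Eventually.mono h fun _ hr ψ hψ => Set.Icc_subset_Icc hm hn (hr ψ hψ)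

lemma of_forall_ne_zero (hd : f.totalDegree ≠ 0) (hab : a ≤ b)
    (hne : ∀ t ∈ Set.Icc a b, circleEval 1 t (leadingForm f) ≠ 0) :
    HalfTurnsWithin f a b 0 0 := by
  filter_upwards [eventually_forall_leadingForm_mul_eulerDerivation_pos hd isCompact_Icc hne]
    with r hr ψ hψ
  rw [halfTurn_eq_of_forall_cos_ne_zero hψ.continuous hab fun t ht =>
    hψ.cos_ne_zero (right_ne_zero_of_mul (hr t ht).ne'), sub_self, Set.Icc_self]
  rfl

lemma of_iterate_rotDerivation_ne_zero (hd : f.totalDegree ≠ 0) (hab : a ≤ b) {n : ℕ}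
    (ha : circleEval 1 a (leadingForm f) * circleEval 1 a (rotDerivation (leadingForm f)) < 0)
    (hb : 0 < circleEval 1 b (leadingForm f) * circleEval 1 b (rotDerivation (leadingForm f)))
    (hne : ∀ t ∈ Set.Icc a b, circleEval 1 t (rotDerivation^[n + 1] (leadingForm f)) ≠ 0) :
    HalfTurnsWithin f a b (-(n + 1)) (n - 1) := by
  filter_upwards [eventually_leadingForm_mul_sin_mul_cos_pos hd ha.ne,
    eventually_leadingForm_mul_sin_mul_cos_pos hd hb.ne', eventually_encard_zeros_sin_le f hne]
    with r hra hrb hzeros ψ hψ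
  exact halfTurn_sub_mem_Icc_of_encard_zeros_le hψ.continuous hab
    (neg_of_mul_pos_right (hra ψ hψ) ha.le) (pos_of_mul_pos_right (hrb ψ hψ) hb.le) (hzeros ψ hψ)

lemma eventually_of_zero (hd : f.totalDegree ≠ 0) (hz : circleEval 1 z (leadingForm f) = 0) :
    ∀ᶠ δ in nhdsWithin 0 (Set.Ioi 0),
      (∀ t ∈ Set.Icc (z - δ) (z + δ), t ≠ z → circleEval 1 t (leadingForm f) ≠ 0) ∧
      HalfTurnsWithin f (z - δ) (z + δ) (-angularMult (leadingForm f) z)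
        (angularMult (leadingForm f) z - 2) := by
  have hhom := isHomogeneous_leadingForm f
  have hF0 := leadingForm_ne_zero hd
  obtain ⟨n, hn⟩ := Nat.exists_eq_add_of_le' ((one_le_angularMult_iff hhom hF0 z).2 hz)
  have hsign := eventually_sub_mul_circleEval_mul_rotDerivation_pos hhom hF0 hz
  have hiter : ∀ᶠ t in nhds z, circleEval 1 t (rotDerivation^[n + 1] (leadingForm f)) ≠ 0 :=
    (continuous_circleEval_right 1 _).continuousAt.eventually_ne
      (hn ▸ circleEval_iterate_rotDerivation_angularMult_ne_zero hhom hF0 z)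
  obtain ⟨ε, hε, hnear⟩ := Metric.nhds_basis_closedBall.eventually_iff.1
    ((eventually_nhdsWithin_iff.1 hsign).and hiter)
  filter_upwards [Ioo_mem_nhdsGT hε] with δ hδ
  have hball : Set.Icc (z - δ) (z + δ) ⊆ Metric.closedBall z ε := by
    rw [Real.closedBall_eq_Icc]
    exact Set.Icc_subset_Icc (by linarith [hδ.2]) (by linarith [hδ.2])
  have hpos : ∀ t ∈ Set.Icc (z - δ) (z + δ), t ≠ z → 0 < (t - z) *
      (circleEval 1 t (leadingForm f) * circleEval 1 t (rotDerivation (leadingForm f))) :=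
    fun t ht => (hnear (hball ht)).1
  refine ⟨fun t ht htz => left_ne_zero_of_mul (right_ne_zero_of_mul (hpos t ht htz).ne'), ?_⟩
  have hleft := hpos (z - δ) ⟨le_rfl, by linarith [hδ.1]⟩ (by linarith [hδ.1])
  have hright := hpos (z + δ) ⟨by linarith [hδ.1], le_rfl⟩ (by linarith [hδ.1])
  have hlocal := of_iterate_rotDerivation_ne_zero hd (by linarith [hδ.1])
    (neg_of_mul_pos_right hleft (by linarith [hδ.1]))
    (pos_of_mul_pos_right hright (by linarith [hδ.1])) fun t ht => (hnear (hball ht)).2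
  rw [hn]
  exact hlocal.mono (by push_cast; linarith) (by push_cast; linarith)

lemma of_zeros_eq (hd : f.totalDegree ≠ 0) (ha : circleEval 1 a (leadingForm f) ≠ 0)
    (Z : Finset ℝ) (hab : a ≤ b) (hb : circleEval 1 b (leadingForm f) ≠ 0)
    (hZ : ∀ t, t ∈ Z ↔ t ∈ Set.Icc a b ∧ circleEval 1 t (leadingForm f) = 0) :
    HalfTurnsWithin f a b (-∑ z ∈ Z, (angularMult (leadingForm f) z : ℤ))
      (∑ z ∈ Z, ((angularMult (leadingForm f) z : ℤ) - 2)) := by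
  induction Z using Finset.induction_on_max generalizing b with
  | empty =>
    exact of_forall_ne_zero hd hab fun t ht h0 => Finset.notMem_empty t ((hZ t).2 ⟨ht, h0⟩)
  | insert z Z hmax ih =>
    obtain ⟨hzab, hz⟩ := (hZ z).1 (Finset.mem_insert_self z Z)
    have haz : a < z := lt_of_le_of_ne hzab.1 fun h => ha (h ▸ hz)
    have hzb : z < b := lt_of_le_of_ne hzab.2 fun h => hb (h ▸ hz)
    obtain ⟨δ, ⟨hne, hlocal⟩, hδ⟩ := ((eventually_of_zero hd hz).and
      (Ioo_mem_nhdsGT (lt_min (sub_pos.2 haz) (sub_pos.2 hzb)))).exists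
    obtain ⟨hδa, hδb⟩ := lt_min_iff.1 hδ.2
    have hbefore : HalfTurnsWithin f a (z - δ) (-∑ z ∈ Z, (angularMult (leadingForm f) z : ℤ))
        (∑ z ∈ Z, ((angularMult (leadingForm f) z : ℤ) - 2)) := by
      refine ih (by linarith) (hne _ ⟨le_rfl, by linarith [hδ.1]⟩ (by linarith [hδ.1])) fun t => ?_
      refine ⟨fun ht => ?_, fun ⟨ht, h0⟩ => ?_⟩
      · obtain ⟨htab, h0⟩ := (hZ t).1 (Finset.mem_insert_of_mem ht)
        refine ⟨⟨htab.1, not_lt.1 fun hlt => ?_⟩, h0⟩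
        exact hne t ⟨hlt.le, by linarith [hmax t ht, hδ.1]⟩ (hmax t ht).ne h0
      · have htz : t < z := by linarith [ht.2, hδ.1]
        exact Finset.mem_of_mem_insert_of_ne ((hZ t).2 ⟨⟨ht.1, by linarith⟩, h0⟩) htz.ne
    have hafter : HalfTurnsWithin f (z + δ) b 0 0 := by
      refine of_forall_ne_zero hd (by linarith) fun t ht h0 => ?_
      have hzt : z < t := by linarith [ht.1, hδ.1]
      rcases Finset.mem_insert.1 ((hZ t).2 ⟨⟨by linarith, ht.2⟩, h0⟩) with htz | htZ
      · exact hzt.ne' htz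
      · exact (hmax t htZ).not_gt hzt
    have hz_notMem : z ∉ Z := fun hzZ => (hmax z hzZ).false
    rw [Finset.sum_insert hz_notMem, Finset.sum_insert hz_notMem]
    exact ((hbefore.trans hlocal).trans hafter).mono (by linarith) (by linarith)

lemma half_circle (hD : 1 ≤ realDegreeOf (leadingForm f))
    (ha : circleEval 1 a (leadingForm f) ≠ 0) :
    HalfTurnsWithin f a (a + Real.pi) (-realDegreeOf (leadingForm f))
      (realDegreeOf (leadingForm f) - 2) := by
  have hd := totalDegree_ne_zero_of_one_le_realDegreeOf hD
  have hhom := isHomogeneous_leadingForm f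
  have hF0 := leadingForm_ne_zero hd
  have hpi : ∀ t, circleEval 1 (t + Real.pi) (leadingForm f) = 0 ↔
      circleEval 1 t (leadingForm f) = 0 := fun t => by
    rw [circleEval_one_add_pi hhom, mul_eq_zero, or_iff_right (pow_ne_zero _ (by norm_num))]
  have hfin := finite_setOf_circleEval_eq_zero hhom hF0 a
  have hZ : ∀ t, t ∈ hfin.toFinset ↔
      t ∈ Set.Icc a (a + Real.pi) ∧ circleEval 1 t (leadingForm f) = 0 := fun t => by
    rw [hfin.mem_toFinset]
    refine ⟨fun ⟨ht, h0⟩ => ⟨Set.Ioo_subset_Icc_self ht, h0⟩, fun ⟨ht, h0⟩ => ⟨⟨?_, ?_⟩, h0⟩⟩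
    · exact lt_of_le_of_ne ht.1 fun h => ha (h ▸ h0)
    · exact lt_of_le_of_ne ht.2 fun h => ha ((hpi a).1 (h ▸ h0))
  have hnonempty : hfin.toFinset.Nonempty := by
    obtain ⟨t, ht⟩ := exists_circleEval_eq_zero hhom hD
    have hperiodic : Function.Periodic (fun t => circleEval 1 t (leadingForm f) = 0) Real.pi :=
      fun t => propext (hpi t)
    obtain ⟨s, hs, hts⟩ := hperiodic.exists_mem_Ico Real.pi_pos t a
    exact ⟨s, (hZ s).2 ⟨Set.Ico_subset_Icc_self hs, hts.mp ht⟩⟩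
  have hsum : ∑ z ∈ hfin.toFinset, (angularMult (leadingForm f) z : ℤ) ≤
      realDegreeOf (leadingForm f) := by
    exact_mod_cast sum_angularMult_le_realDegreeOf hhom hF0 (a := a)
      fun z hz => ((hfin.mem_toFinset).1 hz).1
  refine (of_zeros_eq hd ha _ (by linarith [Real.pi_pos]) (fun h => ha ((hpi a).1 h)) hZ).mono
    (neg_le_neg hsum) ?_
  rw [Finset.sum_sub_distrib, Finset.sum_const, nsmul_eq_mul]
  have hcard : (1 : ℤ) ≤ hfin.toFinset.card := by exact_mod_cast hnonempty.card_pos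
  linarith

lemma full_circle (hD : 1 ≤ realDegreeOf (leadingForm f))
    (ha : circleEval 1 a (leadingForm f) ≠ 0) :
    HalfTurnsWithin f a (a + 2 * Real.pi) (-2 * realDegreeOf (leadingForm f))
      (2 * realDegreeOf (leadingForm f) - 4) := by
  have hpi : circleEval 1 (a + Real.pi) (leadingForm f) ≠ 0 := by
    rw [circleEval_one_add_pi (isHomogeneous_leadingForm f)]
    exact mul_ne_zero (pow_ne_zero _ (by norm_num)) ha
  have := (half_circle hD ha).trans (half_circle hD hpi)
  rw [add_assoc, ← two_mul Real.pi] at this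
  exact this.mono (by linarith) (by linarith)

end HalfTurnsWithin

/-! ### The index as the variation of an angle -/

lemma exists_angle {z z' : ℝ → ℂ} (hz : ∀ t, HasDerivAt z (z' t) t) (hz' : Continuous z')
    (hne : ∀ t, z t ≠ 0) :
    ∃ φ : ℝ → ℝ, (∀ t, HasDerivAt φ (z' t / z t).im t) ∧
      ∀ t, z t = ‖z t‖ * Complex.exp (φ t * Complex.I) := by
  have hcont : Continuous fun t => z' t / z t :=
    hz'.div (continuous_iff_continuousAt.2 fun t => (hz t).continuousAt) hne
  set L : ℝ → ℂ := fun t => ∫ s in (0 : ℝ)..t, z' s / z s with hL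
  have hL' (t : ℝ) : HasDerivAt L (z' t / z t) t := (hcont.integral_hasStrictDerivAt 0 t).hasDerivAt
  have hderiv (t : ℝ) : HasDerivAt (fun s => z s * Complex.exp (-L s)) 0 t := by
    refine ((hz t).fun_mul (hL' t).fun_neg.cexp).congr_deriv ?_
    linear_combination (-Complex.exp (-L t)) * mul_div_cancel₀ (z' t) (hne t)
  have hexp (t : ℝ) : z t = z 0 * Complex.exp (L t) := by
    have hconst := is_const_of_deriv_eq_zero (fun s => (hderiv s).differentiableAt)
      (fun s => (hderiv s).deriv) t 0
    simp only [hL, intervalIntegral.integral_same, neg_zero, Complex.exp_zero, mul_one] at hconst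
    rw [← hconst, mul_assoc, ← Complex.exp_add, neg_add_cancel, Complex.exp_zero, mul_one]
  refine ⟨fun t => (z 0).arg + (L t).im,
    fun t => (Complex.imCLM.hasFDerivAt.comp_hasDerivAt t (hL' t)).const_add _, fun t => ?_⟩
  calc z t = ‖z 0‖ * Complex.exp ((z 0).arg * Complex.I) *
        Complex.exp ((L t).re + (L t).im * Complex.I) := by
        rw [Complex.norm_mul_exp_arg_mul_I, Complex.re_add_im, ← hexp]
    _ = ‖z 0‖ * Complex.exp (L t).re *
        Complex.exp (((z 0).arg + (L t).im : ℝ) * Complex.I) := by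
        push_cast
        rw [add_mul, Complex.exp_add, Complex.exp_add]
        ring
    _ = ‖z t‖ * Complex.exp (((z 0).arg + (L t).im : ℝ) * Complex.I) := by
        rw [hexp t, norm_mul, Complex.norm_exp]
        push_cast
        rfl

/-- The value of the vector field `(P, Q)` at the point with polar coordinates `(r, t)`, as a
complex number. -/
noncomputable def circleField (P Q : MvPolynomial (Fin 2) ℝ) (r t : ℝ) : ℂ :=
  ⟨circleEval r t P, circleEval r t Q⟩

lemma circleField_eq_add_mul_I (P Q : MvPolynomial (Fin 2) ℝ) (r t : ℝ) :
    circleField P Q r t = (circleEval r t P : ℂ) + (circleEval r t Q : ℂ) * Complex.I :=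
  Complex.mk_eq_add_mul_I _ _

lemma hasDerivAt_circleField (P Q : MvPolynomial (Fin 2) ℝ) (r t : ℝ) :
    HasDerivAt (circleField P Q r) (circleField (rotDerivation P) (rotDerivation Q) r t) t := by
  rw [funext (circleField_eq_add_mul_I P Q r), circleField_eq_add_mul_I]
  exact (hasDerivAt_circleEval r t P).ofReal_comp.add
    ((hasDerivAt_circleEval r t Q).ofReal_comp.mul_const Complex.I)

lemma continuous_circleField (P Q : MvPolynomial (Fin 2) ℝ) {X : Type*} [TopologicalSpace X]
    {r t : X → ℝ} (hr : Continuous r) (ht : Continuous t) :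
    Continuous fun x => circleField P Q (r x) (t x) := by
  simp only [circleField_eq_add_mul_I]
  exact (Complex.continuous_ofReal.comp (continuous_circleEval P hr ht)).add
    ((Complex.continuous_ofReal.comp (continuous_circleEval Q hr ht)).mul continuous_const)

lemma periodic_circleField (P Q : MvPolynomial (Fin 2) ℝ) (r : ℝ) :
    Function.Periodic (circleField P Q r) (2 * Real.pi) := fun t => by
  simp only [circleField, circleEval, Real.cos_add_two_pi, Real.sin_add_two_pi]

/-- The gradient of `f` along the circle of radius `r`, as a complex number. -/
noncomputable def circleGrad (f : MvPolynomial (Fin 2) ℝ) : ℝ → ℝ → ℂ :=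
  circleField (pderiv 0 f) (pderiv 1 f)

/-- The derivative of `circleGrad` with respect to the angle. -/
noncomputable def circleGradDeriv (f : MvPolynomial (Fin 2) ℝ) : ℝ → ℝ → ℂ :=
  circleField (rotDerivation (pderiv 0 f)) (rotDerivation (pderiv 1 f))

/-- The angular velocity of `grad f` along the circle of radius `r`; meaningful where the gradient
does not vanish. -/
noncomputable def gradAngularVelocity (f : MvPolynomial (Fin 2) ℝ) (r t : ℝ) : ℝ :=
  (circleGradDeriv f r t / circleGrad f r t).im

lemma continuous_gradAngularVelocity {f : MvPolynomial (Fin 2) ℝ} {X : Type*} [TopologicalSpace X]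
    {r t : X → ℝ} (hr : Continuous r) (ht : Continuous t)
    (hne : ∀ x, circleGrad f (r x) (t x) ≠ 0) :
    Continuous fun x => gradAngularVelocity f (r x) (t x) :=
  Complex.continuous_im.comp
    ((continuous_circleField _ _ hr ht).div (continuous_circleField _ _ hr ht) hne)

lemma periodic_gradAngularVelocity (f : MvPolynomial (Fin 2) ℝ) (r : ℝ) :
    Function.Periodic (gradAngularVelocity f r) (2 * Real.pi) := fun t => by
  simp only [gradAngularVelocity, circleGradDeriv, circleGrad, (periodic_circleField _ _ r) t]

lemma gradIndex_eq_integral (f : MvPolynomial (Fin 2) ℝ) (r : ℝ) :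
    gradIndex f r = (1 / (2 * Real.pi)) *
      ∫ t in (0 : ℝ)..(2 * Real.pi), gradAngularVelocity f r t := by
  rw [gradIndex]
  congr 2
  ext t
  have hu : HasDerivAt (uFun f r) _ t := hasDerivAt_circleEval r t (pderiv 0 f)
  have hv : HasDerivAt (vFun f r) _ t := hasDerivAt_circleEval r t (pderiv 1 f)
  rw [hu.deriv, hv.deriv, gradAngularVelocity, Complex.div_im, Complex.normSq_apply, ← sub_div,
    ← pow_two, ← pow_two, mul_comm (uFun f r t), mul_comm (vFun f r t)]
  rfl

lemma angle_add_two_pi_sub {f : MvPolynomial (Fin 2) ℝ} {r : ℝ}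
    (hne : ∀ t, circleGrad f r t ≠ 0) {φ : ℝ → ℝ}
    (hφ : ∀ t, HasDerivAt φ (gradAngularVelocity f r t) t) (a : ℝ) :
    φ (a + 2 * Real.pi) - φ a = 2 * Real.pi * gradIndex f r := by
  have hcont : Continuous (gradAngularVelocity f r) :=
    continuous_gradAngularVelocity continuous_const continuous_id hne
  rw [gradIndex_eq_integral, ← mul_assoc, mul_one_div_cancel Real.two_pi_pos.ne', one_mul,
    ← intervalIntegral.integral_eq_sub_of_hasDerivAt (fun t _ => hφ t)
      (hcont.intervalIntegrable _ _),
    (periodic_gradAngularVelocity f r).intervalIntegral_add_eq a 0, zero_add]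

lemma exists_gradAngle {f : MvPolynomial (Fin 2) ℝ} {r : ℝ} (hne : ∀ t, circleGrad f r t ≠ 0) :
    ∃ φ : ℝ → ℝ, Continuous φ ∧ (∀ a, φ (a + 2 * Real.pi) - φ a = 2 * Real.pi * gradIndex f r) ∧
      ∀ t, circleGrad f r t = ‖circleGrad f r t‖ * Complex.exp (φ t * Complex.I) := by
  obtain ⟨φ, hφ, hexp⟩ := exists_angle (hasDerivAt_circleField (pderiv 0 f) (pderiv 1 f) r)
    (continuous_circleField _ _ continuous_const continuous_id) hne
  exact ⟨φ, continuous_iff_continuousAt.2 fun t => (hφ t).continuousAt,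
    angle_add_two_pi_sub hne hφ, hexp⟩

lemma exists_intCast_eq_gradIndex {f : MvPolynomial (Fin 2) ℝ} {r : ℝ}
    (hne : ∀ t, circleGrad f r t ≠ 0) : ∃ i : ℤ, (i : ℝ) = gradIndex f r := by
  obtain ⟨φ, -, hturn, hexp⟩ := exists_gradAngle hne
  have hzero : circleGrad f r (2 * Real.pi) = circleGrad f r 0 :=
    (periodic_circleField _ _ r).eq
  have hsame : Complex.exp (φ (2 * Real.pi) * Complex.I) = Complex.exp (φ 0 * Complex.I) := by
    have h := (hexp (2 * Real.pi)).symm.trans (hzero.trans (hexp 0))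
    rw [hzero] at h
    exact mul_left_cancel₀ (Complex.ofReal_ne_zero.2 (norm_ne_zero_iff.2 (hne 0))) h
  obtain ⟨i, hi⟩ := Complex.exp_eq_exp_iff_exists_int.1 hsame
  have hangle : φ (2 * Real.pi) = φ 0 + i * (2 * Real.pi) := by
    simpa using congrArg Complex.im hi
  have hindex := hturn 0
  rw [zero_add, hangle] at hindex
  exact ⟨i, mul_left_cancel₀ Real.two_pi_pos.ne' (by linear_combination hindex)⟩

lemma continuousOn_gradIndex (f : MvPolynomial (Fin 2) ℝ) :
    ContinuousOn (gradIndex f) {r | ∀ t, circleGrad f r t ≠ 0} := by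
  rw [continuousOn_iff_continuous_domRestrict]
  simp only [Set.domRestrict_def, gradIndex_eq_integral]
  exact continuous_const.mul
    (intervalIntegral.continuous_parametric_intervalIntegral_of_continuous'
      (continuous_gradAngularVelocity (continuous_subtype_val.comp continuous_fst) continuous_snd
        fun p : {r | ∀ t, circleGrad f r t ≠ 0} × ℝ => p.1.2 p.2) _ _)

lemma gradIndex_eq_of_isPreconnected {f : MvPolynomial (Fin 2) ℝ} {S : Set ℝ}
    (hS : IsPreconnected S) (hne : ∀ r ∈ S, ∀ t, circleGrad f r t ≠ 0) {r s : ℝ} (hr : r ∈ S)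
    (hs : s ∈ S) : gradIndex f r = gradIndex f s := by
  have hint : gradIndex f '' S ⊆ Set.range ((↑) : ℤ → ℝ) :=
    Set.image_subset_iff.2 fun r hr => exists_intCast_eq_gradIndex (hne r hr)
  exact (Set.countable_range _).isTotallyDisconnected _ hint
    (hS.image _ ((continuousOn_gradIndex f).mono hne)) ⟨r, hr, rfl⟩ ⟨s, hs, rfl⟩

lemma circleGrad_ne_zero_of_le {f : MvPolynomial (Fin 2) ℝ} {R : ℝ} (hR : 0 ≤ R)
    (hadm : ∀ p : ℝ × ℝ, IsCriticalPt f p → p.1 ^ 2 + p.2 ^ 2 < R ^ 2) {r : ℝ} (hr : R ≤ r)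
    (t : ℝ) : circleGrad f r t ≠ 0 := by
  intro hzero
  have hcrit : IsCriticalPt f (r * Real.cos t, r * Real.sin t) :=
    ⟨congrArg Complex.re hzero, congrArg Complex.im hzero⟩
  refine (hadm _ hcrit).not_ge ?_
  calc R ^ 2 ≤ r ^ 2 := pow_le_pow_left₀ hR hr 2
    _ = (r * Real.cos t) ^ 2 + (r * Real.sin t) ^ 2 := by
      linear_combination -r ^ 2 * Real.cos_sq_add_sin_sq t

lemma circleEval_eulerDerivation (f : MvPolynomial (Fin 2) ℝ) (r t : ℝ) :
    circleEval r t (eulerDerivation f) =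
      r * (Real.cos t * (circleGrad f r t).re + Real.sin t * (circleGrad f r t).im) := by
  simp only [circleEval, eulerDerivation, circleGrad, circleField, Derivation.coe_add,
    Derivation.coe_smul, Pi.add_apply, Pi.smul_apply, smul_eq_mul, map_add, map_mul, eval_X,
    Matrix.cons_val_zero, Matrix.cons_val_one]
  ring

lemma circleEval_rotDerivation (f : MvPolynomial (Fin 2) ℝ) (r t : ℝ) :
    circleEval r t (rotDerivation f) =
      r * (Real.cos t * (circleGrad f r t).im - Real.sin t * (circleGrad f r t).re) := by
  simp only [circleEval, rotDerivation, circleGrad, circleField, Derivation.coe_sub,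
    Derivation.coe_smul, Pi.sub_apply, Pi.smul_apply, smul_eq_mul, map_sub, map_mul, eval_X,
    Matrix.cons_val_zero, Matrix.cons_val_one]
  ring

lemma exists_isPolarGradAngle {f : MvPolynomial (Fin 2) ℝ} {r : ℝ} (hr : 0 < r)
    (hne : ∀ t, circleGrad f r t ≠ 0) :
    ∃ ψ, IsPolarGradAngle f r ψ ∧
      ∀ a, ψ (a + 2 * Real.pi) = ψ a + 2 * Real.pi * (gradIndex f r - 1) := by
  obtain ⟨φ, hcont, hturn, hexp⟩ := exists_gradAngle hne
  refine ⟨fun t => φ t - t, ⟨hcont.sub continuous_id, fun t => ?_⟩, fun a => by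
    linear_combination hturn a⟩
  have hre : (circleGrad f r t).re = ‖circleGrad f r t‖ * Real.cos (φ t) := by
    conv_lhs => rw [hexp t, Complex.re_ofReal_mul, Complex.exp_ofReal_mul_I_re]
  have him : (circleGrad f r t).im = ‖circleGrad f r t‖ * Real.sin (φ t) := by
    conv_lhs => rw [hexp t, Complex.im_ofReal_mul, Complex.exp_ofReal_mul_I_im]
  refine ⟨r * ‖circleGrad f r t‖, mul_pos hr (norm_pos_iff.2 (hne t)), ?_, ?_⟩
  · rw [circleEval_eulerDerivation, hre, him, Real.cos_sub]
    ring
  · rw [circleEval_rotDerivation, hre, him, Real.sin_sub]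
    ring

/-! ### The bound on the index -/

lemma continuous_evalP (f : MvPolynomial (Fin 2) ℝ) :
    Continuous fun p : ℝ × ℝ => evalP f p.1 p.2 := by
  have hpoint : Continuous fun p : ℝ × ℝ => (![p.1, p.2] : Fin 2 → ℝ) := by fun_prop
  exact f.continuous_eval.comp hpoint

lemma isCompact_zeros_of_forall_circleEval_ne_zero {P : MvPolynomial (Fin 2) ℝ} {d : ℕ}
    (hP : P.totalDegree ≤ d) (hne : ∀ t, circleEval 1 t (homogeneousComponent d P) ≠ 0) :
    IsCompact {p : ℝ × ℝ | evalP P p.1 p.2 = 0} := by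
  obtain ⟨r₀, hr₀⟩ := eventually_atTop.1
    (eventually_forall_circleEval_mul_pos hP (isCompact_Icc (a := -Real.pi) (b := Real.pi))
      fun t _ => hne t)
  refine Metric.isCompact_of_isClosed_isBounded
    (isClosed_eq (continuous_evalP P) continuous_const)
    (Metric.isBounded_closedBall.subset (t := Metric.closedBall 0 r₀) ?_)
  rintro ⟨x, y⟩ (hxy : evalP P x y = 0)
  obtain ⟨t, ht, hpolar⟩ := exists_evalP_eq_circleEval x y
  have hlt : ‖(⟨x, y⟩ : ℂ)‖ < r₀ := by
    by_contra! hge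
    have := hr₀ _ hge t ht
    rw [← hpolar, hxy, mul_zero] at this
    exact this.false
  rw [mem_closedBall_zero_iff, Prod.norm_def]
  exact max_le ((Complex.abs_re_le_norm _).trans hlt.le) ((Complex.abs_im_le_norm _).trans hlt.le)

lemma exists_circleEval_leadingForm_eq_zero_of_not_isCompact {f : MvPolynomial (Fin 2) ℝ}
    (hd : f.totalDegree ≠ 0) {τ : ℝ} (hτ : ¬IsCompact {p : ℝ × ℝ | evalP f p.1 p.2 = τ}) :
    ∃ t, circleEval 1 t (leadingForm f) = 0 := by
  contrapose! hτ
  have hlead : homogeneousComponent f.totalDegree (f - C τ) = leadingForm f := by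
    rw [map_sub, homogeneousComponent_of_mem (isHomogeneous_C _ τ), if_neg hd, sub_zero,
      leadingForm]
  have hlevel := isCompact_zeros_of_forall_circleEval_ne_zero
    (totalDegree_sub_C_le f τ) (hlead ▸ hτ)
  simpa only [evalP, map_sub, eval_C, sub_eq_zero] using hlevel

lemma one_le_realDegreeOf_of_not_isCompact {f : MvPolynomial (Fin 2) ℝ}
    (hd : f.totalDegree ≠ 0) {τ : ℝ} (hτ : ¬IsCompact {p : ℝ × ℝ | evalP f p.1 p.2 = τ}) :
    1 ≤ realDegreeOf (leadingForm f) := by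
  obtain ⟨t, ht⟩ := exists_circleEval_leadingForm_eq_zero_of_not_isCompact hd hτ
  have hmem : (({t} : Finset ℝ) : Set ℝ) ⊆
      Set.Ioo (t - Real.pi / 2) (t - Real.pi / 2 + Real.pi) := by
    rw [Finset.coe_singleton, Set.singleton_subset_iff]
    constructor <;> linarith [Real.pi_pos]
  calc 1 ≤ angularMult (leadingForm f) t :=
        (one_le_angularMult_iff (isHomogeneous_leadingForm f) (leadingForm_ne_zero hd) t).2 ht
    _ = ∑ z ∈ {t}, angularMult (leadingForm f) z := (Finset.sum_singleton _ _).symm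
    _ ≤ realDegreeOf (leadingForm f) :=
        sum_angularMult_le_realDegreeOf (isHomogeneous_leadingForm f) (leadingForm_ne_zero hd) hmem

lemma HalfTurnsWithin.eventually_two_mul_sub_one_mem_Icc {f : MvPolynomial (Fin 2) ℝ} {a : ℝ}
    {m n : ℤ} (h : HalfTurnsWithin f a (a + 2 * Real.pi) m n) :
    ∀ᶠ r in atTop, (∀ t, circleGrad f r t ≠ 0) →
      ∀ i : ℤ, (i : ℝ) = gradIndex f r → 2 * (i - 1) ∈ Set.Icc m n := by
  filter_upwards [h, eventually_gt_atTop 0] with r hturns hr hne i hi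
  obtain ⟨ψ, hψ, hturn⟩ := exists_isPolarGradAngle hr hne
  have hangle : ψ (a + 2 * Real.pi) = ψ a + (2 * (i - 1) : ℤ) * Real.pi := by
    rw [hturn, ← hi]
    push_cast
    ring
  have hmem := hturns ψ hψ
  rwa [hangle, halfTurn_add_intCast_mul_pi, add_sub_cancel_left] at hmem

theorem index_abs_le_real_degree_sub_one_general (f : MvPolynomial (Fin 2) ℝ)
    (hdR : 1 ≤ realDegreeOf (homogeneousComponent f.totalDegree f)) {R : ℝ} (hR : 0 ≤ R)
    (hadm : ∀ p : ℝ × ℝ, IsCriticalPt f p → p.1 ^ 2 + p.2 ^ 2 < R ^ 2) :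
    |gradIndex f R| ≤ (realDegreeOf (homogeneousComponent f.totalDegree f) : ℝ) - 1 := by
  have hne {r : ℝ} (hr : R ≤ r) : ∀ t, circleGrad f r t ≠ 0 := circleGrad_ne_zero_of_le hR hadm hr
  obtain ⟨a, ha⟩ := exists_circleEval_ne_zero (isHomogeneous_leadingForm f)
    (ne_zero_of_one_le_realDegreeOf hdR)
  obtain ⟨r, hturns, hr⟩ :=
    ((HalfTurnsWithin.full_circle hdR ha).eventually_two_mul_sub_one_mem_Icc.and
      (eventually_ge_atTop R)).exists
  obtain ⟨i, hi⟩ := exists_intCast_eq_gradIndex (hne hr)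
  obtain ⟨hlower, hupper⟩ := hturns (hne hr) i hi
  have hbound : |i| ≤ (realDegreeOf (homogeneousComponent f.totalDegree f) : ℤ) - 1 := by
    rw [leadingForm] at hlower hupper
    exact abs_le.2 ⟨by linarith, by linarith⟩
  rw [gradIndex_eq_of_isPreconnected isPreconnected_Ici (fun _ => hne) Set.self_mem_Ici hr, ← hi]
  exact_mod_cast hbound

theorem index_abs_le_real_degree_sub_one
    (f : MvPolynomial (Fin 2) ℝ) (d : ℕ) (hd : f.totalDegree = d) (hd1 : 1 ≤ d)
    (hfin : {p : ℝ × ℝ | IsCriticalPt f p}.Finite)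
    (hnoncpt : ∃ t : ℝ, ¬ IsCompact {p : ℝ × ℝ | evalP f p.1 p.2 = t})
    (R : ℝ) (hR : 0 < R)
    (hadm : ∀ p : ℝ × ℝ, IsCriticalPt f p → p.1 ^ 2 + p.2 ^ 2 < R ^ 2)
    (i : ℤ) (hi : (i : ℝ) = gradIndex f R) :
    |i| ≤ (realDegreeOf (homogeneousComponent d f) : ℤ) - 1 := by
  subst hd
  obtain ⟨τ, hτ⟩ := hnoncpt
  have hbound := index_abs_le_real_degree_sub_one_general f
    (one_le_realDegreeOf_of_not_isCompact (Nat.one_le_iff_ne_zero.1 hd1) hτ) hR.le hadm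
  rw [← hi] at hbound
  exact_mod_cast hbound
end
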